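/- Let Ω ⊂ ℂ^n be a strictly convex bounded domain. For every (1,1)-form f ∈ L²_{(1,1)}(Ω) with ∂f = ∂̄f = 0, there exists u ∈ L²(Ω) with i ∂∂̄ u = f in the sense of distributions and ∫_Ω |u|² ≤ c_Ω ∫_Ω |f|², where c_Ω > 0 depends only on the diameter of Ω. -/

import Mathlib

open Complex MeasureTheory

/-- Partial derivative in the `j`-th coordinate direction. -/
noncomputable def pd {N : ℕ} {F : Type*} [NormedAddCommGroup F] [NormedSpace ℝ F]
    (j : Fin N) (f : EuclideanSpace ℝ (Fin N) → F) (x : EuclideanSpace ℝ (Fin N)) : F :=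
  fderiv ℝ f x (EuclideanSpace.single j 1)

/-- The index of `x_j` in `ℝ^{2n}` under the identification `z_j = x_j + i x_{j+n}`. -/
def idx1 {n : ℕ} (j : Fin n) : Fin (2 * n) := ⟨j.1, by have := j.2; omega⟩

/-- The index of `x_{j+n}` in `ℝ^{2n}`. -/
def idx2 {n : ℕ} (j : Fin n) : Fin (2 * n) := ⟨j.1 + n, by have := j.2; omega⟩

/-- Wirtinger derivative `∂/∂z_j = (1/2)(∂/∂x_j - i ∂/∂x_{j+n})`. -/
noncomputable def wz {n : ℕ} (j : Fin n) (f : EuclideanSpace ℝ (Fin (2 * n)) → ℂ)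
    (x : EuclideanSpace ℝ (Fin (2 * n))) : ℂ :=
  (1 / 2 : ℂ) * (pd (idx1 j) f x - Complex.I * pd (idx2 j) f x)

/-- Wirtinger derivative `∂/∂z̄_j = (1/2)(∂/∂x_j + i ∂/∂x_{j+n})`. -/
noncomputable def wzbar {n : ℕ} (j : Fin n) (f : EuclideanSpace ℝ (Fin (2 * n)) → ℂ)
    (x : EuclideanSpace ℝ (Fin (2 * n))) : ℂ :=
  (1 / 2 : ℂ) * (pd (idx1 j) f x + Complex.I * pd (idx2 j) f x)

/-- A complex-valued test function on `Ω`. -/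
def IsTestFun {n : ℕ} (Ω : Set (EuclideanSpace ℝ (Fin (2 * n))))
    (χ : EuclideanSpace ℝ (Fin (2 * n)) → ℂ) : Prop :=
  ContDiff ℝ (⊤ : ℕ∞) χ ∧ HasCompactSupport χ ∧ tsupport χ ⊆ Ω

open Complex MeasureTheory
open scoped ContDiff ComplexConjugate

/-! ### Part A: first order operators -/

/-- The real Euclidean space underlying `ℂ^n`. -/
abbrev EE (n : ℕ) := EuclideanSpace ℝ (Fin (2 * n))

/-- Common generalization of the two Wirtinger derivatives. -/
noncomputable def WW {n : ℕ} (s : ℂ) (j : Fin n) (f : EE n → ℂ) (x : EE n) : ℂ :=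
  (1 / 2 : ℂ) * (pd (idx1 j) f x + s * pd (idx2 j) f x)

lemma wz_eq {n : ℕ} (j : Fin n) (f : EE n → ℂ) : wz j f = WW (-I) j f := by
  funext x; simp [wz, WW, sub_eq_add_neg]

lemma wzbar_eq {n : ℕ} (j : Fin n) (f : EE n → ℂ) : wzbar j f = WW I j f := rfl

lemma pd_conj {N : ℕ} (j : Fin N) (f : EuclideanSpace ℝ (Fin N) → ℂ) (x : EuclideanSpace ℝ (Fin N)) :
    pd j (fun y => conj (f y)) x = conj (pd j f x) := by
  unfold pd
  have := Complex.conjCLE.comp_fderiv (f := f) (x := x)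
  have h2 : (fun y => conj (f y)) = Complex.conjCLE ∘ f := by
    funext y; simp
  rw [h2, this]; simp

lemma WW_conj {n : ℕ} (s : ℂ) (j : Fin n) (f : EE n → ℂ) (x : EE n) :
    WW s j (fun y => conj (f y)) x = conj (WW (conj s) j f x) := by
  simp only [WW, pd_conj, map_mul, map_add, map_div₀, map_one, Complex.conj_conj, map_ofNat]

lemma WW_add {n : ℕ} (s : ℂ) (j : Fin n) {f g : EE n → ℂ} {x : EE n}
    (hf : DifferentiableAt ℝ f x) (hg : DifferentiableAt ℝ g x) :
    WW s j (fun y => f y + g y) x = WW s j f x + WW s j g x := by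
  simp [WW, pd, fderiv_fun_add hf hg]; ring

lemma WW_neg {n : ℕ} (s : ℂ) (j : Fin n) (f : EE n → ℂ) (x : EE n) :
    WW s j (fun y => - f y) x = - WW s j f x := by
  simp [WW, pd, fderiv_fun_neg]; ring

lemma WW_sub {n : ℕ} (s : ℂ) (j : Fin n) {f g : EE n → ℂ} {x : EE n}
    (hf : DifferentiableAt ℝ f x) (hg : DifferentiableAt ℝ g x) :
    WW s j (fun y => f y - g y) x = WW s j f x - WW s j g x := by
  simp [WW, pd, fderiv_fun_sub hf hg]; ring

lemma WW_mul {n : ℕ} (s : ℂ) (j : Fin n) {f g : EE n → ℂ} {x : EE n}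
    (hf : DifferentiableAt ℝ f x) (hg : DifferentiableAt ℝ g x) :
    WW s j (fun y => f y * g y) x = WW s j f x * g x + f x * WW s j g x := by
  simp [WW, pd, fderiv_fun_mul hf hg]; ring

lemma WW_const {n : ℕ} (s : ℂ) (j : Fin n) (c : ℂ) (x : EE n) :
    WW s j (fun _ => c) x = 0 := by
  simp [WW, pd]

lemma WW_const_mul {n : ℕ} (s : ℂ) (j : Fin n) {f : EE n → ℂ} {x : EE n} (c : ℂ)
    (hf : DifferentiableAt ℝ f x)  :
    WW s j (fun y => c * f y) x = c * WW s j f x := by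
  rw [WW_mul s j (differentiableAt_const c) hf, WW_const]; ring

lemma WW_sum {n : ℕ} {ι : Type*} (t : Finset ι) (s : ℂ) (j : Fin n) {f : ι → EE n → ℂ} {x : EE n}
    (hf : ∀ i, DifferentiableAt ℝ (f i) x) :
    WW s j (fun y => ∑ i ∈ t, f i y) x = ∑ i ∈ t, WW s j (f i) x := by
  simp only [WW, pd, fderiv_fun_sum (fun i _ => hf i), _root_.sum_apply,
    Finset.mul_sum, ← Finset.sum_add_distrib]

lemma WW_congr {n : ℕ} (s : ℂ) (j : Fin n) {f g : EE n → ℂ} {x : EE n}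
    (h : f =ᶠ[nhds x] g) : WW s j f x = WW s j g x := by
  simp [WW, pd, h.fderiv_eq]

lemma pd_contDiff {N : ℕ} (j : Fin N) {f : EuclideanSpace ℝ (Fin N) → ℂ} {m k : WithTop ℕ∞}
    (hf : ContDiff ℝ m f) (h : k + 1 ≤ m) : ContDiff ℝ k (pd j f) := by
  unfold pd
  exact (hf.fderiv_right h).clm_apply contDiff_const

lemma WW_contDiff {n : ℕ} (s : ℂ) (j : Fin n) {f : EE n → ℂ} {m k : WithTop ℕ∞}
    (hf : ContDiff ℝ m f) (h : k + 1 ≤ m) : ContDiff ℝ k (WW s j f) := by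
  unfold WW
  exact contDiff_const.mul ((pd_contDiff _ hf h).add (contDiff_const.mul (pd_contDiff _ hf h)))

lemma WW_smooth {n : ℕ} (s : ℂ) (j : Fin n) {f : EE n → ℂ}
    (hf : ContDiff ℝ ∞ f) : ContDiff ℝ ∞ (WW s j f) :=
  WW_contDiff s j hf (by simp)

lemma WW_zero_of_notMem {n : ℕ} (s : ℂ) (j : Fin n) {f : EE n → ℂ} {x : EE n}
    (hx : x ∉ tsupport f) : WW s j f x = 0 := by
  rw [WW_congr s j (g := fun _ => 0) (notMem_tsupport_iff_eventuallyEq.mp hx), WW_const]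

lemma WW_tsupport {n : ℕ} (s : ℂ) (j : Fin n) (f : EE n → ℂ) :
    tsupport (WW s j f) ⊆ tsupport f := by
  apply closure_minimal _ (isClosed_tsupport f)
  intro x hx
  by_contra h
  exact hx (WW_zero_of_notMem s j h)

lemma WW_hcs {n : ℕ} (s : ℂ) (j : Fin n) {f : EE n → ℂ} (hf : HasCompactSupport f) :
    HasCompactSupport (WW s j f) :=
  hf.mono' ((subset_tsupport _).trans (WW_tsupport s j f))

lemma pd_comm {N : ℕ} (j k : Fin N) {f : EuclideanSpace ℝ (Fin N) → ℂ}
    (hf : ContDiff ℝ 2 f) (x : EuclideanSpace ℝ (Fin N)) :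
    pd j (pd k f) x = pd k (pd j f) x := by
  have hd : Differentiable ℝ (fderiv ℝ f) := (hf.fderiv_right (m := 1) (by norm_num)).differentiable (by norm_num)
  have key : ∀ j k : Fin N, pd j (pd k f) x
      = fderiv ℝ (fderiv ℝ f) x (EuclideanSpace.single j 1) (EuclideanSpace.single k 1) := by
    intro j k
    unfold pd
    rw [fderiv_clm_apply hd.differentiableAt (differentiableAt_const _)]
    simp
  rw [key, key]
  exact (hf.contDiffAt.isSymmSndFDerivAt (by simp)) _ _

lemma WW_comm {n : ℕ} (s t : ℂ) (j k : Fin n) {f : EE n → ℂ}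
    (hf : ContDiff ℝ 2 f) (x : EE n) :
    WW s j (WW t k f) x = WW t k (WW s j f) x := by
  have hp : ∀ k, Differentiable ℝ (pd k f) := fun k =>
    (pd_contDiff k hf (k := 1) (by norm_num)).differentiable (by norm_num)
  have key : ∀ (t : ℂ) (k : Fin n) (l : Fin (2 * n)), pd l (WW t k f) x
      = (1 / 2 : ℂ) * (pd l (pd (idx1 k) f) x + t * pd l (pd (idx2 k) f) x) := by
    intro t k l
    unfold WW
    have h2 : DifferentiableAt ℝ (fun x => t * pd (idx2 k) f x) x := ((hp _).const_mul t).differentiableAt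
    have h1 := (hp (idx1 k)).differentiableAt (x := x)
    change fderiv ℝ (fun x => (1 / 2 : ℂ) * (pd (idx1 k) f x + t * pd (idx2 k) f x)) x
      (EuclideanSpace.single l 1) = _
    rw [fderiv_const_mul (h1.fun_add h2)]
    rw [fderiv_fun_add h1 h2, fderiv_const_mul (hp _).differentiableAt]
    simp only [pd, add_apply, smul_apply, smul_eq_mul]
  conv_lhs => rw [WW]
  conv_rhs => rw [WW]
  rw [key, key, key, key]
  rw [pd_comm (idx1 j) (idx1 k) hf, pd_comm (idx1 j) (idx2 k) hf, pd_comm (idx2 j) (idx1 k) hf,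
    pd_comm (idx2 j) (idx2 k) hf]
  ring

/-- Products with one compactly supported continuous factor are integrable. -/
lemma cont_int {n : ℕ} {f : EE n → ℂ} (hf : Continuous f) (h : HasCompactSupport f) :
    Integrable f := hf.integrable_of_hasCompactSupport h

lemma pd_ibp {N : ℕ} (j : Fin N) {f g : EuclideanSpace ℝ (Fin N) → ℂ}
    (hf : ContDiff ℝ 1 f) (hg : ContDiff ℝ 1 g) (h : HasCompactSupport g) :
    ∫ x, f x * pd j g x = - ∫ x, pd j f x * g x := by
  have c1 := (pd_contDiff j hf (k := 0) (by norm_num)).continuous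
  have c2 := (pd_contDiff j hg (k := 0) (by norm_num)).continuous
  have hs : HasCompactSupport (pd j g) := h.fderiv_apply (𝕜 := ℝ) _
  apply integral_mul_fderiv_eq_neg_fderiv_mul_of_integrable
  · exact (c1.mul hg.continuous).integrable_of_hasCompactSupport h.mul_left
  · exact (hf.continuous.mul c2).integrable_of_hasCompactSupport hs.mul_left
  · exact (hf.continuous.mul hg.continuous).integrable_of_hasCompactSupport h.mul_left
  · intro x _; exact (hf.differentiable (by norm_num)).differentiableAt
  · intro x _; exact (hg.differentiable (by norm_num)).differentiableAt

lemma WW_ibp {n : ℕ} (s : ℂ) (j : Fin n) {f g : EE n → ℂ}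
    (hf : ContDiff ℝ 1 f) (hg : ContDiff ℝ 1 g) (h : HasCompactSupport g) :
    ∫ x, f x * WW s j g x = - ∫ x, WW s j f x * g x := by
  have c1 := fun j => (pd_contDiff j hf (k := 0) (by norm_num)).continuous
  have c2 := fun j => (pd_contDiff j hg (k := 0) (by norm_num)).continuous
  have hs : ∀ j, HasCompactSupport (pd j g) := fun j => h.fderiv_apply (𝕜 := ℝ) _
  have i1 : ∀ j, Integrable (fun x => f x * pd j g x) := fun j =>
    (hf.continuous.mul (c2 j)).integrable_of_hasCompactSupport (hs j).mul_left
  have i2 : ∀ j, Integrable (fun x => pd j f x * g x) := fun j =>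
    ((c1 j).mul hg.continuous).integrable_of_hasCompactSupport h.mul_left
  have e1 : (fun x => f x * WW s j g x) = fun x => (1/2:ℂ) * (f x * pd (idx1 j) g x)
      + (s/2) * (f x * pd (idx2 j) g x) := by
    funext x; simp only [WW]; ring
  have e2 : (fun x => WW s j f x * g x) = fun x => (1/2:ℂ) * (pd (idx1 j) f x * g x)
      + (s/2) * (pd (idx2 j) f x * g x) := by
    funext x; simp only [WW]; ring
  rw [e1, e2, integral_add ((i1 _).const_mul _) ((i1 _).const_mul _),
    integral_add ((i2 _).const_mul _) ((i2 _).const_mul _),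
    integral_const_mul, integral_const_mul, integral_const_mul, integral_const_mul,
    pd_ibp _ hf hg h, pd_ibp _ hf hg h]
  ring

open Complex MeasureTheory
open scoped ContDiff ComplexConjugate

/-! ### Part B: the twisted operators and the smooth basic estimate -/

/-- Twisted Cauchy-Riemann operator. -/
noncomputable def DD {n : ℕ} (α : Fin n → EE n → ℂ) (j : Fin n) (w : EE n → ℂ) (x : EE n) : ℂ :=
  WW I j w x + α j x * w x

/-- Formal adjoint of `DD`. -/
noncomputable def DS {n : ℕ} (α : Fin n → EE n → ℂ) (j : Fin n) (w : EE n → ℂ) (x : EE n) : ℂ :=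
  - WW (-I) j w x + conj (α j x) * w x

/-- The curvature matrix. -/
noncomputable def MM {n : ℕ} (α : Fin n → EE n → ℂ) (k j : Fin n) (x : EE n) : ℂ :=
  WW I k (fun y => conj (α j y)) x + WW (-I) j (α k) x

lemma conj_smooth {n : ℕ} {f : EE n → ℂ} {m : WithTop ℕ∞} (hf : ContDiff ℝ m f) :
    ContDiff ℝ m (fun y => conj (f y)) :=
  Complex.conjCLE.contDiff.comp hf

lemma conj_hcs {n : ℕ} {f : EE n → ℂ} (hf : HasCompactSupport f) :
    HasCompactSupport (fun y => conj (f y)) :=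
  hf.comp_left (g := fun z : ℂ => conj z) (by simp)

lemma DD_smooth {n : ℕ} {α : Fin n → EE n → ℂ} (hα : ∀ j, ContDiff ℝ ∞ (α j)) (j : Fin n)
    {w : EE n → ℂ} (hw : ContDiff ℝ ∞ w) : ContDiff ℝ ∞ (DD α j w) :=
  (WW_smooth I j hw).add ((hα j).mul hw)

lemma DS_smooth {n : ℕ} {α : Fin n → EE n → ℂ} (hα : ∀ j, ContDiff ℝ ∞ (α j)) (j : Fin n)
    {w : EE n → ℂ} (hw : ContDiff ℝ ∞ w) : ContDiff ℝ ∞ (DS α j w) :=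
  (WW_smooth (-I) j hw).neg.add ((conj_smooth (hα j)).mul hw)

lemma DD_hcs {n : ℕ} (α : Fin n → EE n → ℂ) (j : Fin n)
    {w : EE n → ℂ} (hw : HasCompactSupport w) : HasCompactSupport (DD α j w) :=
  (WW_hcs I j hw).add hw.mul_left

lemma DS_hcs {n : ℕ} (α : Fin n → EE n → ℂ) (j : Fin n)
    {w : EE n → ℂ} (hw : HasCompactSupport w) : HasCompactSupport (DS α j w) :=
  (WW_hcs (-I) j hw).neg.add hw.mul_left

lemma one_le_infty : (1 : WithTop ℕ∞) ≤ ∞ := by exact_mod_cast le_top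
lemma two_le_infty : (2 : WithTop ℕ∞) ≤ ∞ := by
  change ((2 : ℕ∞) : WithTop ℕ∞) ≤ _
  exact WithTop.coe_le_coe.2 le_top

lemma cont_of_smooth {n : ℕ} {f : EE n → ℂ} (hf : ContDiff ℝ ∞ f) : Continuous f := hf.continuous

lemma diff_of_smooth {n : ℕ} {f : EE n → ℂ} (hf : ContDiff ℝ ∞ f) (x : EE n) :
    DifferentiableAt ℝ f x := (hf.differentiable (by simp)).differentiableAt

lemma WW_cont {n : ℕ} (s : ℂ) (j : Fin n) {f : EE n → ℂ}
    (hf : ContDiff ℝ 1 f) : Continuous (WW s j f) :=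
  (WW_contDiff s j hf (k := 0) (by norm_num)).continuous

/-- adjointness, compact support on the left -/
lemma DD_adj_left {n : ℕ} {α : Fin n → EE n → ℂ} (hα : ∀ j, ContDiff ℝ ∞ (α j)) (j : Fin n)
    {w v : EE n → ℂ} (hw : ContDiff ℝ 1 w) (hwc : HasCompactSupport w) (hv : ContDiff ℝ 1 v) :
    ∫ x, DD α j w x * conj (v x) = ∫ x, w x * conj (DS α j v x) := by
  have hcv := conj_smooth hv
  have h := WW_ibp I j hcv hw hwc
  have e1 : (fun x => DD α j w x * conj (v x)) = fun x => conj (v x) * WW I j w x +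
      α j x * w x * conj (v x) := by funext x; simp only [DD]; ring
  have e2 : (fun x => w x * conj (DS α j v x)) = fun x => - (WW I j (fun y => conj (v y)) x * w x) +
      α j x * w x * conj (v x) := by
    funext x
    rw [WW_conj]; simp only [DS, map_add, map_neg, map_mul, conj_I, Complex.conj_conj]; ring
  have c0 : Continuous (fun x => α j x * w x * conj (v x)) :=
    ((hα j).continuous.mul hw.continuous).mul hcv.continuous
  have i0 : Integrable (fun x => α j x * w x * conj (v x)) :=
    c0.integrable_of_hasCompactSupport (hwc.mul_left.mul_right)
  rw [e1, e2, integral_add _ i0, integral_add _ i0, integral_neg, h]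
  · exact ((WW_cont I j hcv).mul hw.continuous).neg.integrable_of_hasCompactSupport
      (hwc.mul_left.neg)
  · exact (hcv.continuous.mul (WW_cont I j hw)).integrable_of_hasCompactSupport
      ((WW_hcs I j hwc).mul_left)

/-- adjointness, compact support on the right -/
lemma DD_adj_right {n : ℕ} {α : Fin n → EE n → ℂ} (hα : ∀ j, ContDiff ℝ ∞ (α j)) (j : Fin n)
    {w v : EE n → ℂ} (hw : ContDiff ℝ 1 w) (hvc : HasCompactSupport v) (hv : ContDiff ℝ 1 v) :
    ∫ x, DD α j w x * conj (v x) = ∫ x, w x * conj (DS α j v x) := by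
  have hcv := conj_smooth hv
  have hcc := conj_hcs hvc
  have h := WW_ibp I j hw hcv hcc
  have e1 : (fun x => DD α j w x * conj (v x)) = fun x => WW I j w x * conj (v x) +
      α j x * w x * conj (v x) := by funext x; simp only [DD]; ring
  have e2 : (fun x => w x * conj (DS α j v x)) = fun x => - (w x * WW I j (fun y => conj (v y)) x) +
      α j x * w x * conj (v x) := by
    funext x
    rw [WW_conj]; simp only [DS, map_add, map_neg, map_mul, conj_I, Complex.conj_conj]; ring
  have c0 : Continuous (fun x => α j x * w x * conj (v x)) :=
    ((hα j).continuous.mul hw.continuous).mul hcv.continuous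
  have i0 : Integrable (fun x => α j x * w x * conj (v x)) :=
    c0.integrable_of_hasCompactSupport (hcc.mul_left)
  rw [e1, e2, integral_add _ i0, integral_add _ i0, integral_neg, h, neg_neg]
  · exact (hw.continuous.mul (WW_cont I j hcv)).neg.integrable_of_hasCompactSupport
      ((WW_hcs I j hcc).mul_left.neg)
  · exact ((WW_cont I j hw).mul hcv.continuous).integrable_of_hasCompactSupport
      (hcc.mul_left)

lemma DD_DS_comm {n : ℕ} {α : Fin n → EE n → ℂ} (hα : ∀ j, ContDiff ℝ ∞ (α j)) (j k : Fin n)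
    {w : EE n → ℂ} (hw : ContDiff ℝ ∞ w) (x : EE n) :
    DD α k (DS α j w) x = DS α j (DD α k w) x + MM α k j x * w x := by
  have hca := fun j => conj_smooth (hα j)
  have d := fun {f : EE n → ℂ} (hf : ContDiff ℝ ∞ f) => diff_of_smooth hf x
  have h1 : WW I k (DS α j w) x = - WW I k (WW (-I) j w) x
      + (WW I k (fun y => conj (α j y)) x * w x + conj (α j x) * WW I k w x) := by
    unfold DS
    rw [WW_add I k (d (WW_smooth (-I) j hw).neg) (d ((hca j).mul hw)), WW_neg,
      WW_mul I k (d (hca j)) (d hw)]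
  have h2 : WW (-I) j (DD α k w) x = WW (-I) j (WW I k w) x
      + (WW (-I) j (α k) x * w x + α k x * WW (-I) j w x) := by
    unfold DD
    rw [WW_add (-I) j (d (WW_smooth I k hw)) (d ((hα k).mul hw)),
      WW_mul (-I) j (d (hα k)) (d hw)]
  conv_lhs => rw [DD, h1, DS]
  conv_rhs => rw [DS, h2, DD]
  rw [WW_comm I (-I) k j (hw.of_le two_le_infty), MM]
  ring

lemma DD_comm {n : ℕ} {α : Fin n → EE n → ℂ} (hα : ∀ j, ContDiff ℝ ∞ (α j))
    (hc : ∀ j k x, WW I j (α k) x = WW I k (α j) x) (j k : Fin n)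
    {w : EE n → ℂ} (hw : ContDiff ℝ ∞ w) (x : EE n) :
    DD α k (DD α j w) x = DD α j (DD α k w) x := by
  have d := fun {f : EE n → ℂ} (hf : ContDiff ℝ ∞ f) => diff_of_smooth hf x
  have h2 : ∀ j k, WW I j (DD α k w) x = WW I j (WW I k w) x
      + (WW I j (α k) x * w x + α k x * WW I j w x) := by
    intro j k
    unfold DD
    rw [WW_add I j (d (WW_smooth I k hw)) (d ((hα k).mul hw)),
      WW_mul I j (d (hα k)) (d hw)]
  conv_lhs => rw [DD, h2, DD]
  conv_rhs => rw [DD, h2, DD]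
  rw [WW_comm I I k j (hw.of_le two_le_infty), hc j k]
  ring

lemma sq_int {n : ℕ} {f : EE n → ℂ} (hf : Continuous f) (h : HasCompactSupport f) :
    Integrable (fun x => ‖f x‖ ^ 2) := by
  have h1 : Continuous (fun x => ‖f x‖ ^ 2) := by fun_prop
  have h2 : HasCompactSupport (fun x => ‖f x‖ ^ 2) :=
    h.comp_left (g := fun z : ℂ => ‖z‖ ^ 2) (by simp)
  exact h1.integrable_of_hasCompactSupport h2

lemma ip_int {n : ℕ} {f g : EE n → ℂ} (hf : Continuous f) (hg : Continuous g)
    (h : HasCompactSupport f) : Integrable (fun x => f x * conj (g x)) :=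
  (hf.mul (continuous_conj.comp hg)).integrable_of_hasCompactSupport h.mul_right

lemma norm_sq_sum {n : ℕ} (c : Fin n → ℂ) :
    ((‖∑ j, c j‖ ^ 2 : ℝ) : ℂ) = ∑ j, ∑ k, c j * conj (c k) := by
  push_cast
  rw [← Complex.mul_conj', map_sum, Finset.sum_mul_sum]

lemma curl_pointwise {n : ℕ} (d : Fin n → Fin n → ℂ) :
    (1 / 2 : ℝ) * ∑ j, ∑ k, ‖d j k - d k j‖ ^ 2 =
      ∑ j, ∑ k, ‖d j k‖ ^ 2 - ∑ j, ∑ k, (d k j * conj (d j k)).re := by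
  have h : ∀ j k, ‖d j k - d k j‖ ^ 2 = ‖d j k‖ ^ 2 + ‖d k j‖ ^ 2
      - 2 * (d k j * conj (d j k)).re := by
    intro j k
    rw [← Complex.normSq_eq_norm_sq, ← Complex.normSq_eq_norm_sq, ← Complex.normSq_eq_norm_sq]
    simp [Complex.normSq_apply]; ring
  simp only [h, Finset.sum_sub_distrib, Finset.sum_add_distrib, ← Finset.mul_sum]
  rw [Finset.sum_comm (f := fun j k => ‖d k j‖ ^ 2)]
  ring

/-- The basic estimate for smooth compactly supported forms. -/
lemma basic_smooth {n : ℕ} {α : Fin n → EE n → ℂ} (hα : ∀ j, ContDiff ℝ ∞ (α j))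
    (hM : ∀ x (ξ : Fin n → ℂ), ∑ j, ‖ξ j‖ ^ 2 ≤ ∑ j, ∑ k, (MM α k j x * ξ j * conj (ξ k)).re)
    {χ : Fin n → EE n → ℂ} (hχ : ∀ j, ContDiff ℝ ∞ (χ j)) (hc : ∀ j, HasCompactSupport (χ j)) :
    ∑ j, ∫ x, ‖χ j x‖ ^ 2 ≤ (∫ x, ‖∑ j, DS α j (χ j) x‖ ^ 2)
      + (1 / 2) * ∑ j, ∑ k, ∫ x, ‖DD α j (χ k) x - DD α k (χ j) x‖ ^ 2 := by
  have sD := fun j k => DD_smooth hα j (hχ k)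
  have sS := fun j k => DS_smooth hα j (hχ k)
  have cD := fun j k => DD_hcs α j (hc k)
  have cS := fun j k => DS_hcs α j (hc k)
  have hMc : ∀ k j, Continuous (MM α k j) := fun k j =>
    (WW_smooth I k (conj_smooth (hα j))).continuous.add (WW_smooth (-I) j (hα k)).continuous
  have iM : ∀ j k, Integrable (fun x => MM α k j x * χ j x * conj (χ k x)) := fun j k =>
    (((hMc k j).mul (hχ j).continuous).mul
      (continuous_conj.comp (hχ k).continuous)).integrable_of_hasCompactSupport
      ((hc j).mul_left.mul_right)
  have h1 : ((∫ x, ‖∑ j, DS α j (χ j) x‖ ^ 2 : ℝ) : ℂ) =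
      ∑ j, ∑ k, ((∫ x, DD α k (χ j) x * conj (DD α j (χ k) x)) +
        ∫ x, MM α k j x * χ j x * conj (χ k x)) := by
    rw [← integral_complex_ofReal]
    simp_rw [norm_sq_sum]
    rw [integral_finsetSum _ (fun j _ => integrable_finsetSum _ (fun k _ =>
      ip_int (sS j j).continuous (sS k k).continuous (cS j j)))]
    refine Finset.sum_congr rfl fun j _ => ?_
    rw [integral_finsetSum _ (fun k _ =>
      ip_int (sS j j).continuous (sS k k).continuous (cS j j))]
    refine Finset.sum_congr rfl fun k _ => ?_
    rw [← DD_adj_left hα k ((sS j j).of_le one_le_infty) (cS j j) ((hχ k).of_le one_le_infty)]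
    have e : (fun x => DD α k (DS α j (χ j)) x * conj (χ k x)) = fun x =>
        DS α j (DD α k (χ j)) x * conj (χ k x) + MM α k j x * χ j x * conj (χ k x) := by
      funext x; rw [DD_DS_comm hα j k (hχ j)]; ring
    rw [e, integral_add _ (iM j k)]
    · congr 1
      have a := DD_adj_left hα j ((hχ k).of_le one_le_infty) (hc k)
        ((sD k j).of_le one_le_infty)
      have a2 := congrArg conj a
      rw [← integral_conj, ← integral_conj] at a2
      simp only [map_mul, Complex.conj_conj] at a2
      simp only [mul_comm] at a2 ⊢
      exact a2.symm
    · exact ip_int (DS_smooth hα j (sD k j)).continuous (hχ k).continuous (DS_hcs α j (cD k j))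
  have h1' := congrArg Complex.re h1
  rw [Complex.ofReal_re] at h1'
  simp only [Complex.re_sum, Complex.add_re, Finset.sum_add_distrib] at h1'
  have ir : ∀ {f : EE n → ℂ}, Integrable f → (∫ x, f x).re = ∫ x, (f x).re := fun hf =>
    (integral_re hf).symm
  have iC := fun j k => ip_int (sD k j).continuous (sD j k).continuous (cD k j)
  have h2 : (1 / 2 : ℝ) * ∑ j, ∑ k, ∫ x, ‖DD α j (χ k) x - DD α k (χ j) x‖ ^ 2 =
      ∑ j, ∑ k, (∫ x, ‖DD α j (χ k) x‖ ^ 2)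
        - ∑ j, ∑ k, (∫ x, DD α k (χ j) x * conj (DD α j (χ k) x)).re := by
    have i1 : ∀ j k, Integrable (fun x => ‖DD α j (χ k) x - DD α k (χ j) x‖ ^ 2) := fun j k =>
      sq_int ((sD j k).continuous.sub (sD k j).continuous) ((cD j k).sub (cD k j))
    have i2 : ∀ j k, Integrable (fun x => ‖DD α j (χ k) x‖ ^ 2) := fun j k =>
      sq_int (sD j k).continuous (cD j k)
    simp_rw [fun j k => ir (iC j k)]
    have s1 : ∀ (F : Fin n → Fin n → EE n → ℝ), (∀ j k, Integrable (F j k)) →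
        ∑ j, ∑ k, ∫ x, F j k x = ∫ x, ∑ j, ∑ k, F j k x := by
      intro F hF
      rw [integral_finsetSum _ (fun j _ => integrable_finsetSum _ (fun k _ => hF j k))]
      refine Finset.sum_congr rfl fun j _ => ?_
      rw [integral_finsetSum _ (fun k _ => hF j k)]
    have iC' : ∀ j k, Integrable (fun x => (DD α k (χ j) x * conj (DD α j (χ k) x)).re) :=
      fun j k => (iC j k).re
    rw [s1 _ i1, s1 _ i2, s1 _ iC', ← integral_const_mul, ← integral_sub]
    · congr 1; funext x
      exact curl_pointwise (fun j k => DD α j (χ k) x)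
    · exact integrable_finsetSum _ (fun j _ => integrable_finsetSum _ (fun k _ => i2 j k))
    · exact integrable_finsetSum _ (fun j _ => integrable_finsetSum _ (fun k _ => iC' j k))
  have h3 : ∑ j, ∫ x, ‖χ j x‖ ^ 2 ≤ ∑ j, ∑ k, (∫ x, MM α k j x * χ j x * conj (χ k x)).re := by
    simp_rw [fun j k => ir (iM j k)]
    have i3 : ∀ j, Integrable (fun x => ‖χ j x‖ ^ 2) := fun j => sq_int (hχ j).continuous (hc j)
    have iM' : ∀ j k, Integrable (fun x => (MM α k j x * χ j x * conj (χ k x)).re) :=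
      fun j k => (iM j k).re
    rw [← integral_finsetSum _ (fun j _ => i3 j)]
    simp_rw [← integral_finsetSum _ (fun k _ => iM' _ k)]
    rw [← integral_finsetSum _ (fun j _ => integrable_finsetSum _ (fun k _ => iM' j k))]
    refine integral_mono (integrable_finsetSum _ (fun j _ => i3 j))
      (integrable_finsetSum _ (fun j _ => integrable_finsetSum _ (fun k _ => iM' j k))) ?_
    intro x
    exact hM x (fun j => χ j x)
  have h4 : 0 ≤ ∑ j, ∑ k, (∫ x, ‖DD α j (χ k) x‖ ^ 2) :=
    Finset.sum_nonneg fun j _ => Finset.sum_nonneg fun k _ => integral_nonneg fun x => by positivity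
  rw [h1', h2]
  linarith

open Complex MeasureTheory
open scoped ContDiff ComplexConjugate ENNReal Convolution

/-! ### Part C: mollification -/

/-- A sequence of bump functions with shrinking supports. -/
noncomputable def bmp (n k : ℕ) : ContDiffBump (0 : EE n) :=
  ⟨1 / (2 * (k + 1)), 1 / (k + 1), by positivity, by
    have : (0 : ℝ) ≤ k := by positivity
    exact one_div_lt_one_div_of_lt (by positivity) (by linarith)⟩

/-- The complex valued mollifier. -/
noncomputable def rho (n k : ℕ) (x : EE n) : ℂ := ((bmp n k).normed volume x : ℝ)

/-- Mollification. -/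
noncomputable def mol {n : ℕ} (k : ℕ) (g : EE n → ℂ) (x : EE n) : ℂ :=
  ∫ t, g t * rho n k (x - t)

lemma rho_smooth (n k : ℕ) : ContDiff ℝ ∞ (rho n k) :=
  Complex.ofRealCLM.contDiff.comp (ContDiffBump.contDiff_normed (n := ⊤) (bmp n k))

lemma rho_hcs (n k : ℕ) : HasCompactSupport (rho n k) :=
  (bmp n k).hasCompactSupport_normed.comp_left (g := fun t : ℝ => (t : ℂ)) (by simp)

lemma rho_tsupport (n k : ℕ) : tsupport (rho n k) ⊆ Metric.closedBall 0 (1 / (k + 1)) := by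
  have : tsupport (rho n k) ⊆ tsupport ((bmp n k).normed volume) := by
    apply closure_mono
    intro x hx
    simp only [Function.mem_support, rho] at hx ⊢
    exact_mod_cast hx
  refine this.trans ?_
  rw [(bmp n k).tsupport_normed_eq]
  rfl

lemma mol_eq {n : ℕ} (k : ℕ) (g : EE n → ℂ) :
    mol k g = g ⋆[ContinuousLinearMap.mul ℝ ℂ, volume] rho n k := by
  funext x; rfl

lemma mol_eq' {n : ℕ} (k : ℕ) (g : EE n → ℂ) :
    mol k g = ((bmp n k).normed volume) ⋆[ContinuousLinearMap.lsmul ℝ ℝ, volume] g := by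
  funext x
  rw [convolution_eq_swap]
  simp only [mol, rho, ContinuousLinearMap.lsmul_apply, real_smul, mul_comm]

lemma mol_smooth {n : ℕ} (k : ℕ) {g : EE n → ℂ} (hg : LocallyIntegrable g) :
    ContDiff ℝ ∞ (mol k g) := by
  rw [mol_eq]
  exact (rho_hcs n k).contDiff_convolution_right _ hg (rho_smooth n k)

lemma mol_hcs {n : ℕ} (k : ℕ) {g : EE n → ℂ} (hg : HasCompactSupport g) :
    HasCompactSupport (mol k g) := by
  rw [mol_eq]
  exact HasCompactSupport.convolution _ hg (rho_hcs n k)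

/-- The test function `y ↦ ρ (x - y)`. -/
noncomputable def rhoX (n k : ℕ) (x y : EE n) : ℂ := rho n k (x - y)

lemma rhoX_smooth (n k : ℕ) (x : EE n) : ContDiff ℝ ∞ (rhoX n k x) :=
  (rho_smooth n k).comp (contDiff_const.sub contDiff_id)

lemma rhoX_tsupport (n k : ℕ) (x : EE n) :
    tsupport (rhoX n k x) ⊆ Metric.closedBall x (1 / (k + 1)) := by
  apply closure_minimal _ Metric.isClosed_closedBall
  intro y hy
  have : x - y ∈ tsupport (rho n k) := subset_tsupport _ hy
  have := rho_tsupport n k this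
  rw [mem_closedBall_zero_iff] at this
  rwa [Metric.mem_closedBall, dist_comm, dist_eq_norm]

lemma rhoX_hcs (n k : ℕ) (x : EE n) : HasCompactSupport (rhoX n k x) :=
  HasCompactSupport.of_support_subset_isCompact (isCompact_closedBall x (1 / (k + 1)))
    ((subset_tsupport _).trans (rhoX_tsupport n k x))

lemma WW_rhoX {n : ℕ} (s : ℂ) (j : Fin n) (k : ℕ) (x y : EE n) :
    WW s j (rhoX n k x) y = - WW s j (rho n k) (x - y) := by
  have h : ∀ l, pd l (rhoX n k x) y = - pd l (rho n k) (x - y) := by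
    intro l
    unfold pd rhoX
    have h1 := ((rho_smooth n k).differentiable (by simp) (x - y)).hasFDerivAt
    have h2 : HasFDerivAt (fun y : EE n => x - y) (-ContinuousLinearMap.id ℝ (EE n)) y :=
      (hasFDerivAt_id y).const_sub x
    have h3 := (h1.comp y h2).fderiv
    have h4 : (rho n k ∘ fun y => x - y) = fun y => rho n k (x - y) := rfl
    rw [h4] at h3
    rw [h3]
    simp
  simp only [WW, h]; ring

lemma WW_mol {n : ℕ} (s : ℂ) (j : Fin n) (k : ℕ) {g : EE n → ℂ} (hg : LocallyIntegrable g)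
    (x : EE n) : WW s j (mol k g) x = - ∫ y, g y * WW s j (rhoX n k x) y := by
  have hp : ∀ l, pd l (mol k g) x = ∫ t, g t * pd l (rho n k) (x - t) := by
    intro l
    have h := (rho_hcs n k).hasFDerivAt_convolution_right (ContinuousLinearMap.mul ℝ ℂ) hg
      ((rho_smooth n k).of_le one_le_infty) x
    unfold pd
    rw [mol_eq, h.fderiv]
    rw [convolution_precompR_apply _ hg ((rho_hcs n k).fderiv (𝕜 := ℝ))
      ((rho_smooth n k).continuous_fderiv (by simp))]
    rfl
  have hi : ∀ l, Integrable (fun t => g t * pd l (rho n k) (x - t)) := by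
    intro l
    have := ((rho_hcs n k).fderiv_apply (𝕜 := ℝ) (EuclideanSpace.single l 1)).convolutionExists_right
      (ContinuousLinearMap.mul ℝ ℂ) hg
      (pd_contDiff l (rho_smooth n k) (k := ∞) (by simp)).continuous x
    exact this
  have e : (fun y => g y * WW s j (rhoX n k x) y) = fun y =>
      -((1 / 2 : ℂ) * (g y * pd (idx1 j) (rho n k) (x - y)) +
        (s / 2) * (g y * pd (idx2 j) (rho n k) (x - y))) := by
    funext y; rw [WW_rhoX]; simp only [WW]; ring
  rw [e, integral_neg, integral_add ((hi _).const_mul _) ((hi _).const_mul _), integral_const_mul,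
    integral_const_mul]
  simp only [WW, hp]; ring

/-- contraction property -/
lemma mol_contraction {n : ℕ} (k : ℕ) {g : EE n → ℂ} (hg : MemLp g 2) :
    eLpNorm (mol k g) 2 ≤ eLpNorm g 2 := by
  have hgl : LocallyIntegrable g := hg.locallyIntegrable (by norm_num)
  set r : EE n → ℝ≥0∞ := fun x => ENNReal.ofReal ((bmp n k).normed volume x) with hr
  have hrm : Measurable r :=
    ((bmp n k).continuous_normed (μ := volume)).measurable.ennreal_ofReal
  have hr1 : ∫⁻ t, r t = 1 := by
    rw [hr, ← ofReal_integral_eq_lintegral_ofReal (bmp n k).integrable_normed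
      (Filter.Eventually.of_forall (bmp n k).nonneg_normed), (bmp n k).integral_normed]
    simp
  have hg2 : AEMeasurable (fun t => ‖g t‖ₑ ^ 2) := hg.1.enorm.pow_const 2
  -- pointwise bound
  have hpt : ∀ x, ‖mol k g x‖ₑ ^ 2 ≤ ∫⁻ t, r t * ‖g (x - t)‖ₑ ^ 2 := by
    intro x
    have hgx : AEStronglyMeasurable (fun t => g (x - t)) volume :=
      hg.1.comp_quasiMeasurePreserving (quasiMeasurePreserving_sub_left_of_right_invariant volume x)
    set ν := (volume : Measure (EE n)).withDensity r with hν
    have : IsProbabilityMeasure ν := ⟨by rw [hν, withDensity_apply _ MeasurableSet.univ]; simpa using hr1⟩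
    have hac : ν ≪ volume := withDensity_absolutelyContinuous _ _
    have h1 : ‖mol k g x‖ₑ ≤ ∫⁻ t, ‖g (x - t)‖ₑ ∂ν := by
      rw [mol_eq', convolution_def]
      refine (enorm_integral_le_lintegral_enorm _).trans ?_
      rw [hν, lintegral_withDensity_eq_lintegral_mul₀ hrm.aemeasurable hgx.enorm]
      apply le_of_eq
      congr 1; funext t
      simp only [ContinuousLinearMap.lsmul_apply, enorm_smul, Pi.mul_apply, hr]
      rw [Real.enorm_eq_ofReal ((bmp n k).nonneg_normed t)]
    have h2 : ∫⁻ t, ‖g (x - t)‖ₑ ∂ν ≤ (∫⁻ t, ‖g (x - t)‖ₑ ^ 2 ∂ν) ^ (1 / 2 : ℝ) := by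
      have := eLpNorm_le_eLpNorm_of_exponent_le (μ := ν) (p := 1) (q := 2) (by norm_num)
        (hgx.mono_ac hac)
      rw [eLpNorm_one_eq_lintegral_enorm, eLpNorm_eq_lintegral_rpow_enorm_toReal (by norm_num) (by norm_num)] at this
      simpa using this
    calc ‖mol k g x‖ₑ ^ 2 ≤ ((∫⁻ t, ‖g (x - t)‖ₑ ^ 2 ∂ν) ^ (1 / 2 : ℝ)) ^ 2 := by
          gcongr; exact h1.trans h2
      _ = ∫⁻ t, ‖g (x - t)‖ₑ ^ 2 ∂ν := by
          rw [← ENNReal.rpow_natCast, ← ENNReal.rpow_mul]; norm_num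
      _ = _ := by
          rw [hν, lintegral_withDensity_eq_lintegral_mul₀ hrm.aemeasurable (hgx.enorm.pow_const 2)]
          rfl
  have hIntg : ∫⁻ x, ‖mol k g x‖ₑ ^ 2 ≤ ∫⁻ x, ‖g x‖ₑ ^ 2 := by
    calc ∫⁻ x, ‖mol k g x‖ₑ ^ 2 ≤ ∫⁻ x, ∫⁻ t, r t * ‖g (x - t)‖ₑ ^ 2 := lintegral_mono hpt
      _ = ∫⁻ t, ∫⁻ x, r t * ‖g (x - t)‖ₑ ^ 2 := by
          apply lintegral_lintegral_swap
          show AEMeasurable (fun p : EE n × EE n => r p.2 * ‖g (p.1 - p.2)‖ₑ ^ 2) _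
          apply AEMeasurable.fun_mul
          · exact (hrm.comp measurable_snd).aemeasurable
          · exact hg2.comp_quasiMeasurePreserving
              (quasiMeasurePreserving_sub_of_right_invariant volume volume)
      _ = ∫⁻ t, r t * ∫⁻ x, ‖g x‖ₑ ^ 2 := by
          congr 1; funext t
          rw [lintegral_const_mul']
          · congr 1
            exact lintegral_sub_right_eq_self (fun x => ‖g x‖ₑ ^ 2) t
          · exact ENNReal.ofReal_ne_top
      _ = _ := by rw [lintegral_mul_const _ hrm, hr1, one_mul]
  rw [eLpNorm_eq_lintegral_rpow_enorm_toReal (by norm_num) (by norm_num),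
    eLpNorm_eq_lintegral_rpow_enorm_toReal (by norm_num) (by norm_num)]
  simp only [ENNReal.toReal_ofNat, ENNReal.rpow_ofNat]
  gcongr

lemma mol_memLp {n : ℕ} (k : ℕ) {g : EE n → ℂ} (hg : MemLp g 2) : MemLp (mol k g) 2 :=
  ⟨(mol_smooth k (hg.locallyIntegrable (by norm_num))).continuous.aestronglyMeasurable,
    (mol_contraction k hg).trans_lt hg.2⟩

lemma mol_sub {n : ℕ} (k : ℕ) {g h : EE n → ℂ} (hg : MemLp g 2) (hh : MemLp h 2) :
    mol k (g - h) = mol k g - mol k h := by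
  have hi : ∀ {g : EE n → ℂ}, MemLp g 2 → ∀ x, Integrable (fun t => g t * rho n k (x - t)) := by
    intro g hg x
    exact (rho_hcs n k).convolutionExists_right (ContinuousLinearMap.mul ℝ ℂ)
      (hg.locallyIntegrable (by norm_num)) (rho_smooth n k).continuous x
  funext x
  simp only [mol, Pi.sub_apply, sub_mul]
  exact integral_sub (hi hg x) (hi hh x)

lemma mol_tendsto_cc {n : ℕ} {h : EE n → ℂ} (hh : Continuous h) (hc : HasCompactSupport h) :
    Filter.Tendsto (fun k => eLpNorm (mol k h - h) 2) Filter.atTop (nhds 0) := by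
  have huc := hc.uniformContinuous_of_continuous hh
  set K := Metric.cthickening 1 (tsupport h) with hK
  have hKc : IsCompact K := hc.isCompact.cthickening
  have hfin : (volume K) ^ (1 / (2 : ℝ≥0∞).toReal) ≠ ⊤ :=
    ENNReal.rpow_ne_top_of_nonneg (by positivity) hKc.measure_lt_top.ne
  have hmain : ∀ ε : ℝ, 0 < ε → ∀ᶠ k in Filter.atTop, eLpNorm (mol k h - h) 2 ≤
      ENNReal.ofReal ε * volume K ^ (1 / (2 : ℝ≥0∞).toReal) := by
    intro ε hε
    obtain ⟨δ, hδ, hd⟩ := Metric.uniformContinuous_iff.1 huc ε hε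
    have : ∀ᶠ k : ℕ in Filter.atTop, 1 / ((k : ℝ) + 1) < δ :=
      (tendsto_order.1 tendsto_one_div_add_atTop_nhds_zero_nat).2 δ hδ
    filter_upwards [this] with k hk
    apply eLpNorm_sub_le_of_dist_bdd volume (by norm_num) hKc.measurableSet hε.le
    · intro x
      rw [mol_eq']
      apply ContDiffBump.dist_normed_convolution_le hh.aestronglyMeasurable
      intro y hy
      exact (hd (lt_trans (Metric.mem_ball.1 hy) hk)).le
    · rw [mol_eq]
      refine (support_convolution_subset _).trans ?_
      rintro _ ⟨a, ha, b, hb, rfl⟩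
      have hb' := rho_tsupport n k (subset_tsupport _ hb)
      rw [mem_closedBall_zero_iff] at hb'
      apply Metric.mem_cthickening_of_dist_le _ a _ _ (subset_tsupport _ ha)
      simp only [dist_self_add_left]
      refine hb'.trans ?_
      rw [div_le_one (by positivity)]
      have : (0 : ℝ) ≤ k := by positivity
      linarith
    · exact (subset_tsupport h).trans (Metric.self_subset_cthickening _)
  have hlim : Filter.Tendsto (fun m : ℕ => ENNReal.ofReal (1 / ((m : ℝ) + 1)) *
      volume K ^ (1 / (2 : ℝ≥0∞).toReal)) Filter.atTop (nhds 0) := by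
    have h0 := ENNReal.tendsto_ofReal (tendsto_one_div_add_atTop_nhds_zero_nat (𝕜 := ℝ))
    have := ENNReal.Tendsto.mul_const h0 (Or.inr hfin)
    simpa using this
  rw [ENNReal.tendsto_nhds_zero]
  intro ε hε
  obtain ⟨m, hm⟩ := ((ENNReal.tendsto_nhds_zero.1 hlim) ε hε).exists
  filter_upwards [hmain (1 / ((m : ℝ) + 1)) (by positivity)] with k hk
  exact hk.trans hm

lemma mol_tendsto {n : ℕ} {g : EE n → ℂ} (hg : MemLp g 2) :
    Filter.Tendsto (fun k => eLpNorm (mol k g - g) 2) Filter.atTop (nhds 0) := by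
  rw [ENNReal.tendsto_nhds_zero]
  intro ε hε
  have hε3 : ε / 3 ≠ 0 := (ENNReal.div_pos hε.ne' (by norm_num)).ne'
  obtain ⟨h, hc, hgh, hcont, hh⟩ := hg.exists_hasCompactSupport_eLpNorm_sub_le (by norm_num) hε3
  filter_upwards [(ENNReal.tendsto_nhds_zero.1 (mol_tendsto_cc hcont hc)) (ε / 3)
    (pos_iff_ne_zero.2 hε3)] with k hk
  have e : mol k g - g = mol k (g - h) + (mol k h - h) + (h - g) := by
    rw [mol_sub k hg hh]; abel
  have m1 := mol_memLp k (hg.sub hh)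
  have m2 := (mol_memLp k hh).sub hh
  rw [e]
  calc _ ≤ eLpNorm (mol k (g - h)) 2 + eLpNorm (mol k h - h) 2 + eLpNorm (h - g) 2 := by
        refine (eLpNorm_add_le (m1.add m2).1 (hh.sub hg).1 (by norm_num)).trans ?_
        gcongr
        exact eLpNorm_add_le m1.1 m2.1 (by norm_num)
    _ ≤ ε / 3 + ε / 3 + ε / 3 := by
        gcongr
        · exact (mol_contraction k (hg.sub hh)).trans hgh
        · rw [eLpNorm_sub_comm]; exact hgh
    _ = ε := ENNReal.add_thirds ε

open Complex MeasureTheory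
open scoped ContDiff ComplexConjugate ENNReal

/-! ### Part D: weak version of the basic estimate -/

/-- Convergence in `L²`. -/
def L2T {n : ℕ} (u : ℕ → EE n → ℂ) (v : EE n → ℂ) : Prop :=
  (∀ k, MemLp (u k) 2) ∧ MemLp v 2 ∧
    Filter.Tendsto (fun k => eLpNorm (u k - v) 2) Filter.atTop (nhds 0)

lemma L2T.add {n : ℕ} {u u' : ℕ → EE n → ℂ} {v v' : EE n → ℂ} (h : L2T u v) (h' : L2T u' v') :
    L2T (fun k x => u k x + u' k x) (fun x => v x + v' x) := by
  refine ⟨fun k => (h.1 k).add (h'.1 k), h.2.1.add h'.2.1, ?_⟩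
  have ht := h.2.2.add h'.2.2
  rw [add_zero] at ht
  refine tendsto_of_tendsto_of_tendsto_of_le_of_le tendsto_const_nhds ht (fun _ => zero_le) ?_
  intro k
  have e : ((fun x => u k x + u' k x) - fun x => v x + v' x) = (u k - v) + (u' k - v') := by
    funext x; simp only [Pi.sub_apply, Pi.add_apply]; ring
  simp only [e]
  exact eLpNorm_add_le ((h.1 k).sub h.2.1).1 ((h'.1 k).sub h'.2.1).1 (by norm_num)

lemma L2T.neg {n : ℕ} {u : ℕ → EE n → ℂ} {v : EE n → ℂ} (h : L2T u v) :
    L2T (fun k x => - u k x) (fun x => - v x) := by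
  refine ⟨fun k => (h.1 k).neg, h.2.1.neg, ?_⟩
  refine h.2.2.congr fun k => ?_
  have e : ((fun x => - u k x) - fun x => - v x) = -(u k - v) := by
    funext x; simp only [Pi.sub_apply, Pi.neg_apply]; ring
  rw [e, eLpNorm_neg]

lemma L2T.sub {n : ℕ} {u u' : ℕ → EE n → ℂ} {v v' : EE n → ℂ} (h : L2T u v) (h' : L2T u' v') :
    L2T (fun k x => u k x - u' k x) (fun x => v x - v' x) := by
  simp only [sub_eq_add_neg]; exact h.add h'.neg

lemma L2T.sum {n : ℕ} {ι : Type*} (s : Finset ι) {u : ι → ℕ → EE n → ℂ} {v : ι → EE n → ℂ}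
    (h : ∀ i, L2T (u i) (v i)) :
    L2T (fun k x => ∑ i ∈ s, u i k x) (fun x => ∑ i ∈ s, v i x) := by
  classical
  induction s using Finset.induction_on with
  | empty =>
    refine ⟨fun k => by simp, by simp, ?_⟩
    simp
  | insert a s ha ih =>
    simp only [Finset.sum_insert ha]
    exact (h a).add ih

lemma int_sq_eq {E : Type*} [MeasurableSpace E] {μ : Measure E} {u : E → ℂ} (hu : MemLp u 2 μ) :
    ∫ x, ‖u x‖ ^ 2 ∂μ = ‖hu.toLp u‖ ^ 2 := by
  rw [Lp.norm_toLp, hu.eLpNorm_eq_integral_rpow_norm (by norm_num) (by norm_num)]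
  have h0 : 0 ≤ ∫ x, ‖u x‖ ^ 2 ∂μ := integral_nonneg fun x => by positivity
  have e : (∫ a, ‖u a‖ ^ (2 : ℝ≥0∞).toReal ∂μ) = ∫ x, ‖u x‖ ^ 2 ∂μ := by simp
  rw [e, ENNReal.toReal_ofReal (by positivity), ← Real.rpow_natCast, ← Real.rpow_mul h0]
  simp

lemma L2T.norm_sq {n : ℕ} {u : ℕ → EE n → ℂ} {v : EE n → ℂ} (h : L2T u v) :
    Filter.Tendsto (fun k => ∫ x, ‖u k x‖ ^ 2) Filter.atTop (nhds (∫ x, ‖v x‖ ^ 2)) := by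
  have h1 := (Lp.tendsto_Lp_iff_tendsto_eLpNorm'' u h.1 v h.2.1).2 h.2.2
  have h2 := h1.norm.pow 2
  rw [int_sq_eq h.2.1]
  exact h2.congr fun k => (int_sq_eq (h.1 k)).symm

lemma L2T_mol {n : ℕ} {g : EE n → ℂ} (hg : MemLp g 2) : L2T (fun k => mol k g) g :=
  ⟨fun k => mol_memLp k hg, hg, mol_tendsto hg⟩

lemma mul_memLp {n : ℕ} {β u : EE n → ℂ} (hβ : Continuous β) (hu : MemLp u 2)
    (hc : HasCompactSupport u) : MemLp (fun x => β x * u x) 2 := by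
  obtain ⟨c, hcc⟩ := hc.isCompact.exists_bound_of_continuousOn hβ.continuousOn
  refine MemLp.of_le_mul (c := c) hu (hβ.aestronglyMeasurable.mul hu.1) ?_
  filter_upwards with x
  by_cases hx : x ∈ tsupport u
  · rw [norm_mul]; gcongr; exact hcc x hx
  · simp [image_eq_zero_of_notMem_tsupport hx]

lemma mol_zero_off {n : ℕ} {u : EE n → ℂ} (k : ℕ) {x : EE n}
    (hx : x ∉ Metric.cthickening 1 (tsupport u)) : mol k u x = 0 := by
  by_contra h
  apply hx
  have h' : x ∈ Function.support (mol k u) := h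
  rw [mol_eq] at h'
  obtain ⟨a, ha, b, hb, rfl⟩ := support_convolution_subset _ h'
  have hb' := rho_tsupport n k (subset_tsupport _ hb)
  rw [mem_closedBall_zero_iff] at hb'
  apply Metric.mem_cthickening_of_dist_le _ a _ _ (subset_tsupport _ ha)
  simp only [dist_self_add_left]
  refine hb'.trans ?_
  rw [div_le_one (by positivity)]
  have : (0 : ℝ) ≤ k := by positivity
  linarith

lemma L2T_mul_mol {n : ℕ} {β u : EE n → ℂ} (hβ : Continuous β) (hu : MemLp u 2)
    (hc : HasCompactSupport u) : L2T (fun k x => β x * mol k u x) (fun x => β x * u x) := by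
  refine ⟨fun k => mul_memLp hβ (mol_memLp k hu) (mol_hcs k hc), mul_memLp hβ hu hc, ?_⟩
  obtain ⟨c, hcc⟩ := (hc.isCompact.cthickening (r := 1)).exists_bound_of_continuousOn
    hβ.continuousOn
  have ht := ENNReal.Tendsto.const_mul (a := ENNReal.ofReal c) (mol_tendsto hu)
    (Or.inr ENNReal.ofReal_ne_top)
  rw [mul_zero] at ht
  refine tendsto_of_tendsto_of_tendsto_of_le_of_le tendsto_const_nhds ht (fun _ => zero_le) ?_
  intro k
  apply eLpNorm_le_mul_eLpNorm_of_ae_le_mul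
  filter_upwards with x
  simp only [Pi.sub_apply, ← mul_sub]
  rw [norm_mul]
  by_cases hx : x ∈ Metric.cthickening 1 (tsupport u)
  · gcongr; exact hcc x hx
  · have h1 := mol_zero_off k hx
    have h2 : u x = 0 := image_eq_zero_of_notMem_tsupport
      fun h => hx (Metric.self_subset_cthickening _ h)
    simp [h1, h2]

/-- conjugate of `DD`, acting on the conjugate test function -/
noncomputable def Dc {n : ℕ} (α : Fin n → EE n → ℂ) (j : Fin n) (φ : EE n → ℂ) (x : EE n) : ℂ :=
  WW (-I) j φ x + conj (α j x) * φ x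

/-- conjugate of `DS`, acting on the conjugate test function -/
noncomputable def Sc {n : ℕ} (α : Fin n → EE n → ℂ) (j : Fin n) (φ : EE n → ℂ) (x : EE n) : ℂ :=
  - WW I j φ x + α j x * φ x

lemma l2_mul_int {n : ℕ} {g φ : EE n → ℂ} (hg : MemLp g 2) (hφ : Continuous φ)
    (hc : HasCompactSupport φ) : Integrable (fun x => g x * φ x) := by
  have := MemLp.integrable_mul hg (hφ.memLp_of_hasCompactSupport (p := 2) (μ := volume) hc)
  exact this

/-- the weak estimate for compactly supported forms -/
lemma est_compact {n : ℕ} {α : Fin n → EE n → ℂ} (hα : ∀ j, ContDiff ℝ ∞ (α j))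
    (hM : ∀ x (ξ : Fin n → ℂ), ∑ j, ‖ξ j‖ ^ 2 ≤ ∑ j, ∑ k, (MM α k j x * ξ j * conj (ξ k)).re)
    {g : Fin n → EE n → ℂ} {p : EE n → ℂ} {q : Fin n → Fin n → EE n → ℂ}
    (hg : ∀ j, MemLp (g j) 2) (hgc : ∀ j, HasCompactSupport (g j)) (hp : MemLp p 2)
    (hq : ∀ j k, MemLp (q j k) 2)
    (hP : ∀ φ : EE n → ℂ, ContDiff ℝ ∞ φ → HasCompactSupport φ →
      ∑ j, ∫ x, g j x * Dc α j φ x = ∫ x, p x * φ x)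
    (hQ : ∀ φ : EE n → ℂ, ContDiff ℝ ∞ φ → HasCompactSupport φ → ∀ j k,
      (∫ x, g k x * Sc α j φ x) - ∫ x, g j x * Sc α k φ x = ∫ x, q j k x * φ x) :
    ∑ j, ∫ x, ‖g j x‖ ^ 2 ≤ (∫ x, ‖p x‖ ^ 2) + (1 / 2) * ∑ j, ∑ k, ∫ x, ‖q j k x‖ ^ 2 := by
  have hca := fun j => (conj_smooth (hα j)).continuous
  have hac := fun j => (hα j).continuous
  have hgl := fun j => (hg j).locallyIntegrable (by norm_num : (1:ℝ≥0∞) ≤ 2)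
  -- right hand sides with constant coefficients
  set P : EE n → ℂ := fun x => p x - ∑ j, conj (α j x) * g j x with hPdef
  set Q : Fin n → Fin n → EE n → ℂ :=
    fun j k x => q j k x - (α j x * g k x - α k x * g j x) with hQdef
  have hPm : MemLp P 2 := hp.sub (memLp_finsetSum _ fun j _ => mul_memLp (hca j) (hg j) (hgc j))
  have hQm : ∀ j k, MemLp (Q j k) 2 := fun j k => (hq j k).sub
    ((mul_memLp (hac j) (hg k) (hgc k)).sub (mul_memLp (hac k) (hg j) (hgc j)))
  have key : ∀ (s : ℂ) j k (φ : EE n → ℂ), ContDiff ℝ ∞ φ → HasCompactSupport φ →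
      Integrable (fun x => g k x * WW s j φ x) := fun s j k φ h1 h2 =>
    l2_mul_int (hg k) (WW_smooth s j h1).continuous (WW_hcs s j h2)
  have hP' : ∀ m x, ∑ j, DS α j (mol m (g j)) x
      = mol m P x + ∑ j, conj (α j x) * mol m (g j) x := by
    intro m x
    have h1 := rhoX_smooth n m x
    have h2 := rhoX_hcs n m x
    have h := hP _ h1 h2
    have e : ∀ j, ∫ y, g j y * Dc α j (rhoX n m x) y = (∫ y, g j y * WW (-I) j (rhoX n m x) y)
        + ∫ y, conj (α j y) * g j y * rhoX n m x y := by
      intro j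
      rw [← integral_add (key _ _ _ _ h1 h2)
        (l2_mul_int (mul_memLp (hca j) (hg j) (hgc j)) h1.continuous h2)]
      congr 1; funext y; simp only [Dc]; ring
    have e2 : mol m P x = (∫ y, p y * rhoX n m x y)
        - ∑ j, ∫ y, conj (α j y) * g j y * rhoX n m x y := by
      rw [← integral_finsetSum _ (fun j _ =>
        (l2_mul_int (mul_memLp (hca j) (hg j) (hgc j)) h1.continuous h2)), ← integral_sub
        (l2_mul_int hp h1.continuous h2) (integrable_finsetSum _ (fun j _ =>
        (l2_mul_int (mul_memLp (hca j) (hg j) (hgc j)) h1.continuous h2)))]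
      simp only [mol, hPdef, rhoX]
      congr 1; funext y; rw [sub_mul, Finset.sum_mul]
    simp only [DS, Finset.sum_add_distrib, WW_mol _ _ _ (hgl _), e2, ← h, e, neg_neg]
    ring
  have hQ' : ∀ m x j k, DD α j (mol m (g k)) x - DD α k (mol m (g j)) x
      = mol m (Q j k) x + (α j x * mol m (g k) x - α k x * mol m (g j) x) := by
    intro m x j k
    have h1 := rhoX_smooth n m x
    have h2 := rhoX_hcs n m x
    have h := hQ _ h1 h2 j k
    have i1 := fun j k => l2_mul_int (mul_memLp (hac j) (hg k) (hgc k)) h1.continuous h2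
    have e : ∀ j k, ∫ y, g k y * Sc α j (rhoX n m x) y = -(∫ y, g k y * WW I j (rhoX n m x) y)
        + ∫ y, α j y * g k y * rhoX n m x y := by
      intro j k
      have i2 : Integrable (fun y => -(g k y * WW I j (rhoX n m x) y)) := (key _ _ _ _ h1 h2).neg
      rw [← integral_neg, ← integral_add i2 (i1 j k)]
      congr 1; funext y; simp only [Sc]; ring
    have e2 : mol m (Q j k) x = (∫ y, q j k y * rhoX n m x y)
        - ((∫ y, α j y * g k y * rhoX n m x y) - ∫ y, α k y * g j y * rhoX n m x y) := by
      have i2 : Integrable (fun y => α j y * g k y * rhoX n m x y - α k y * g j y * rhoX n m x y) :=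
        (i1 j k).sub (i1 k j)
      rw [← integral_sub (i1 j k) (i1 k j), ← integral_sub
        (l2_mul_int (hq j k) h1.continuous h2) i2]
      simp only [mol, hQdef, rhoX]
      congr 1; funext y; ring
    simp only [DD, WW_mol _ _ _ (hgl _), e2, ← h, e]
    ring
  have hb := fun m => basic_smooth hα hM (χ := fun j => mol m (g j))
    (fun j => mol_smooth m (hgl j)) (fun j => mol_hcs m (hgc j))
  simp only [hP', hQ'] at hb
  have l1 : Filter.Tendsto (fun m => ∑ j, ∫ x, ‖mol m (g j) x‖ ^ 2) Filter.atTop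
      (nhds (∑ j, ∫ x, ‖g j x‖ ^ 2)) :=
    tendsto_finsetSum _ fun j _ => (L2T_mol (hg j)).norm_sq
  have l2 := ((L2T_mol hPm).add (L2T.sum Finset.univ
    fun j => L2T_mul_mol (hca j) (hg j) (hgc j))).norm_sq
  have l3 : ∀ j k, _ := fun j k => ((L2T_mol (hQm j k)).add
    ((L2T_mul_mol (hac j) (hg k) (hgc k)).sub (L2T_mul_mol (hac k) (hg j) (hgc j)))).norm_sq
  have l4 := (tendsto_finsetSum Finset.univ fun j _ => tendsto_finsetSum Finset.univ
    fun k _ => l3 j k).const_mul (1 / 2 : ℝ)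
  have := le_of_tendsto_of_tendsto' l1 (l2.add l4) hb
  simpa [hPdef, hQdef] using this

/-- cutoff functions -/
noncomputable def etaB (n : ℕ) : ContDiffBump (0 : EE n) := ⟨1, 2, by norm_num, by norm_num⟩

/-- base cutoff -/
noncomputable def eta0 (n : ℕ) (x : EE n) : ℂ := ((etaB n x : ℝ) : ℂ)

/-- scaled cutoff -/
noncomputable def etaM (n m : ℕ) (x : EE n) : ℂ := eta0 n (((m : ℝ) + 1)⁻¹ • x)

lemma eta0_smooth (n : ℕ) : ContDiff ℝ ∞ (eta0 n) :=
  Complex.ofRealCLM.contDiff.comp (ContDiffBump.contDiff (n := ⊤) (etaB n))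

lemma eta0_hcs (n : ℕ) : HasCompactSupport (eta0 n) :=
  (etaB n).hasCompactSupport.comp_left (g := fun t : ℝ => (t : ℂ)) (by simp)

lemma eta_smooth (n m : ℕ) : ContDiff ℝ ∞ (etaM n m) :=
  (eta0_smooth n).comp (contDiff_const_smul _)

lemma eta_hcs (n m : ℕ) : HasCompactSupport (etaM n m) := by
  have hm : ((m : ℝ) + 1)⁻¹ ≠ 0 := by positivity
  exact (eta0_hcs n).comp_homeomorph (Homeomorph.smulOfNeZero _ hm)

lemma eta_conj (n m : ℕ) (x : EE n) : conj (etaM n m x) = etaM n m x := by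
  simp [etaM, eta0]

lemma eta_norm_le (n m : ℕ) (x : EE n) : ‖etaM n m x‖ ≤ 1 := by
  simp only [etaM, eta0, Complex.norm_real, Real.norm_eq_abs]
  rw [abs_of_nonneg (etaB n).nonneg]
  exact (etaB n).le_one

lemma eta_eventually (n : ℕ) (x : EE n) :
    ∀ᶠ m in Filter.atTop, etaM n m =ᶠ[nhds x] fun _ => 1 := by
  obtain ⟨M, hM⟩ := exists_nat_gt ‖x‖
  filter_upwards [Filter.eventually_ge_atTop M] with m hm
  have hx : x ∈ Metric.ball (0 : EE n) ((m : ℝ) + 1) := by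
    rw [mem_ball_zero_iff]
    have : (M : ℝ) ≤ m := by exact_mod_cast hm
    linarith
  filter_upwards [Metric.isOpen_ball.mem_nhds hx] with y hy
  rw [mem_ball_zero_iff] at hy
  have : ((m : ℝ) + 1)⁻¹ • y ∈ Metric.closedBall (0 : EE n) (etaB n).rIn := by
    rw [mem_closedBall_zero_iff, norm_smul, norm_inv, Real.norm_of_nonneg (by positivity)]
    change _ ≤ (1 : ℝ)
    rw [inv_mul_le_iff₀ (by positivity)]
    linarith
  simp [etaM, eta0, (etaB n).one_of_mem_closedBall this]

lemma WW_etaM {n : ℕ} (s : ℂ) (j : Fin n) (m : ℕ) (x : EE n) :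
    WW s j (etaM n m) x = (((m : ℝ) + 1)⁻¹ : ℝ) * WW s j (eta0 n) (((m : ℝ) + 1)⁻¹ • x) := by
  have h : ∀ l, pd l (etaM n m) x = (((m : ℝ) + 1)⁻¹ : ℝ) * pd l (eta0 n) (((m : ℝ) + 1)⁻¹ • x) := by
    intro l
    unfold pd etaM
    rw [fderiv_comp_smul]
    simp
  simp only [WW, h]; ring

lemma WW_eta_bound {n : ℕ} (s : ℂ) : ∃ C : ℝ, ∀ (j : Fin n) (m : ℕ) (x : EE n),
    ‖WW s j (etaM n m) x‖ ≤ C := by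
  have h : ∀ j : Fin n, ∃ C, ∀ x, ‖WW s j (eta0 n) x‖ ≤ C := fun j =>
    (WW_smooth s j (eta0_smooth n)).continuous.bounded_above_of_compact_support
      (WW_hcs s j (eta0_hcs n))
  choose C hC using h
  refine ⟨∑ j, |C j|, fun j m x => ?_⟩
  have h1 : ‖WW s j (eta0 n) (((m : ℝ) + 1)⁻¹ • x)‖ ≤ ∑ j, |C j| :=
    (hC j _).trans ((le_abs_self _).trans
      (Finset.single_le_sum (f := fun j => |C j|) (fun _ _ => abs_nonneg _) (Finset.mem_univ j)))
  rw [WW_etaM, norm_mul, Complex.norm_real, norm_inv, Real.norm_of_nonneg (by positivity)]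
  refine le_trans ?_ h1
  apply mul_le_of_le_one_left (norm_nonneg _)
  apply inv_le_one_of_one_le₀
  have : (0 : ℝ) ≤ m := by positivity
  linarith

lemma WW_eta_tendsto {n : ℕ} (s : ℂ) (j : Fin n) (x : EE n) :
    Filter.Tendsto (fun m => WW s j (etaM n m) x) Filter.atTop (nhds 0) := by
  apply tendsto_const_nhds.congr'
  filter_upwards [eta_eventually n x] with m hm
  rw [WW_congr s j hm, WW_const]

lemma eta_tendsto (n : ℕ) (x : EE n) :
    Filter.Tendsto (fun m => etaM n m x) Filter.atTop (nhds 1) := by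
  apply tendsto_const_nhds.congr'
  filter_upwards [eta_eventually n x] with m hm
  exact hm.self_of_nhds.symm

/-- dominated convergence in the form needed -/
lemma dct_sq {n : ℕ} {ι : Type*} (t : Finset ι) {u : ι → EE n → ℂ} {c : ι → ℕ → EE n → ℂ}
    {c0 : ι → ℂ} {C : ℝ}
    (hu : ∀ i, MemLp (u i) 2) (hc : ∀ i m, Continuous (c i m)) (hC : ∀ i m x, ‖c i m x‖ ≤ C)
    (hl : ∀ i x, Filter.Tendsto (fun m => c i m x) Filter.atTop (nhds (c0 i))) :
    Filter.Tendsto (fun m => ∫ x, ‖∑ i ∈ t, c i m x * u i x‖ ^ 2) Filter.atTop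
      (nhds (∫ x, ‖∑ i ∈ t, c0 i * u i x‖ ^ 2)) := by
  have hb : MemLp (fun x => ∑ i ∈ t, C * ‖u i x‖) 2 :=
    memLp_finsetSum _ fun i _ => (hu i).norm.const_mul C
  have hbi := (memLp_two_iff_integrable_sq hb.1).1 hb
  apply tendsto_integral_of_dominated_convergence _ _ hbi
  · intro m
    filter_upwards with x
    rw [Real.norm_of_nonneg (by positivity)]
    gcongr
    refine (norm_sum_le _ _).trans (Finset.sum_le_sum fun i _ => ?_)
    rw [norm_mul]
    gcongr
    exact hC i m x
  · filter_upwards with x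
    exact ((tendsto_finsetSum _ fun i _ => (hl i x).mul_const _).norm).pow 2
  · intro m
    have : AEStronglyMeasurable (fun x => ∑ i ∈ t, c i m x * u i x) volume :=
      Finset.aestronglyMeasurable_fun_sum _ fun i _ => (hc i m).aestronglyMeasurable.mul (hu i).1
    exact this.norm.pow 2

/-- the weak estimate -/
lemma est_weak {n : ℕ} {α : Fin n → EE n → ℂ} (hα : ∀ j, ContDiff ℝ ∞ (α j))
    (hM : ∀ x (ξ : Fin n → ℂ), ∑ j, ‖ξ j‖ ^ 2 ≤ ∑ j, ∑ k, (MM α k j x * ξ j * conj (ξ k)).re)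
    {g : Fin n → EE n → ℂ} {p : EE n → ℂ} {q : Fin n → Fin n → EE n → ℂ}
    (hg : ∀ j, MemLp (g j) 2) (hp : MemLp p 2)
    (hq : ∀ j k, MemLp (q j k) 2)
    (hP : ∀ φ : EE n → ℂ, ContDiff ℝ ∞ φ → HasCompactSupport φ →
      ∑ j, ∫ x, g j x * Dc α j φ x = ∫ x, p x * φ x)
    (hQ : ∀ φ : EE n → ℂ, ContDiff ℝ ∞ φ → HasCompactSupport φ → ∀ j k,
      (∫ x, g k x * Sc α j φ x) - ∫ x, g j x * Sc α k φ x = ∫ x, q j k x * φ x) :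
    ∑ j, ∫ x, ‖g j x‖ ^ 2 ≤ (∫ x, ‖p x‖ ^ 2) + (1 / 2) * ∑ j, ∑ k, ∫ x, ‖q j k x‖ ^ 2 := by
  have hca := fun j => (conj_smooth (hα j)).continuous
  have hac := fun j => (hα j).continuous
  obtain ⟨C1, hC1⟩ := WW_eta_bound (n := n) (-I)
  obtain ⟨C2, hC2⟩ := WW_eta_bound (n := n) I
  set C := max 1 (max C1 C2) with hCdef
  have hb0 : ∀ m x, ‖etaM n m x‖ ≤ C := fun m x => (eta_norm_le n m x).trans (le_max_left _ _)
  have hb1 : ∀ j m x, ‖WW (-I) j (etaM n m) x‖ ≤ C := fun j m x => (hC1 j m x).trans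
    ((le_max_left _ _).trans (le_max_right _ _))
  have hb2 : ∀ j m x, ‖WW I j (etaM n m) x‖ ≤ C := fun j m x => (hC2 j m x).trans
    ((le_max_right _ _).trans (le_max_right _ _))
  have ce := fun m => (eta_smooth n m).continuous
  have cw := fun s j m => (WW_smooth s j (eta_smooth n m)).continuous
  -- coefficient families
  set cP : Option (Fin n) → ℕ → EE n → ℂ := fun i m x =>
    i.elim (etaM n m x) (fun j => - WW (-I) j (etaM n m) x) with hcP
  set uP : Option (Fin n) → EE n → ℂ := fun i => i.elim p g with huP
  set cQ : Fin n → Fin n → Fin 3 → ℕ → EE n → ℂ := fun j k i m x =>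
    ![etaM n m x, WW I j (etaM n m) x, - WW I k (etaM n m) x] i with hcQ
  set uQ : Fin n → Fin n → Fin 3 → EE n → ℂ := fun j k i => ![q j k, g k, g j] i with huQ
  have huPm : ∀ i, MemLp (uP i) 2 := by rintro (_ | j); exacts [hp, hg j]
  have huQm : ∀ j k i, MemLp (uQ j k i) 2 := by
    intro j k i; fin_cases i; exacts [hq j k, hg k, hg j]
  have hcPc : ∀ i m, Continuous (cP i m) := by
    rintro (_ | j) m; exacts [ce m, (cw (-I) j m).neg]
  have hcQc : ∀ j k i m, Continuous (cQ j k i m) := by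
    intro j k i m; fin_cases i; exacts [ce m, cw I j m, (cw I k m).neg]
  have hcPb : ∀ i m x, ‖cP i m x‖ ≤ C := by
    rintro (_ | j) m x
    · exact hb0 m x
    · simpa [hcP] using hb1 j m x
  have hcQb : ∀ j k i m x, ‖cQ j k i m x‖ ≤ C := by
    intro j k i m x; fin_cases i
    · exact hb0 m x
    · exact hb2 j m x
    · simpa [hcQ] using hb2 k m x
  have hbdd : ∀ {c u : EE n → ℂ}, Continuous c → (∀ x, ‖c x‖ ≤ C) → MemLp u 2 →
      MemLp (fun x => c x * u x) 2 := by
    intro c u h1 h2 h3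
    refine MemLp.of_le_mul (c := C) h3 (h1.aestronglyMeasurable.mul h3.1) ?_
    filter_upwards with x
    rw [norm_mul]; gcongr; exact h2 x
  have hmain := fun m => est_compact hα hM (g := fun j x => etaM n m x * g j x)
    (p := fun x => ∑ i, cP i m x * uP i x) (q := fun j k x => ∑ i, cQ j k i m x * uQ j k i x)
    (fun j => hbdd (ce m) (hb0 m) (hg j)) (fun j => (eta_hcs n m).mul_right)
    (memLp_finsetSum _ fun i _ => hbdd (hcPc i m) (hcPb i m) (huPm i))
    (fun j k => memLp_finsetSum _ fun i _ => hbdd (hcQc j k i m) (hcQb j k i m) (huQm j k i))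
    (by
      intro φ h1 h2
      have s1 := (eta_smooth n m).mul h1
      have c1 : HasCompactSupport (fun x => etaM n m x * φ x) := h2.mul_left
      have h := hP _ s1 c1
      have d1 : ∀ x, DifferentiableAt ℝ φ x := fun x => diff_of_smooth h1 x
      have d2 : ∀ x, DifferentiableAt ℝ (etaM n m) x := fun x => diff_of_smooth (eta_smooth n m) x
      have cD : ∀ j, Continuous (Dc α j φ) := fun j =>
        (WW_smooth (-I) j h1).continuous.add ((hca j).mul h1.continuous)
      have sD : ∀ j, HasCompactSupport (Dc α j φ) := fun j => (WW_hcs (-I) j h2).add h2.mul_left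
      have i1 : ∀ j, Integrable (fun x => etaM n m x * g j x * Dc α j φ x) := fun j =>
        l2_mul_int (hbdd (ce m) (hb0 m) (hg j)) (cD j) (sD j)
      have i2 : ∀ j, Integrable (fun x => WW (-I) j (etaM n m) x * g j x * φ x) := fun j =>
        l2_mul_int (hbdd (cw (-I) j m) (hb1 j m) (hg j)) h1.continuous h2
      have i3 : Integrable (fun x => etaM n m x * p x * φ x) :=
        l2_mul_int (hbdd (ce m) (hb0 m) hp) h1.continuous h2
      have e1 : ∀ j, ∫ x, g j x * Dc α j (fun x => etaM n m x * φ x) x =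
          (∫ x, etaM n m x * g j x * Dc α j φ x) + ∫ x, WW (-I) j (etaM n m) x * g j x * φ x := by
        intro j
        rw [← integral_add (i1 j) (i2 j)]
        congr 1; funext x
        simp only [Dc, WW_mul _ _ (d2 x) (d1 x)]; ring
      have e2 : ∫ x, (∑ i, cP i m x * uP i x) * φ x = (∫ x, etaM n m x * p x * φ x) -
          ∑ j, ∫ x, WW (-I) j (etaM n m) x * g j x * φ x := by
        rw [← integral_finsetSum _ (fun j _ => i2 j), ← integral_sub i3
          (integrable_finsetSum _ (fun j _ => i2 j))]
        congr 1; funext x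
        simp only [Fintype.sum_option, hcP, huP, Option.elim, add_mul, Finset.sum_mul, neg_mul,
          Finset.sum_neg_distrib, sub_eq_add_neg]
      have e3 : ∫ x, p x * (etaM n m x * φ x) = ∫ x, etaM n m x * p x * φ x := by
        congr 1; funext x; ring
      have h' : ∑ j, ∫ x, g j x * Dc α j (fun x => etaM n m x * φ x) x =
        ∫ x, p x * (etaM n m x * φ x) := h
      simp only [e1, Finset.sum_add_distrib] at h'
      rw [e2, ← e3, ← h']; ring)
    (by
      intro φ h1 h2 j k
      have s1 := (eta_smooth n m).mul h1
      have c1 : HasCompactSupport (fun x => etaM n m x * φ x) := h2.mul_left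
      have h := hQ _ s1 c1 j k
      have d1 : ∀ x, DifferentiableAt ℝ φ x := fun x => diff_of_smooth h1 x
      have d2 : ∀ x, DifferentiableAt ℝ (etaM n m) x := fun x => diff_of_smooth (eta_smooth n m) x
      have cD : ∀ j, Continuous (Sc α j φ) := fun j =>
        (WW_smooth I j h1).continuous.neg.add ((hac j).mul h1.continuous)
      have sD : ∀ j, HasCompactSupport (Sc α j φ) := fun j => (WW_hcs I j h2).neg.add h2.mul_left
      have i1 : ∀ j k, Integrable (fun x => etaM n m x * g k x * Sc α j φ x) := fun j k =>
        l2_mul_int (hbdd (ce m) (hb0 m) (hg k)) (cD j) (sD j)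
      have i2 : ∀ j k, Integrable (fun x => WW I j (etaM n m) x * g k x * φ x) := fun j k =>
        l2_mul_int (hbdd (cw I j m) (hb2 j m) (hg k)) h1.continuous h2
      have i3 : Integrable (fun x => etaM n m x * q j k x * φ x) :=
        l2_mul_int (hbdd (ce m) (hb0 m) (hq j k)) h1.continuous h2
      have e1 : ∀ j k, ∫ x, g k x * Sc α j (fun x => etaM n m x * φ x) x =
          (∫ x, etaM n m x * g k x * Sc α j φ x) - ∫ x, WW I j (etaM n m) x * g k x * φ x := by
        intro j k
        rw [← integral_sub (i1 j k) (i2 j k)]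
        congr 1; funext x
        simp only [Sc, WW_mul _ _ (d2 x) (d1 x)]; ring
      have e2 : ∫ x, (∑ i, cQ j k i m x * uQ j k i x) * φ x = (∫ x, etaM n m x * q j k x * φ x) +
          ((∫ x, WW I j (etaM n m) x * g k x * φ x) - ∫ x, WW I k (etaM n m) x * g j x * φ x) := by
        have i4 : Integrable (fun x => WW I j (etaM n m) x * g k x * φ x -
          WW I k (etaM n m) x * g j x * φ x) := (i2 j k).sub (i2 k j)
        rw [← integral_sub (i2 j k) (i2 k j), ← integral_add i3 i4]
        congr 1; funext x
        simp only [hcQ, huQ, Fin.sum_univ_three, Matrix.cons_val_zero, Matrix.cons_val_one,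
          Matrix.cons_val]
        ring
      have e3 : ∫ x, q j k x * (etaM n m x * φ x) = ∫ x, etaM n m x * q j k x * φ x := by
        congr 1; funext x; ring
      have h' : (∫ x, g k x * Sc α j (fun x => etaM n m x * φ x) x) -
        (∫ x, g j x * Sc α k (fun x => etaM n m x * φ x) x) =
        ∫ x, q j k x * (etaM n m x * φ x) := h
      simp only [e1] at h'
      rw [e2, ← e3, ← h']; ring)
  have l1 : Filter.Tendsto (fun m => ∑ j, ∫ x, ‖etaM n m x * g j x‖ ^ 2) Filter.atTop
      (nhds (∑ j, ∫ x, ‖g j x‖ ^ 2)) := by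
    refine tendsto_finsetSum _ fun j _ => ?_
    have := dct_sq (Finset.univ : Finset (Fin 1)) (u := fun _ => g j) (c := fun _ m => etaM n m)
      (c0 := fun _ => 1) (C := C) (fun _ => hg j) (fun _ m => ce m) (fun _ => hb0)
      (fun _ x => eta_tendsto n x)
    simpa using this
  have l2 := dct_sq Finset.univ (c0 := fun i : Option (Fin n) => i.elim 1 (fun _ => 0)) huPm hcPc hcPb (by
    rintro (_ | j) x
    · exact eta_tendsto n x
    · simpa [hcP] using (WW_eta_tendsto (-I) j x).neg)
  have l3 := fun j k => dct_sq Finset.univ (c0 := ![1, 0, 0]) (huQm j k) (hcQc j k) (hcQb j k) (by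
    intro i x; fin_cases i
    · exact eta_tendsto n x
    · exact WW_eta_tendsto I j x
    · simpa [hcQ] using (WW_eta_tendsto I k x).neg)
  have l4 := (tendsto_finsetSum Finset.univ fun j _ => tendsto_finsetSum Finset.univ
    fun k _ => l3 j k).const_mul (1 / 2 : ℝ)
  have := le_of_tendsto_of_tendsto' l1 (l2.add l4) hmain
  simpa [Fintype.sum_option, huP, huQ, Fin.sum_univ_three] using this

open Complex MeasureTheory
open scoped ContDiff ComplexConjugate ENNReal

/-! ### Part E: Hilbert space duality -/

/-- The Hilbert space of `L²` tuples. -/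
abbrev HH (n : ℕ) := PiLp 2 (fun _ : Fin n => Lp ℂ 2 (volume : Measure (EE n)))

/-- A tuple of functions as element of the Hilbert space. -/
noncomputable def toH {n : ℕ} {v : Fin n → EE n → ℂ} (hv : ∀ j, MemLp (v j) 2) : HH n :=
  WithLp.toLp 2 (fun j => (hv j).toLp (v j))

lemma conj_DD {n : ℕ} (α : Fin n → EE n → ℂ) (j : Fin n) (φ : EE n → ℂ) (x : EE n) :
    conj (DD α j (fun y => conj (φ y)) x) = Dc α j φ x := by
  simp [DD, Dc, WW_conj]

lemma conj_DS {n : ℕ} (α : Fin n → EE n → ℂ) (j : Fin n) (φ : EE n → ℂ) (x : EE n) :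
    conj (DS α j (fun y => conj (φ y)) x) = Sc α j φ x := by
  simp [DS, Sc, WW_conj]

lemma inner_toH {n : ℕ} {v : Fin n → EE n → ℂ} (hv : ∀ j, MemLp (v j) 2) (h : HH n) :
    inner ℂ (toH hv) h = ∑ j, ∫ x, h j x * conj (v j x) := by
  rw [PiLp.inner_apply]
  refine Finset.sum_congr rfl fun j _ => ?_
  rw [L2.inner_def]
  apply integral_congr_ae
  filter_upwards [(hv j).coeFn_toLp] with x hx
  simp only [toH, hx]
  rfl

lemma normsq_HH {n : ℕ} (h : HH n) : ‖h‖ ^ 2 = ∑ j, ∫ x, ‖h j x‖ ^ 2 := by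
  rw [PiLp.norm_sq_eq_of_L2]
  refine Finset.sum_congr rfl fun j _ => ?_
  rw [int_sq_eq (Lp.memLp (h j)), Lp.toLp_coeFn]

lemma normsq_toH {n : ℕ} {v : Fin n → EE n → ℂ} (hv : ∀ j, MemLp (v j) 2) :
    ‖toH hv‖ ^ 2 = ∑ j, ∫ x, ‖v j x‖ ^ 2 := by
  rw [PiLp.norm_sq_eq_of_L2]
  refine Finset.sum_congr rfl fun j _ => ?_
  rw [int_sq_eq (hv j)]
  rfl

/-- The generators of the range of the adjoint of `S`. -/
noncomputable def ssg {n : ℕ} (α : Fin n → EE n → ℂ) (j k : Fin n) (w : EE n → ℂ) :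
    Fin n → EE n → ℂ :=
  fun i x => (if i = k then DS α j w x else 0) - (if i = j then DS α k w x else 0)

lemma ssg_memLp {n : ℕ} {α : Fin n → EE n → ℂ} (hα : ∀ j, ContDiff ℝ ∞ (α j)) (j k : Fin n)
    {w : EE n → ℂ} (hw : ContDiff ℝ ∞ w) (hc : HasCompactSupport w) (i : Fin n) :
    MemLp (ssg α j k w i) 2 := by
  have h : ∀ j, MemLp (DS α j w) 2 := fun j =>
    (DS_smooth hα j hw).continuous.memLp_of_hasCompactSupport (DS_hcs α j hc)
  have h' : ∀ (P : Prop) [Decidable P] j, MemLp (fun x => if P then DS α j w x else 0) 2 := by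
    intro P _ j
    by_cases hP : P
    · simpa [hP] using h j
    · simp [hP]
  exact (h' _ j).sub (h' _ k)

lemma DD_memLp {n : ℕ} {α : Fin n → EE n → ℂ} (hα : ∀ j, ContDiff ℝ ∞ (α j))
    {w : EE n → ℂ} (hw : ContDiff ℝ ∞ w) (hc : HasCompactSupport w) (j : Fin n) :
    MemLp (DD α j w) 2 :=
  (DD_smooth hα j hw).continuous.memLp_of_hasCompactSupport (DD_hcs α j hc)

lemma inner_ssg {n : ℕ} {α : Fin n → EE n → ℂ} (hα : ∀ j, ContDiff ℝ ∞ (α j)) (j k : Fin n)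
    {w : EE n → ℂ} (hw : ContDiff ℝ ∞ w) (hc : HasCompactSupport w) (h : HH n) :
    inner ℂ (toH (ssg_memLp hα j k hw hc)) h =
      (∫ x, h k x * conj (DS α j w x)) - ∫ x, h j x * conj (DS α k w x) := by
  rw [inner_toH]
  have hi : ∀ i j, Integrable (fun x => h i x * conj (DS α j w x)) := fun i j =>
    l2_mul_int (Lp.memLp (h i)) (conj_smooth (DS_smooth hα j hw)).continuous
      (conj_hcs (DS_hcs α j hc))
  have e : ∀ i, ∫ x, h i x * conj (ssg α j k w i x) =
      (if i = k then ∫ x, h i x * conj (DS α j w x) else 0) -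
      (if i = j then ∫ x, h i x * conj (DS α k w x) else 0) := by
    intro i
    by_cases h1 : i = k <;> by_cases h2 : i = j
    · simp only [ssg, if_pos h1, if_pos h2, map_sub, mul_sub]
      exact integral_sub (hi i j) (hi i k)
    · simp only [ssg, if_pos h1, if_neg h2, sub_zero]
    · simp only [ssg, if_neg h1, if_pos h2, zero_sub, map_neg, mul_neg, integral_neg]
    · simp only [ssg, if_neg h1, if_neg h2, sub_zero, map_zero, mul_zero, integral_zero]
  simp [e, Finset.sum_sub_distrib]

/-- closed subspace spanned by the `ssg` -/
noncomputable def VV {n : ℕ} {α : Fin n → EE n → ℂ} (hα : ∀ j, ContDiff ℝ ∞ (α j)) :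
    Submodule ℂ (HH n) :=
  (Submodule.span ℂ {h | ∃ (j k : Fin n) (w : EE n → ℂ) (hw : ContDiff ℝ ∞ w)
    (hc : HasCompactSupport w), h = toH (ssg_memLp hα j k hw hc)}).topologicalClosure

lemma ssg_mem {n : ℕ} {α : Fin n → EE n → ℂ} (hα : ∀ j, ContDiff ℝ ∞ (α j)) (j k : Fin n)
    {w : EE n → ℂ} (hw : ContDiff ℝ ∞ w) (hc : HasCompactSupport w) :
    toH (ssg_memLp hα j k hw hc) ∈ VV hα :=
  Submodule.le_topologicalClosure _ (Submodule.subset_span ⟨j, k, w, hw, hc, rfl⟩)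

lemma T_mem_perp {n : ℕ} {α : Fin n → EE n → ℂ} (hα : ∀ j, ContDiff ℝ ∞ (α j))
    (hcl : ∀ j k x, WW I j (α k) x = WW I k (α j) x)
    {w : EE n → ℂ} (hw : ContDiff ℝ ∞ w) (hc : HasCompactSupport w) :
    toH (DD_memLp hα hw hc) ∈ (VV hα)ᗮ := by
  unfold VV
  rw [Submodule.orthogonal_closure]
  rw [Submodule.mem_orthogonal]
  intro u hu
  induction hu using Submodule.span_induction with
  | zero => simp
  | add x y _ _ hx hy => rw [inner_add_left, hx, hy, add_zero]
  | smul c x _ hx => rw [inner_smul_left, hx, mul_zero]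
  | mem x hx =>
    obtain ⟨j, k, v, hv, hvc, rfl⟩ := hx
    rw [inner_ssg hα j k hv hvc]
    have e : ∀ j k, ∫ x, (toH (DD_memLp hα hw hc)) k x * conj (DS α j v x) =
        ∫ x, DD α j (DD α k w) x * conj (v x) := by
      intro j k
      rw [DD_adj_left hα j ((DD_smooth hα k hw).of_le one_le_infty) (DD_hcs α k hc)
        (hv.of_le one_le_infty)]
      apply integral_congr_ae
      filter_upwards [(DD_memLp hα hw hc k).coeFn_toLp] with x hx
      simp only [toH, hx]
    rw [e, e, sub_eq_zero]
    congr 1; funext x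
    rw [DD_comm hα hcl k j hw]

/-- the dual a priori estimate -/
lemma dual_est {n : ℕ} {α : Fin n → EE n → ℂ} (hα : ∀ j, ContDiff ℝ ∞ (α j))
    (hcl : ∀ j k x, WW I j (α k) x = WW I k (α j) x)
    (hM : ∀ x (ξ : Fin n → ℂ), ∑ j, ‖ξ j‖ ^ 2 ≤ ∑ j, ∑ k, (MM α k j x * ξ j * conj (ξ k)).re)
    {v ψ : Fin n → EE n → ℂ} {p : EE n → ℂ} {q : Fin n → Fin n → EE n → ℂ}
    (hv : ∀ j, MemLp (v j) 2) (hψ : ∀ j, MemLp (ψ j) 2) (hp : MemLp p 2)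
    (hq : ∀ j k, MemLp (q j k) 2)
    (hP : ∀ φ : EE n → ℂ, ContDiff ℝ ∞ φ → HasCompactSupport φ →
      ∑ j, ∫ x, ψ j x * Dc α j φ x = ∫ x, p x * φ x)
    (hQ : ∀ φ : EE n → ℂ, ContDiff ℝ ∞ φ → HasCompactSupport φ → ∀ j k,
      (∫ x, v k x * Sc α j φ x) - ∫ x, v j x * Sc α k φ x = ∫ x, q j k x * φ x) :
    ‖∑ j, ∫ x, v j x * conj (ψ j x)‖ ≤
      √(∑ j, ∫ x, ‖v j x‖ ^ 2) * √(∫ x, ‖p x‖ ^ 2) +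
      √((1 / 2) * ∑ j, ∑ k, ∫ x, ‖q j k x‖ ^ 2) * √(∑ j, ∫ x, ‖ψ j x‖ ^ 2) := by
  set V := VV hα with hV
  have : CompleteSpace V := (Submodule.isClosed_topologicalClosure _).completeSpace_coe
  set a := toH hv with ha
  set b := toH hψ with hb
  -- decomposition
  have dec : ∀ h : HH n, ∃ h1 h2 : HH n, h1 ∈ Vᗮ ∧ h2 ∈ V ∧ h = h1 + h2 ∧ ‖h1‖ ≤ ‖h‖ ∧ ‖h2‖ ≤ ‖h‖ := by
    intro h
    refine ⟨Vᗮ.starProjection h, V.starProjection h, Submodule.starProjection_apply_mem _ _,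
      Submodule.starProjection_apply_mem _ _, ?_, Submodule.norm_starProjection_apply_le _ _,
      Submodule.norm_starProjection_apply_le _ _⟩
    rw [add_comm]
    exact (Submodule.starProjection_add_starProjection_orthogonal (K := V) h).symm
  obtain ⟨a1, a2, ha1, ha2, hae, han1, han2⟩ := dec a
  obtain ⟨b1, b2, hb1, hb2, hbe, hbn1, hbn2⟩ := dec b
  -- reformulate inner products
  have innT : ∀ (h : HH n) (φ : EE n → ℂ) (h1 : ContDiff ℝ ∞ φ) (h2 : HasCompactSupport φ),
      ∑ j, ∫ x, h j x * Dc α j φ x =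
        inner ℂ (toH (DD_memLp hα (conj_smooth h1) (conj_hcs h2))) h := by
    intro h φ h1 h2
    rw [inner_toH]
    simp only [conj_DD]
  have innS : ∀ (h : HH n) (φ : EE n → ℂ) (h1 : ContDiff ℝ ∞ φ) (h2 : HasCompactSupport φ) (j k : Fin n),
      (∫ x, h k x * Sc α j φ x) - ∫ x, h j x * Sc α k φ x =
        inner ℂ (toH (ssg_memLp hα j k (conj_smooth h1) (conj_hcs h2))) h := by
    intro h φ h1 h2 j k
    rw [inner_ssg hα j k (conj_smooth h1) (conj_hcs h2)]
    simp only [conj_DS]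
  have coe : ∀ {u : Fin n → EE n → ℂ} (hu : ∀ j, MemLp (u j) 2) (j : Fin n) (φ : EE n → ℂ),
      ∫ x, (toH hu) j x * φ x = ∫ x, u j x * φ x := by
    intro u hu j φ
    apply integral_congr_ae
    filter_upwards [(hu j).coeFn_toLp] with x hx
    simp only [toH, hx]
  have estb : ‖b1‖ ^ 2 ≤ ∫ x, ‖p x‖ ^ 2 := by
    have := est_weak hα hM (g := fun j => b1 j) (p := p) (q := fun _ _ _ => 0)
      (fun j => Lp.memLp _) hp (fun _ _ => by simp)
      (by
        intro φ h1 h2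
        rw [innT b1 φ h1 h2, ← hP φ h1 h2]
        have e : ∑ j, ∫ x, ψ j x * Dc α j φ x = ∑ j, ∫ x, b j x * Dc α j φ x := by
          simp only [hb, coe]
        rw [e, innT b φ h1 h2, hbe, inner_add_right,
          Submodule.inner_left_of_mem_orthogonal hb2 (T_mem_perp hα hcl (conj_smooth h1) (conj_hcs h2)), add_zero])
      (by
        intro φ h1 h2 j k
        rw [innS b1 φ h1 h2,
          Submodule.inner_right_of_mem_orthogonal (ssg_mem hα j k (conj_smooth h1) (conj_hcs h2)) hb1]
        simp)
    rw [normsq_HH]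
    simpa using this
  have esta : ‖a2‖ ^ 2 ≤ (1 / 2) * ∑ j, ∑ k, ∫ x, ‖q j k x‖ ^ 2 := by
    have := est_weak hα hM (g := fun j => a2 j) (p := fun _ => 0) (q := q)
      (fun j => Lp.memLp _) (by simp) hq
      (by
        intro φ h1 h2
        rw [innT a2 φ h1 h2,
          Submodule.inner_left_of_mem_orthogonal ha2 (T_mem_perp hα hcl (conj_smooth h1) (conj_hcs h2))]
        simp)
      (by
        intro φ h1 h2 j k
        rw [innS a2 φ h1 h2, ← hQ φ h1 h2 j k]
        have e : (∫ x, v k x * Sc α j φ x) - ∫ x, v j x * Sc α k φ x =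
            (∫ x, a k x * Sc α j φ x) - ∫ x, a j x * Sc α k φ x := by
          simp only [ha, coe]
        rw [e, innS a φ h1 h2, hae, inner_add_right,
          Submodule.inner_right_of_mem_orthogonal (ssg_mem hα j k (conj_smooth h1) (conj_hcs h2)) ha1, zero_add])
    rw [normsq_HH]
    simpa using this
  have hsum : ∑ j, ∫ x, v j x * conj (ψ j x) = inner ℂ b a := by
    rw [hb, inner_toH]
    simp only [ha, coe]
  have hinn : inner ℂ b a = inner ℂ b1 a1 + inner ℂ b2 a2 := by
    rw [hbe, hae, inner_add_left, inner_add_right, inner_add_right,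
      Submodule.inner_left_of_mem_orthogonal ha2 hb1,
      Submodule.inner_right_of_mem_orthogonal hb2 ha1]
    ring
  rw [hsum, hinn]
  have na : √(∑ j, ∫ x, ‖v j x‖ ^ 2) = ‖a‖ := by
    rw [← normsq_toH hv, Real.sqrt_sq (norm_nonneg _)]
  have nb : √(∑ j, ∫ x, ‖ψ j x‖ ^ 2) = ‖b‖ := by
    rw [← normsq_toH hψ, Real.sqrt_sq (norm_nonneg _)]
  rw [na, nb]
  refine (norm_add_le _ _).trans ?_
  gcongr
  · refine (norm_inner_le_norm _ _).trans ?_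
    rw [mul_comm]
    gcongr
    exact Real.le_sqrt_of_sq_le estb
  · refine (norm_inner_le_norm _ _).trans ?_
    rw [mul_comm]
    gcongr
    exact Real.le_sqrt_of_sq_le esta

open Complex MeasureTheory
open scoped ContDiff ComplexConjugate ENNReal

/-! ### Part F: weights and the estimate for the Cauchy-Riemann operator -/

lemma sep_family {n : ℕ} {K N : Set (EE n)} (hK : IsCompact K) (hKc : Convex ℝ K)
    (hN : IsCompact N) (hd : ∀ y ∈ N, y ∉ K) :
    ∃ (t : Finset (EE n)) (l : EE n → StrongDual ℝ (EE n)) (c : EE n → ℝ),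
      (∀ p ∈ t, ∀ x ∈ K, l p x - c p < -1) ∧ ∀ y ∈ N, ∃ p ∈ t, 1 < l p y - c p := by
  have h : ∀ y : EE n, ∃ (l : StrongDual ℝ (EE n)) (c : ℝ), y ∈ N →
      (∀ x ∈ K, l x - c < -1) ∧ 1 < l y - c := by
    intro y
    by_cases hy : y ∈ N
    · obtain ⟨f, u, v, h1, h2, h3⟩ := geometric_hahn_banach_compact_closed hKc hK
        (convex_singleton y) isClosed_singleton (Set.disjoint_singleton_right.2 (hd y hy))
      have hpos : 0 < (v - u) / 2 := by linarith
      refine ⟨((v - u) / 2)⁻¹ • f, ((v - u) / 2)⁻¹ * ((u + v) / 2), fun _ => ⟨fun x hx => ?_, ?_⟩⟩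
      · have := h1 x hx
        simp only [smul_apply, smul_eq_mul, ← mul_sub]
        rw [inv_mul_lt_iff₀ hpos]; linarith
      · have := h3 y rfl
        simp only [smul_apply, smul_eq_mul, ← mul_sub]
        rw [lt_inv_mul_iff₀ hpos]; linarith
    · exact ⟨0, 0, fun h => absurd h hy⟩
  choose l c hlc using h
  obtain ⟨t, ht, hcov⟩ := hN.elim_nhds_subcover (fun y => {z | 1 < l y z - c y}) (by
    intro y hy
    exact (isOpen_lt continuous_const ((l y).continuous.sub continuous_const)).mem_nhds
      (hlc y hy).2)
  refine ⟨t, l, c, fun p hp => (hlc p (ht p hp)).1, fun y hy => ?_⟩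
  simpa using hcov hy

/-- coordinate functions -/
noncomputable def XX {n : ℕ} (x0 : EE n) (l : Fin (2 * n)) (x : EE n) : ℂ := ((x - x0) l : ℝ)

/-- real part of affine function -/
noncomputable def LL {n : ℕ} (l : StrongDual ℝ (EE n)) (c m : ℝ) (x : EE n) : ℂ :=
  ((m * (l x - c) : ℝ) : ℂ)

lemma XX_hasFDerivAt {n : ℕ} (x0 : EE n) (l : Fin (2 * n)) (x : EE n) :
    HasFDerivAt (XX x0 l) (Complex.ofRealCLM.comp (EuclideanSpace.proj (𝕜 := ℝ) l)) x := by
  have h1 : HasFDerivAt (fun x : EE n => x - x0) (ContinuousLinearMap.id ℝ (EE n)) x :=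
    (hasFDerivAt_id x).sub_const x0
  exact ((Complex.ofRealCLM.comp (EuclideanSpace.proj (𝕜 := ℝ) l)).hasFDerivAt).comp x h1

lemma pd_XX {n : ℕ} (x0 : EE n) (l k : Fin (2 * n)) (x : EE n) :
    pd k (XX x0 l) x = if l = k then 1 else 0 := by
  unfold pd
  rw [(XX_hasFDerivAt x0 l x).fderiv]
  by_cases h : l = k <;> simp [h]

lemma XX_smooth {n : ℕ} (x0 : EE n) (l : Fin (2 * n)) : ContDiff ℝ ∞ (XX x0 l) :=
  (Complex.ofRealCLM.comp (EuclideanSpace.proj (𝕜 := ℝ) l)).contDiff.comp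
    (contDiff_id.sub contDiff_const)

lemma LL_hasFDerivAt {n : ℕ} (l : StrongDual ℝ (EE n)) (c m : ℝ) (x : EE n) :
    HasFDerivAt (LL l c m) (Complex.ofRealCLM.comp (m • l)) x :=
  Complex.ofRealCLM.hasFDerivAt.comp x ((l.hasFDerivAt.sub_const c).const_mul m)

lemma LL_smooth {n : ℕ} (l : StrongDual ℝ (EE n)) (c m : ℝ) : ContDiff ℝ ∞ (LL l c m) :=
  Complex.ofRealCLM.contDiff.comp (contDiff_const.mul (l.contDiff.sub contDiff_const))

/-- the slope of an affine function -/
noncomputable def lam {n : ℕ} (l : StrongDual ℝ (EE n)) (m : ℝ) (k : Fin n) : ℂ :=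
  (1 / 2 : ℂ) * (((m * l (EuclideanSpace.single (idx1 k) 1) : ℝ) : ℂ)
    + I * ((m * l (EuclideanSpace.single (idx2 k) 1) : ℝ) : ℂ))

lemma WW_LL {n : ℕ} (l : StrongDual ℝ (EE n)) (c m : ℝ) (k : Fin n) (x : EE n) :
    WW I k (LL l c m) x = lam l m k := by
  simp only [WW, pd, (LL_hasFDerivAt l c m x).fderiv, lam]
  simp

lemma WW_LL' {n : ℕ} (l : StrongDual ℝ (EE n)) (c m : ℝ) (k : Fin n) (x : EE n) :
    WW (-I) k (LL l c m) x = conj (lam l m k) := by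
  rw [← WW_LL l c m k x]
  have : LL l c m = fun y => conj (LL l c m y) := by funext y; simp [LL]
  rw [this, WW_conj]
  simp [this.symm]

lemma WW_cexp {n : ℕ} (s : ℂ) (j : Fin n) {f : EE n → ℂ} {x : EE n}
    (hf : DifferentiableAt ℝ f x) :
    WW s j (fun y => cexp (f y)) x = cexp (f x) * WW s j f x := by
  have h := (hf.hasFDerivAt.cexp).fderiv
  simp only [WW, pd, h]
  simp
  ring

lemma idx_ne {n : ℕ} (j k : Fin n) : idx1 j ≠ idx2 k := by
  intro h
  have := congrArg Fin.val h
  simp [idx1, idx2] at this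
  have := j.2
  omega

lemma idx1_inj {n : ℕ} (j k : Fin n) : idx1 j = idx1 k ↔ j = k := by
  simp [idx1, Fin.ext_iff]

lemma idx2_inj {n : ℕ} (j k : Fin n) : idx2 j = idx2 k ↔ j = k := by
  simp [idx2, Fin.ext_iff]

/-- the weight -/
noncomputable def Phi {n : ℕ} (x0 : EE n) (t : Finset (EE n)) (l : EE n → StrongDual ℝ (EE n))
    (c : EE n → ℝ) (m : ℝ) (x : EE n) : ℂ :=
  (1 / 2 : ℂ) * (∑ i, XX x0 i x * XX x0 i x + ∑ p ∈ t, cexp (LL (l p) (c p) m x))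

lemma Phi_real {n : ℕ} (x0 : EE n) (t : Finset (EE n)) (l : EE n → StrongDual ℝ (EE n))
    (c : EE n → ℝ) (m : ℝ) (x : EE n) :
    Phi x0 t l c m x =
      (((1 / 2) * (‖x - x0‖ ^ 2 + ∑ p ∈ t, Real.exp (m * (l p x - c p))) : ℝ) : ℂ) := by
  rw [EuclideanSpace.norm_sq_eq]
  simp only [Phi, XX, LL]
  push_cast
  congr 2
  refine Finset.sum_congr rfl fun i _ => ?_
  rw [← ofReal_pow, ← ofReal_mul, Real.norm_eq_abs, sq_abs, sq]

lemma Phi_smooth {n : ℕ} (x0 : EE n) (t : Finset (EE n)) (l : EE n → StrongDual ℝ (EE n))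
    (c : EE n → ℝ) (m : ℝ) : ContDiff ℝ ∞ (Phi x0 t l c m) := by
  unfold Phi
  refine contDiff_const.mul ((ContDiff.sum fun i _ => (XX_smooth x0 i).mul (XX_smooth x0 i)).add
    (ContDiff.sum fun p _ => (LL_smooth _ _ _).cexp))

/-- the connection form of the weight -/
noncomputable def alP {n : ℕ} (Φ : EE n → ℂ) (j : Fin n) (x : EE n) : ℂ := WW I j Φ x

lemma WW_XX {n : ℕ} (s : ℂ) (x0 : EE n) (i : Fin (2 * n)) (k : Fin n) (x : EE n) :
    WW s k (XX x0 i) x = (1 / 2 : ℂ) * ((if i = idx1 k then 1 else 0) +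
      s * (if i = idx2 k then 1 else 0)) := by
  simp only [WW, pd_XX]

lemma alP_Phi {n : ℕ} (x0 : EE n) (t : Finset (EE n)) (l : EE n → StrongDual ℝ (EE n))
    (c : EE n → ℝ) (m : ℝ) (k : Fin n) :
    alP (Phi x0 t l c m) k = fun x => (1 / 2 : ℂ) * ((XX x0 (idx1 k) x + I * XX x0 (idx2 k) x) +
      ∑ p ∈ t, cexp (LL (l p) (c p) m x) * lam (l p) m k) := by
  funext x
  have dX := fun i => diff_of_smooth (XX_smooth x0 i) x
  have dL := fun p => diff_of_smooth (LL_smooth (l p) (c p) m) x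
  have dXX : ∀ i, DifferentiableAt ℝ (fun x => XX x0 i x * XX x0 i x) x :=
    fun i => (dX i).mul (dX i)
  have dE : ∀ p, DifferentiableAt ℝ (fun x => cexp (LL (l p) (c p) m x)) x :=
    fun p => (dL p).cexp
  have d1 : DifferentiableAt ℝ (fun x => ∑ i, XX x0 i x * XX x0 i x) x :=
    DifferentiableAt.fun_sum fun i _ => dXX i
  have d2 : DifferentiableAt ℝ (fun x => ∑ p ∈ t, cexp (LL (l p) (c p) m x)) x :=
    DifferentiableAt.fun_sum fun i _ => dE i
  unfold alP Phi
  rw [WW_const_mul I k _ (d1.fun_add d2), WW_add I k d1 d2, WW_sum _ _ _ dXX, WW_sum _ _ _ dE]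
  simp only [WW_mul I k (dX _) (dX _), WW_cexp I k (dL _), WW_LL, WW_XX]
  congr 2
  have : ∀ i, (1 / 2 : ℂ) * ((if i = idx1 k then 1 else 0) + I * (if i = idx2 k then 1 else 0))
      * XX x0 i x + XX x0 i x * ((1 / 2 : ℂ) * ((if i = idx1 k then 1 else 0) +
      I * (if i = idx2 k then 1 else 0))) =
      (if i = idx1 k then XX x0 i x else 0) + I * (if i = idx2 k then XX x0 i x else 0) := by
    intro i; split_ifs <;> ring
  simp only [this, Finset.sum_add_distrib, ← Finset.mul_sum]
  simp

lemma WW_alP_Phi {n : ℕ} (x0 : EE n) (t : Finset (EE n)) (l : EE n → StrongDual ℝ (EE n))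
    (c : EE n → ℝ) (m : ℝ) (j k : Fin n) (x : EE n) :
    WW (-I) j (alP (Phi x0 t l c m) k) x = (1 / 2 : ℂ) * ((if j = k then 1 else 0) +
      ∑ p ∈ t, cexp (LL (l p) (c p) m x) * (conj (lam (l p) m j) * lam (l p) m k)) := by
  rw [alP_Phi]
  have dX := fun i => diff_of_smooth (XX_smooth x0 i) x
  have dL := fun p => diff_of_smooth (LL_smooth (l p) (c p) m) x
  have dE : ∀ p, DifferentiableAt ℝ (fun x => cexp (LL (l p) (c p) m x)) x :=
    fun p => (dL p).cexp
  have dE' : ∀ p, DifferentiableAt ℝ (fun x => cexp (LL (l p) (c p) m x) * lam (l p) m k) x :=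
    fun p => (dE p).mul_const _
  have dI : DifferentiableAt ℝ (fun x => I * XX x0 (idx2 k) x) x := (dX _).const_mul I
  have d1 : DifferentiableAt ℝ (fun x => XX x0 (idx1 k) x + I * XX x0 (idx2 k) x) x :=
    (dX _).add dI
  have d2 : DifferentiableAt ℝ (fun x => ∑ p ∈ t, cexp (LL (l p) (c p) m x) * lam (l p) m k) x :=
    DifferentiableAt.fun_sum fun i _ => dE' i
  rw [WW_const_mul (-I) j _ (d1.fun_add d2), WW_add _ j d1 d2, WW_sum _ _ _ dE', WW_add _ j (dX _) dI,
    WW_const_mul _ _ _ (dX _)]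
  simp only [WW_mul (-I) j (dE _) (differentiableAt_const _), WW_cexp _ _ (dL _), WW_LL',
    WW_const, WW_XX, idx1_inj, idx2_inj, idx_ne, (idx_ne _ _).symm, if_false]
  congr 2
  · by_cases h : j = k
    · simp only [h, if_true]
      have := I_mul_I
      linear_combination (-1/2 : ℂ) * this
    · have h' : ¬ k = j := fun e => h e.symm
      simp [h, h']
  · refine Finset.sum_congr rfl fun p _ => ?_
    ring

lemma alP_smooth {n : ℕ} {Φ : EE n → ℂ} (h : ContDiff ℝ ∞ Φ) (j : Fin n) :
    ContDiff ℝ ∞ (alP Φ j) := WW_smooth I j h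

lemma alP_closed {n : ℕ} {Φ : EE n → ℂ} (h : ContDiff ℝ ∞ Φ) (j k : Fin n) (x : EE n) :
    WW I j (alP Φ k) x = WW I k (alP Φ j) x := by
  exact WW_comm I I j k (h.of_le two_le_infty) x

lemma MM_alP {n : ℕ} (x0 : EE n) (t : Finset (EE n)) (l : EE n → StrongDual ℝ (EE n))
    (c : EE n → ℝ) (m : ℝ) (j k : Fin n) (x : EE n) :
    MM (alP (Phi x0 t l c m)) k j x = (if j = k then 1 else 0) +
      ∑ p ∈ t, cexp (LL (l p) (c p) m x) * (conj (lam (l p) m j) * lam (l p) m k) := by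
  have hreal : ∀ p, conj (cexp (LL (l p) (c p) m x)) = cexp (LL (l p) (c p) m x) := by
    intro p; rw [← Complex.exp_conj]; simp [LL]
  have : conj (WW (-I) k (alP (Phi x0 t l c m) j) x) = WW (-I) j (alP (Phi x0 t l c m) k) x := by
    rw [WW_alP_Phi, WW_alP_Phi]
    simp only [map_mul, map_add, map_sum, hreal, Complex.conj_conj, map_div₀, map_one, map_ofNat]
    congr 2
    · by_cases h : j = k
      · simp [h]
      · have h' : ¬ k = j := fun e => h e.symm
        simp [h, h']
    · refine Finset.sum_congr rfl fun p _ => ?_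
      ring
  simp only [MM]
  rw [WW_conj]
  simp only [conj_I]
  rw [this, WW_alP_Phi]
  ring

lemma hM_alP {n : ℕ} (x0 : EE n) (t : Finset (EE n)) (l : EE n → StrongDual ℝ (EE n))
    (c : EE n → ℝ) (m : ℝ) (x : EE n) (ξ : Fin n → ℂ) :
    ∑ j, ‖ξ j‖ ^ 2 ≤
      ∑ j, ∑ k, (MM (alP (Phi x0 t l c m)) k j x * ξ j * conj (ξ k)).re := by
  have key : ∑ j, ∑ k, MM (alP (Phi x0 t l c m)) k j x * ξ j * conj (ξ k) =
      (((∑ j, ‖ξ j‖ ^ 2) + ∑ p ∈ t, Real.exp (m * (l p x - c p)) *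
        ‖∑ j, conj (lam (l p) m j) * ξ j‖ ^ 2 : ℝ) : ℂ) := by
    simp only [MM_alP, add_mul, Finset.sum_add_distrib]
    rw [ofReal_add]
    congr 1
    · simp only [ite_mul, one_mul, zero_mul, Finset.sum_ite_eq, Finset.mem_univ, if_true]
      push_cast
      exact Finset.sum_congr rfl fun j _ => Complex.mul_conj' _
    · rw [ofReal_sum]
      simp only [ofReal_mul, norm_sq_sum, Finset.sum_mul]
      have e : ∀ j, ∑ k, ∑ p ∈ t, cexp (LL (l p) (c p) m x) * (conj (lam (l p) m j) * lam (l p) m k)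
          * ξ j * conj (ξ k) = ∑ p ∈ t, ∑ k, cexp (LL (l p) (c p) m x) *
            (conj (lam (l p) m j) * lam (l p) m k) * ξ j * conj (ξ k) :=
        fun j => Finset.sum_comm
      simp only [e]
      rw [Finset.sum_comm]
      refine Finset.sum_congr rfl fun p _ => ?_
      rw [Finset.mul_sum]
      refine Finset.sum_congr rfl fun j _ => ?_
      rw [Finset.mul_sum]
      refine Finset.sum_congr rfl fun k _ => ?_
      simp only [LL, ofReal_exp, map_mul, Complex.conj_conj]
      ring
  have h2 := congrArg Complex.re key
  simp only [re_sum, ofReal_re] at h2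
  rw [h2]
  have : 0 ≤ ∑ p ∈ t, Real.exp (m * (l p x - c p)) * ‖∑ j, conj (lam (l p) m j) * ξ j‖ ^ 2 :=
    Finset.sum_nonneg fun p _ => by positivity
  linarith

open Complex MeasureTheory
open scoped ContDiff ComplexConjugate ENNReal

lemma cs_memLp {n : ℕ} {f : EE n → ℂ} (hf : Continuous f) (h : HasCompactSupport f) :
    MemLp f 2 := hf.memLp_of_hasCompactSupport h

lemma ic_mul {n : ℕ} {f g : EE n → ℂ} (hf : Continuous f) (hg : Continuous g)
    (h : HasCompactSupport g) : Integrable (fun x => f x * g x) :=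
  cont_int (hf.mul hg) h.mul_left

lemma hcs_sum {n : ℕ} {ι : Type*} (t : Finset ι) {f : ι → EE n → ℂ}
    (h : ∀ i, HasCompactSupport (f i)) : HasCompactSupport (fun x => ∑ i ∈ t, f i x) := by
  classical
  induction t using Finset.induction_on with
  | empty => simp only [Finset.sum_empty]; exact HasCompactSupport.zero
  | insert a s ha ih =>
    simp only [Finset.sum_insert ha]
    exact (h a).add ih

lemma conj_est {n : ℕ} {Φ : EE n → ℂ} (hΦ : ContDiff ℝ ∞ Φ) (hr : ∀ x, conj (Φ x) = Φ x)
    (hM : ∀ x (ξ : Fin n → ℂ), ∑ j, ‖ξ j‖ ^ 2 ≤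
      ∑ j, ∑ k, (MM (alP Φ) k j x * ξ j * conj (ξ k)).re)
    {b χ : Fin n → EE n → ℂ} (hb : ∀ j, ContDiff ℝ 1 (b j)) (hbc : ∀ j, HasCompactSupport (b j))
    (hχ : ∀ j, ContDiff ℝ ∞ (χ j)) (hχc : ∀ j, HasCompactSupport (χ j)) :
    ‖∑ j, ∫ x, b j x * χ j x‖ ≤
      √(∑ j, ∫ x, ‖cexp (-Φ x) * b j x‖ ^ 2) * √(∫ x, ‖cexp (Φ x) * ∑ j, WW I j (χ j) x‖ ^ 2) +
      √((1 / 2) * ∑ j, ∑ k, ∫ x, ‖cexp (-Φ x) * (WW I j (b k) x - WW I k (b j) x)‖ ^ 2) *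
        √(∑ j, ∫ x, ‖cexp (Φ x) * χ j x‖ ^ 2) := by
  have hα := alP_smooth hΦ
  have hE : ContDiff ℝ ∞ (fun x => cexp (Φ x)) := hΦ.cexp
  have hE' : ContDiff ℝ ∞ (fun x => cexp (-Φ x)) := hΦ.neg.cexp
  have hWb : ∀ j k, Continuous (WW I j (b k)) := fun j k =>
    (WW_contDiff I j (hb k) (k := 0) (by norm_num)).continuous
  have hv1 : ∀ j, ContDiff ℝ 1 (fun x => cexp (-Φ x) * b j x) := fun j =>
    (hE'.of_le one_le_infty).mul (hb j)
  have hψ1 : ∀ j, ContDiff ℝ 1 (fun x => cexp (Φ x) * conj (χ j x)) := fun j =>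
    (hE.mul (conj_smooth (hχ j))).of_le one_le_infty
  have hvc : ∀ j, HasCompactSupport (fun x => cexp (-Φ x) * b j x) := fun j => (hbc j).mul_left
  have hψc : ∀ j, HasCompactSupport (fun x => cexp (Φ x) * conj (χ j x)) := fun j =>
    (conj_hcs (hχc j)).mul_left
  have hsumc : HasCompactSupport (fun x => ∑ j, WW I j (χ j) x) :=
    hcs_sum _ fun j => WW_hcs I j (hχc j)
  have hsum : Continuous (fun x => ∑ j, WW I j (χ j) x) :=
    continuous_finsetSum _ fun j _ => (WW_smooth I j (hχ j)).continuous
  have hp : Continuous (fun x => -(cexp (Φ x) * conj (∑ j, WW I j (χ j) x))) :=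
    (hE.continuous.mul (Complex.continuous_conj.comp hsum)).neg
  have hpc : HasCompactSupport (fun x => -(cexp (Φ x) * conj (∑ j, WW I j (χ j) x))) :=
    ((conj_hcs hsumc).mul_left).neg
  have hq : ∀ j k, Continuous (fun x => cexp (-Φ x) * (WW I j (b k) x - WW I k (b j) x)) :=
    fun j k => hE'.continuous.mul ((hWb j k).sub (hWb k j))
  have hqc : ∀ j k, HasCompactSupport
      (fun x => cexp (-Φ x) * (WW I j (b k) x - WW I k (b j) x)) := fun j k =>
    ((WW_hcs I j (hbc k)).sub (WW_hcs I k (hbc j))).mul_left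
  have hdΦ := fun x => diff_of_smooth hΦ x
  have hdb : ∀ j x, DifferentiableAt ℝ (b j) x := fun j x => (hb j).differentiable (by norm_num) x
  have e1 : ∀ j k x, WW I j (fun x => cexp (-Φ x) * b k x) x + alP Φ j x * (cexp (-Φ x) * b k x)
      = cexp (-Φ x) * WW I j (b k) x := by
    intro j k x
    rw [WW_mul I j (diff_of_smooth hE' x) (hdb k x), WW_cexp I j (f := fun x => -Φ x) (hdΦ x).neg, WW_neg]
    simp only [alP]; ring
  have e2 : ∀ j x, -WW (-I) j (fun x => cexp (Φ x) * conj (χ j x)) x +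
      conj (alP Φ j x) * (cexp (Φ x) * conj (χ j x)) = -(cexp (Φ x) * conj (WW I j (χ j) x)) := by
    intro j x
    have : conj (alP Φ j x) = WW (-I) j Φ x := by
      have h := WW_conj (-I) j Φ x
      simp only [hr, map_neg, conj_I, neg_neg] at h
      rw [h]; rfl
    rw [WW_mul _ j (diff_of_smooth hE x) (diff_of_smooth (conj_smooth (hχ j)) x),
      WW_cexp _ j (hdΦ x), WW_conj, this]
    simp only [map_neg, conj_I, neg_neg]
    ring
  have := dual_est hα (alP_closed hΦ) hM (v := fun j x => cexp (-Φ x) * b j x)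
    (ψ := fun j x => cexp (Φ x) * conj (χ j x))
    (p := fun x => -(cexp (Φ x) * conj (∑ j, WW I j (χ j) x)))
    (q := fun j k x => cexp (-Φ x) * (WW I j (b k) x - WW I k (b j) x))
    (fun j => cs_memLp (hv1 j).continuous (hvc j)) (fun j => cs_memLp (hψ1 j).continuous (hψc j))
    (cs_memLp hp hpc) (fun j k => cs_memLp (hq j k) (hqc j k)) ?_ ?_
  · have g1 : ∀ j x, (cexp (-Φ x) * b j x) * conj (cexp (Φ x) * conj (χ j x)) = b j x * χ j x := by
      intro j x
      have : cexp (-Φ x) * cexp (Φ x) = 1 := by rw [← Complex.exp_add]; simp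
      have h2 : conj (cexp (Φ x)) = cexp (Φ x) := by rw [← Complex.exp_conj, hr]
      simp only [map_mul, h2, Complex.conj_conj]
      linear_combination (b j x * χ j x) * this
    simp only [g1] at this
    simp only [norm_neg, norm_mul, RCLike.norm_conj] at this ⊢
    exact this
  · intro φ hφ hφc
    have hφ1 := hφ.of_le one_le_infty
    have : ∀ j, ∫ x, (cexp (Φ x) * conj (χ j x)) * Dc (alP Φ) j φ x =
        ∫ x, -(cexp (Φ x) * conj (WW I j (χ j) x)) * φ x := by
      intro j
      simp only [Dc, mul_add]
      rw [integral_add, WW_ibp _ _ (hψ1 j) hφ1 hφc, ← integral_neg, ← integral_add]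
      · refine integral_congr_ae (.of_forall fun x => ?_)
        simp only [← e2]
        ring
      · exact (ic_mul (WW_cont _ _ (hψ1 j)) hφ.continuous hφc).neg
      · exact ic_mul (hψ1 j).continuous ((conj_smooth (hα j)).continuous.mul hφ.continuous) hφc.mul_left
      · exact ic_mul (hψ1 j).continuous (WW_cont _ _ hφ1) (WW_hcs _ _ hφc)
      · exact ic_mul (hψ1 j).continuous ((conj_smooth (hα j)).continuous.mul hφ.continuous) hφc.mul_left
    simp only [this]
    rw [← integral_finsetSum]
    · refine integral_congr_ae (.of_forall fun x => ?_)
      simp only [map_sum, Finset.mul_sum, Finset.sum_mul, Finset.sum_neg_distrib, neg_mul]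
    · exact fun j _ => ic_mul (hE.continuous.mul (Complex.continuous_conj.comp (WW_smooth I j (hχ j)).continuous)).neg hφ.continuous hφc
  · intro φ hφ hφc j k
    have hφ1 := hφ.of_le one_le_infty
    have : ∀ j k, ∫ x, (cexp (-Φ x) * b k x) * Sc (alP Φ) j φ x =
        ∫ x, (cexp (-Φ x) * WW I j (b k) x) * φ x := by
      intro j k
      simp only [Sc, mul_add, mul_neg]
      rw [integral_add, integral_neg, WW_ibp _ _ (hv1 k) hφ1 hφc, neg_neg, ← integral_add]
      · refine integral_congr_ae (.of_forall fun x => ?_)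
        simp only [← e1]
        ring
      · exact ic_mul (WW_cont _ _ (hv1 k)) hφ.continuous hφc
      · exact ic_mul (hv1 k).continuous ((hα j).continuous.mul hφ.continuous) hφc.mul_left
      · exact (ic_mul (hv1 k).continuous (WW_cont _ _ hφ1) (WW_hcs _ _ hφc)).neg
      · exact ic_mul (hv1 k).continuous ((hα j).continuous.mul hφ.continuous) hφc.mul_left
    rw [this, this, ← integral_sub]
    · refine integral_congr_ae (.of_forall fun x => ?_)
      simp only
      ring
    · exact ic_mul (hE'.continuous.mul (hWb j k)) hφ.continuous hφc
    · exact ic_mul (hE'.continuous.mul (hWb k j)) hφ.continuous hφc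

open Complex MeasureTheory
open scoped ContDiff ComplexConjugate ENNReal

lemma exists_cutoff {n : ℕ} {C U : Set (EE n)} (hC : IsCompact C) (hU : IsOpen U) (h : C ⊆ U) :
    ∃ (θ : EE n → ℂ) (N : Set (EE n)), ContDiff ℝ ∞ θ ∧ HasCompactSupport θ ∧ tsupport θ ⊆ U ∧
      (∀ x, ‖θ x‖ ≤ 1) ∧ (∀ x ∈ C, θ x = 1) ∧ IsCompact N ∧ (∀ y ∈ N, y ∉ C) ∧
      ∀ x ∉ N, x ∉ tsupport θ ∨ (x ∈ U ∧ ∀ᶠ y in nhds x, θ y = 1) := by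
  obtain ⟨δ, hδ, hsub⟩ := hC.exists_cthickening_subset_open hU h
  have hd : Disjoint (Metric.thickening δ C)ᶜ (Metric.cthickening (δ / 2) C) := by
    rw [Set.disjoint_compl_left_iff_subset]
    exact Metric.cthickening_subset_thickening' hδ (by linarith) C
  obtain ⟨f, hf0, hf1, hf⟩ := exists_contMDiffMap_zero_one_of_isClosed (modelWithCornersSelf ℝ (EE n))
    (n := ⊤) Metric.isOpen_thickening.isClosed_compl
    (Metric.isClosed_cthickening (δ := δ / 2) (E := C)) hd
  have hfs : ContDiff ℝ ∞ f := f.contMDiff.contDiff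
  have hts : tsupport (fun x => ((f x : ℝ) : ℂ)) ⊆ Metric.cthickening δ C := by
    refine (closure_mono ?_).trans (Metric.closure_thickening_subset_cthickening δ C)
    intro x hx
    by_contra hx'
    apply hx
    have := hf0 hx'
    simpa using this
  refine ⟨fun x => ((f x : ℝ) : ℂ), Metric.cthickening δ C \ Metric.thickening (δ / 2) C,
    Complex.ofRealCLM.contDiff.comp hfs, ?_, hts.trans hsub, ?_, ?_, ?_, ?_, ?_⟩
  · exact hC.cthickening.of_isClosed_subset (isClosed_tsupport _) hts
  · intro x
    rw [Complex.norm_real, Real.norm_eq_abs, abs_le]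
    have := hf x
    exact ⟨by linarith [this.1], this.2⟩
  · intro x hx
    have := hf1 (Metric.self_subset_cthickening C hx)
    simpa using this
  · exact hC.cthickening.diff Metric.isOpen_thickening
  · intro y hy hyC
    exact hy.2 (Metric.self_subset_thickening (by linarith) C hyC)
  · intro x hx
    by_cases h1 : x ∈ Metric.cthickening δ C
    · right
      have h2 : x ∈ Metric.thickening (δ / 2) C := by
        by_contra h2
        exact hx ⟨h1, h2⟩
      refine ⟨hsub h1, ?_⟩
      filter_upwards [Metric.isOpen_thickening.mem_nhds h2] with y hy
      have := hf1 (Metric.thickening_subset_cthickening _ C hy)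
      simpa using this
    · exact Or.inl fun h => h1 (hts h)

lemma cexp_norm_sq {z : ℂ} {r : ℝ} (h : z = (r : ℂ)) : ‖cexp z‖ ^ 2 = Real.exp (2 * r) := by
  rw [Complex.norm_exp, h, ofReal_re, ← Real.exp_nat_mul]; norm_num

lemma int_le_mul {n : ℕ} {g h : EE n → ℂ} (hg : Continuous g) (hgc : HasCompactSupport g)
    (hh : Continuous h) {C : Set (EE n)} (hC : ∀ x ∉ C, g x = 0) {c : ℝ}
    (hc : ∀ x ∈ C, ‖h x‖ ^ 2 ≤ c) :
    ∫ x, ‖h x * g x‖ ^ 2 ≤ c * ∫ x, ‖g x‖ ^ 2 := by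
  rw [← integral_const_mul]
  refine integral_mono (sq_int (hh.mul hg) hgc.mul_left) ((sq_int hg hgc).const_mul c) fun x => ?_
  simp only [norm_mul, mul_pow]
  by_cases hx : x ∈ C
  · exact mul_le_mul_of_nonneg_right (hc x hx) (by positivity)
  · simp [hC x hx]

lemma exists_polytope {n : ℕ} {K U : Set (EE n)} (hK : IsCompact K) (ho : IsOpen U)
    (hcv : Convex ℝ U) (h : K ⊆ U) :
    ∃ C : Set (EE n), IsCompact C ∧ Convex ℝ C ∧ K ⊆ C ∧ C ⊆ U := by
  classical
  have hx : ∀ x : EE n, ∃ u : Finset (EE n), x ∈ U →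
      x ∈ interior (convexHull ℝ (u : Set (EE n))) ∧ convexHull ℝ (u : Set (EE n)) ⊆ U := by
    intro x
    by_cases hxU : x ∈ U
    · obtain ⟨u, h1, h2⟩ := (convex_singleton x).exists_subset_interior_convexHull_finset_of_isCompact
        isCompact_singleton (t := U) (by rw [nhdsSet_singleton]; exact ho.mem_nhds hxU)
      exact ⟨u, fun _ => ⟨h1 rfl, h2⟩⟩
    · exact ⟨∅, fun h => absurd h hxU⟩
  choose u hu using hx
  obtain ⟨s, hs1, hs⟩ := hK.elim_nhds_subcover
    (fun x => interior (convexHull ℝ (u x : Set (EE n))))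
    (fun x hx => isOpen_interior.mem_nhds (hu x (h hx)).1)
  refine ⟨convexHull ℝ ((s.biUnion u : Finset (EE n)) : Set (EE n)),
    (s.biUnion u).finite_toSet.isCompact_convexHull ℝ, convex_convexHull ℝ _, ?_, ?_⟩
  · intro x hx
    obtain ⟨y, hy, hxy⟩ := Set.mem_iUnion₂.1 (hs hx)
    refine convexHull_mono ?_ (interior_subset hxy)
    exact_mod_cast Finset.subset_biUnion_of_mem u hy
  · refine convexHull_min ?_ hcv
    intro z hz
    simp only [Finset.coe_biUnion, Set.mem_iUnion] at hz
    obtain ⟨y, hy, hz⟩ := hz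
    exact (hu y (h (hs1 y hy))).2 (subset_convexHull ℝ _ hz)

lemma dbar_est {n : ℕ} {U : Set (EE n)} (ho : IsOpen U) (hcv : Convex ℝ U) {x0 : EE n} {D : ℝ}
    (hD : ∀ x ∈ U, ‖x - x0‖ ≤ D) {a χ : Fin n → EE n → ℂ} (ha : ∀ j, ContDiff ℝ 1 (a j))
    (hcl : ∀ x ∈ U, ∀ j k, WW I j (a k) x = WW I k (a j) x)
    (hai : ∀ j, IntegrableOn (fun x => ‖a j x‖ ^ 2) U)
    (hχ : ∀ j, ContDiff ℝ ∞ (χ j)) (hχc : ∀ j, HasCompactSupport (χ j))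
    (hχU : ∀ j, tsupport (χ j) ⊆ U) :
    ‖∑ j, ∫ x, a j x * χ j x‖ ≤
      √(∑ j, ∫ x in U, ‖a j x‖ ^ 2) *
        √(Real.exp (D ^ 2) * ∫ x, ‖∑ j, WW I j (χ j) x‖ ^ 2) := by
  have hK : IsCompact (⋃ j, tsupport (χ j)) := isCompact_iUnion fun j => hχc j
  obtain ⟨C, hCc, hCcv, hKsub, hCU⟩ := exists_polytope hK ho hcv (Set.iUnion_subset hχU)
  have hKC : ∀ j, ∀ x ∉ C, χ j x = 0 := by
    intro j x hx
    by_contra h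
    exact hx (hKsub (Set.mem_iUnion.2 ⟨j, subset_tsupport _ h⟩))
  have hKC' : ∀ x ∉ C, ∑ j, WW I j (χ j) x = 0 := by
    intro x hx
    refine Finset.sum_eq_zero fun j _ => WW_zero_of_notMem _ _ fun h => ?_
    exact hx (hKsub (Set.mem_iUnion.2 ⟨j, h⟩))
  obtain ⟨θ, N, hθ, hθc, hθU, hθ1, hθC, hN, hNC, hNx⟩ := exists_cutoff hCc ho hCU
  obtain ⟨t, l, c, hlK, hlN⟩ := sep_family hCc hCcv hN hNC
  set b : Fin n → EE n → ℂ := fun j x => θ x * a j x with hbdef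
  have hb : ∀ j, ContDiff ℝ 1 (b j) := fun j => (hθ.of_le one_le_infty).mul (ha j)
  have hbc : ∀ j, HasCompactSupport (b j) := fun j => hθc.mul_right
  have hq0 : ∀ j k, ∀ x ∉ N, WW I j (b k) x - WW I k (b j) x = 0 := by
    intro j k x hx
    rcases hNx x hx with h | ⟨hxU, h⟩
    · have : ∀ j, x ∉ tsupport (b j) := fun j hj => h (tsupport_mul_subset_left hj)
      rw [WW_zero_of_notMem _ _ (this k), WW_zero_of_notMem _ _ (this j), sub_zero]
    · have : ∀ j, b j =ᶠ[nhds x] a j := fun j => by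
        filter_upwards [h] with y hy
        simp [hbdef, hy]
      rw [WW_congr _ _ (this k), WW_congr _ _ (this j), hcl x hxU, sub_self]
  have hab : ∀ j x, b j x * χ j x = a j x * χ j x := by
    intro j x
    by_cases hx : x ∈ C
    · simp [hbdef, hθC x hx]
    · simp [hKC j x hx]
  have hWc : ∀ j k, Continuous (fun x => WW I j (b k) x - WW I k (b j) x) :=
    fun j k => (WW_cont _ _ (hb k)).sub (WW_cont _ _ (hb j))
  have hWcc : ∀ j k, HasCompactSupport (fun x => WW I j (b k) x - WW I k (b j) x) :=
    fun j k => (WW_hcs _ _ (hbc k)).sub (WW_hcs _ _ (hbc j))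
  have hSc : Continuous (fun x => ∑ j, WW I j (χ j) x) :=
    continuous_finsetSum _ fun j _ => (WW_smooth I j (hχ j)).continuous
  have hScc : HasCompactSupport (fun x => ∑ j, WW I j (χ j) x) :=
    hcs_sum _ fun j => WW_hcs I j (hχc j)
  set e : ℕ → ℝ := fun m => Real.exp (D ^ 2 + t.card * Real.exp (-(m : ℝ))) with hedef
  set d : ℕ → ℝ := fun m => Real.exp (-Real.exp (m : ℝ)) with hddef
  set Q := (1 / 2 : ℝ) * ∑ j, ∑ k, ∫ x, ‖WW I j (b k) x - WW I k (b j) x‖ ^ 2 with hQ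
  set A := ∑ j, ∫ x in U, ‖a j x‖ ^ 2 with hA
  set B := ∫ x, ‖∑ j, WW I j (χ j) x‖ ^ 2 with hB
  set X := ∑ j, ∫ x, ‖χ j x‖ ^ 2 with hX
  have key : ∀ m : ℕ, ‖∑ j, ∫ x, a j x * χ j x‖ ≤ √A * √(e m * B) + √(d m * Q) * √(e m * X) := by
    intro m
    have hΦ := Phi_smooth x0 t l c m
    have hr : ∀ x, conj (Phi x0 t l c m x) = Phi x0 t l c m x := by
      intro x; rw [Phi_real, conj_ofReal]
    have hEc := hΦ.continuous.cexp
    have hEc' := hΦ.continuous.neg.cexp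
    have hup : ∀ x ∈ C, ‖cexp (Phi x0 t l c m x)‖ ^ 2 ≤ e m := by
      intro x hx
      rw [cexp_norm_sq (Phi_real x0 t l c m x), hedef]
      apply Real.exp_le_exp.2
      have h1 : ∑ p ∈ t, Real.exp (m * (l p x - c p)) ≤ ∑ p ∈ t, Real.exp (-(m : ℝ)) := by
        refine Finset.sum_le_sum fun p hp => Real.exp_le_exp.2 ?_
        have := hlK p hp x hx
        nlinarith [(Nat.cast_nonneg m : (0 : ℝ) ≤ m)]
      rw [Finset.sum_const, nsmul_eq_mul] at h1
      have h2 := hD x (hCU hx)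
      have h3 : ‖x - x0‖ ^ 2 ≤ D ^ 2 := by gcongr
      linarith
    have hneg : ∀ x, -Phi x0 t l c m x = ((-((1 / 2) * (‖x - x0‖ ^ 2 +
        ∑ p ∈ t, Real.exp (m * (l p x - c p)))) : ℝ) : ℂ) := by
      intro x; rw [Phi_real, ofReal_neg]
    have hlow : ∀ x, ‖cexp (-Phi x0 t l c m x)‖ ^ 2 ≤ 1 := by
      intro x
      rw [cexp_norm_sq (hneg x), Real.exp_le_one_iff]
      have : 0 ≤ ∑ p ∈ t, Real.exp (m * (l p x - c p)) :=
        Finset.sum_nonneg fun p _ => (Real.exp_pos _).le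
      nlinarith [sq_nonneg ‖x - x0‖]
    have hlowN : ∀ x ∈ N, ‖cexp (-Phi x0 t l c m x)‖ ^ 2 ≤ d m := by
      intro x hx
      rw [cexp_norm_sq (hneg x), hddef]
      apply Real.exp_le_exp.2
      obtain ⟨p, hp, h1⟩ := hlN x hx
      have h2 : Real.exp (m * (l p x - c p)) ≤ ∑ p ∈ t, Real.exp (m * (l p x - c p)) :=
        Finset.single_le_sum (f := fun p => Real.exp (m * (l p x - c p)))
          (fun p _ => (Real.exp_pos _).le) hp
      have h3 : Real.exp (m : ℝ) ≤ Real.exp (m * (l p x - c p)) := by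
        apply Real.exp_le_exp.2
        nlinarith [(Nat.cast_nonneg m : (0 : ℝ) ≤ m)]
      nlinarith [sq_nonneg ‖x - x0‖]
    have main := conj_est hΦ hr (hM_alP x0 t l c m) hb hbc hχ hχc
    simp only [hab] at main
    refine main.trans (add_le_add (mul_le_mul (Real.sqrt_le_sqrt ?_) (Real.sqrt_le_sqrt ?_)
      (Real.sqrt_nonneg _) (Real.sqrt_nonneg _)) (mul_le_mul (Real.sqrt_le_sqrt ?_)
        (Real.sqrt_le_sqrt ?_) (Real.sqrt_nonneg _) (Real.sqrt_nonneg _)))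
    · refine Finset.sum_le_sum fun j _ => ?_
      have hz : ∀ x ∉ U, ‖cexp (-Phi x0 t l c m x) * b j x‖ ^ 2 = 0 := by
        intro x hx
        have : θ x = 0 := by
          by_contra h
          exact hx (hθU (subset_tsupport _ h))
        simp [hbdef, this]
      rw [← setIntegral_eq_integral_of_forall_compl_eq_zero hz]
      refine integral_mono (sq_int (hEc'.mul (hb j).continuous) (hbc j).mul_left).integrableOn
        (hai j) fun x => ?_
      simp only [hbdef, norm_mul, mul_pow]
      have h1 := hlow x
      have h2 : ‖θ x‖ ^ 2 ≤ 1 := by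
        have := hθ1 x
        have := norm_nonneg (θ x)
        nlinarith
      have h3 : ‖cexp (-Phi x0 t l c m x)‖ ^ 2 * ‖θ x‖ ^ 2 ≤ 1 :=
        mul_le_one₀ h1 (by positivity) h2
      nlinarith [sq_nonneg ‖a j x‖]
    · exact int_le_mul hSc hScc hEc hKC' hup
    · rw [hQ, mul_left_comm]
      refine mul_le_mul_of_nonneg_left ?_ (by norm_num)
      rw [Finset.mul_sum]
      refine Finset.sum_le_sum fun j _ => ?_
      rw [Finset.mul_sum]
      refine Finset.sum_le_sum fun k _ => ?_
      exact int_le_mul (hWc j k) (hWcc j k) hEc' (hq0 j k) hlowN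
    · rw [hX, Finset.mul_sum]
      refine Finset.sum_le_sum fun j _ => ?_
      exact int_le_mul (hχ j).continuous (hχc j) hEc (hKC j) hup
  have he : Filter.Tendsto e Filter.atTop (nhds (Real.exp (D ^ 2))) := by
    have h1 : Filter.Tendsto (fun m : ℕ => Real.exp (-(m : ℝ))) Filter.atTop (nhds 0) :=
      Real.tendsto_exp_neg_atTop_nhds_zero.comp tendsto_natCast_atTop_atTop
    have h2 := (Real.continuous_exp.tendsto _).comp ((h1.const_mul (t.card : ℝ)).const_add (D ^ 2))
    simp only [mul_zero, add_zero] at h2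
    exact h2
  have hd : Filter.Tendsto d Filter.atTop (nhds 0) :=
    Real.tendsto_exp_neg_atTop_nhds_zero.comp
      (Real.tendsto_exp_atTop.comp tendsto_natCast_atTop_atTop)
  have hlim := ((he.mul_const B).sqrt.const_mul (√A)).add
    ((hd.mul_const Q).sqrt.mul (he.mul_const X).sqrt)
  simp only [zero_mul, Real.sqrt_zero, add_zero] at hlim
  exact ge_of_tendsto' hlim key

open Complex MeasureTheory
open scoped ContDiff ComplexConjugate ENNReal

/-! ### Part G: the homotopy operator -/

/-- homotopy average with pole `y` -/
noncomputable def hom {n : ℕ} (y : EE n) (r : ℕ) (g : EE n → ℂ) (x : EE n) : ℂ :=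
  ∫ t in (0 : ℝ)..1, ((t : ℂ) ^ r) * g (y + t • (x - y))

lemma hom_hasFDerivAt {n : ℕ} (y : EE n) (r : ℕ) {g : EE n → ℂ} (hg : ContDiff ℝ 1 g)
    (hc : HasCompactSupport g) (x : EE n) :
    HasFDerivAt (hom y r g)
      (∫ t in (0 : ℝ)..1, ((t : ℂ) ^ (r + 1)) • fderiv ℝ g (y + t • (x - y))) x := by
  have hcf : Continuous (fderiv ℝ g) := hg.continuous_fderiv (by norm_num)
  obtain ⟨M, hM⟩ := (hc.fderiv ℝ).exists_bound_of_continuous hcf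
  have h1 : ∀ x : EE n, Continuous fun t : ℝ => ((t : ℂ) ^ r) * g (y + t • (x - y)) := fun x =>
    (by fun_prop : Continuous fun t : ℝ => (t : ℂ) ^ r).mul
      (hg.continuous.comp (by fun_prop))
  have h2 : ∀ x : EE n, Continuous fun t : ℝ =>
      ((t : ℂ) ^ (r + 1)) • fderiv ℝ g (y + t • (x - y)) := fun x =>
    (by fun_prop : Continuous fun t : ℝ => (t : ℂ) ^ (r + 1)).smul
      (hcf.comp (by fun_prop))
  refine (intervalIntegral.hasFDerivAt_integral_of_dominated_of_fderiv_le (bound := fun _ => M)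
    (F := fun x t => ((t : ℂ) ^ r) * g (y + t • (x - y)))
    (F' := fun x t => ((t : ℂ) ^ (r + 1)) • fderiv ℝ g (y + t • (x - y)))
    (s := Set.univ) Filter.univ_mem
    (.of_forall fun x => (h1 x).aestronglyMeasurable) ((h1 x).intervalIntegrable _ _)
    (h2 x).aestronglyMeasurable ?_ intervalIntegrable_const ?_)
  · refine .of_forall fun t ht x _ => ?_
    rw [Set.uIoc_of_le zero_le_one] at ht
    rw [norm_smul, norm_pow, Complex.norm_real, Real.norm_eq_abs, abs_of_pos ht.1]
    have : t ^ (r + 1) ≤ 1 := pow_le_one₀ ht.1.le ht.2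
    have h3 := hM (y + t • (x - y))
    have h4 : 0 ≤ t ^ (r + 1) := pow_nonneg ht.1.le _
    have := norm_nonneg (fderiv ℝ g (y + t • (x - y)))
    nlinarith
  · refine .of_forall fun t ht x _ => ?_
    have h3 : HasFDerivAt (fun x : EE n => y + t • (x - y)) (t • ContinuousLinearMap.id ℝ (EE n)) x :=
      (((hasFDerivAt_id x).sub_const y).const_smul t).const_add y
    have h4 := ((hg.differentiable (by norm_num) (y + t • (x - y))).hasFDerivAt.comp x h3).const_mul
      ((t : ℂ) ^ r)
    refine h4.congr_fderiv ?_
    ext v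
    simp [pow_succ, mul_assoc]

lemma hom_C1 {n : ℕ} (y : EE n) (r : ℕ) {g : EE n → ℂ} (hg : ContDiff ℝ 1 g)
    (hc : HasCompactSupport g) : ContDiff ℝ 1 (hom y r g) := by
  have hcf : Continuous (fderiv ℝ g) := hg.continuous_fderiv (by norm_num)
  rw [contDiff_one_iff_hasFDerivAt]
  refine ⟨_, ?_, hom_hasFDerivAt y r hg hc⟩
  refine intervalIntegral.continuous_parametric_intervalIntegral_of_continuous' ?_ 0 1
  have h1 : Continuous fun p : EE n × ℝ => ((p.2 : ℂ)) ^ (r + 1) := by fun_prop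
  have h2 : Continuous fun p : EE n × ℝ => fderiv ℝ g (y + p.2 • (p.1 - y)) :=
    hcf.comp (by fun_prop)
  exact h1.smul h2

lemma WW_hom {n : ℕ} (y : EE n) (r : ℕ) {g : EE n → ℂ} (hg : ContDiff ℝ 1 g)
    (hc : HasCompactSupport g) (s : ℂ) (k : Fin n) (x : EE n) :
    WW s k (hom y r g) x = hom y (r + 1) (WW s k g) x := by
  have hcf : Continuous (fderiv ℝ g) := hg.continuous_fderiv (by norm_num)
  have h2 : Continuous fun t : ℝ =>
      ((t : ℂ) ^ (r + 1)) • fderiv ℝ g (y + t • (x - y)) :=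
    (by fun_prop : Continuous fun t : ℝ => (t : ℂ) ^ (r + 1)).smul
      (hcf.comp (by fun_prop))
  have h3 : ∀ v : EE n, Continuous fun t : ℝ =>
      ((t : ℂ) ^ (r + 1)) * fderiv ℝ g (y + t • (x - y)) v := fun v => by
    have := h2.clm_apply (continuous_const (y := v))
    simpa using this
  have hp : ∀ i, pd i (hom y r g) x = ∫ t in (0 : ℝ)..1, ((t : ℂ) ^ (r + 1)) *
      fderiv ℝ g (y + t • (x - y)) (EuclideanSpace.single i 1) := by
    intro i
    unfold pd
    rw [(hom_hasFDerivAt y r hg hc x).fderiv,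
      ContinuousLinearMap.intervalIntegral_apply (h2.intervalIntegrable _ _)]
    simp
  simp only [WW, hp]
  unfold hom
  rw [← intervalIntegral.integral_const_mul, ← intervalIntegral.integral_add
    ((h3 _).intervalIntegrable _ _) (((h3 _).intervalIntegrable _ _).const_mul s),
    ← intervalIntegral.integral_const_mul]
  refine intervalIntegral.integral_congr fun t _ => ?_
  change _ = ((t : ℂ) ^ (r + 1)) * ((1 / 2 : ℂ) * _)
  unfold pd
  ring

open Complex MeasureTheory
open scoped ContDiff ComplexConjugate ENNReal

lemma sum_two {n : ℕ} {M : Type*} [AddCommMonoid M] (F : Fin (2 * n) → M) :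
    ∑ i, F i = ∑ j : Fin n, F (idx1 j) + ∑ j : Fin n, F (idx2 j) := by
  have h : n + n = 2 * n := by omega
  rw [← (finCongr h).sum_comp, Fin.sum_univ_add]
  congr 1
  refine Finset.sum_congr rfl fun j _ => ?_
  congr 1
  simp [idx2, Fin.ext_iff]

/-- complex coordinates relative to the pole `y` -/
noncomputable def zt {n : ℕ} (y : EE n) (j : Fin n) (x : EE n) : ℂ :=
  XX y (idx1 j) x + I * XX y (idx2 j) x

lemma zt_smooth {n : ℕ} (y : EE n) (j : Fin n) : ContDiff ℝ ∞ (zt y j) :=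
  (XX_smooth y _).add (contDiff_const.mul (XX_smooth y _))

lemma WW_zt {n : ℕ} (s : ℂ) (y : EE n) (j k : Fin n) (x : EE n) :
    WW s k (zt y j) x = if j = k then (1 / 2 : ℂ) * (1 + s * I) else 0 := by
  have dX := fun i => diff_of_smooth (XX_smooth y i) x
  have dI : DifferentiableAt ℝ (fun x => I * XX y (idx2 j) x) x := (dX _).const_mul I
  unfold zt
  rw [WW_add s k (dX _) dI, WW_const_mul s k _ (dX _)]
  simp only [WW_XX, idx1_inj, idx2_inj, idx_ne, (idx_ne _ _).symm, if_false]
  split_ifs <;> ring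

lemma zt_sq {n : ℕ} (y x : EE n) : ∑ j, ‖zt y j x‖ ^ 2 = ‖x - y‖ ^ 2 := by
  rw [EuclideanSpace.norm_sq_eq, sum_two, ← Finset.sum_add_distrib]
  refine Finset.sum_congr rfl fun j _ => ?_
  simp only [zt, XX]
  rw [mul_comm I, Complex.sq_norm, Complex.normSq_add_mul_I]
  simp

lemma zt_lin {n : ℕ} (y x p : EE n) (g : EE n → ℂ) :
    fderiv ℝ g p (x - y) = ∑ j, zt y j x * WW (-I) j g p + ∑ j, conj (zt y j x) * WW I j g p := by
  have h : x - y = ∑ i, ((x - y) i) • EuclideanSpace.single i (1 : ℝ) := by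
    have := (EuclideanSpace.basisFun (Fin (2 * n)) ℝ).sum_repr (x - y)
    simpa using this.symm
  rw [h, map_sum, sum_two, ← Finset.sum_add_distrib, ← Finset.sum_add_distrib]
  refine Finset.sum_congr rfl fun j _ => ?_
  have hI := I_mul_I
  simp only [map_smul, zt, XX, WW, pd, real_smul, map_add, map_mul, conj_ofReal, conj_I]
  set A := fderiv ℝ g p (EuclideanSpace.single (idx1 j) 1)
  set B := fderiv ℝ g p (EuclideanSpace.single (idx2 j) 1)
  set u := (((x - y) (idx1 j) : ℝ) : ℂ)
  set v := (((x - y) (idx2 j) : ℝ) : ℂ)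
  linear_combination (v * B) * hI

lemma hom_ftc {n : ℕ} (y : EE n) {g : EE n → ℂ} (hg : ContDiff ℝ 1 g) (x : EE n) :
    g x = 2 * hom y 1 g x + (∑ j, zt y j x * hom y 2 (WW (-I) j g) x +
      ∑ j, conj (zt y j x) * hom y 2 (WW I j g) x) := by
  have hcf : Continuous (fderiv ℝ g) := hg.continuous_fderiv (by norm_num)
  have hl : Continuous fun t : ℝ => y + t • (x - y) := by fun_prop
  have hd : ∀ t : ℝ, HasDerivAt (fun t : ℝ => ((t : ℂ) ^ 2) * g (y + t • (x - y)))
      (2 * ((t : ℂ) ^ 1 * g (y + t • (x - y))) +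
        (t : ℂ) ^ 2 * fderiv ℝ g (y + t • (x - y)) (x - y)) t := by
    intro t
    have h1 : HasDerivAt (fun t : ℝ => (t : ℂ) ^ 2) (2 * (t : ℂ)) t := by
      have := ((hasDerivAt_id t).ofReal_comp).fun_pow 2
      simpa using this
    have h2 : HasDerivAt (fun t : ℝ => y + t • (x - y)) (x - y) t := by
      have := ((hasDerivAt_id t).smul_const (x - y)).const_add y
      simpa using this
    have h3 := (hg.differentiable (by norm_num) (y + t • (x - y))).hasFDerivAt.comp_hasDerivAt t h2
    have := h1.mul h3
    refine this.congr_deriv ?_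
    simp only [Function.comp]
    ring
  have hW : ∀ s j, Continuous fun t : ℝ => (t : ℂ) ^ 2 * WW s j g (y + t • (x - y)) := fun s j =>
    (by fun_prop : Continuous fun t : ℝ => (t : ℂ) ^ 2).mul ((WW_cont s j hg).comp hl)
  have hG : Continuous fun t : ℝ => (t : ℂ) ^ 1 * g (y + t • (x - y)) :=
    (by fun_prop : Continuous fun t : ℝ => (t : ℂ) ^ 1).mul (hg.continuous.comp hl)
  have hF : Continuous fun t : ℝ => (t : ℂ) ^ 2 * fderiv ℝ g (y + t • (x - y)) (x - y) :=
    (by fun_prop : Continuous fun t : ℝ => (t : ℂ) ^ 2).mul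
      ((hcf.comp hl).clm_apply continuous_const)
  have hG2 : Continuous fun t : ℝ => 2 * ((t : ℂ) ^ 1 * g (y + t • (x - y))) :=
    continuous_const.mul hG
  have key := intervalIntegral.integral_eq_sub_of_hasDerivAt (a := 0) (b := 1) (fun t _ => hd t)
    ((hG2.add hF).intervalIntegrable _ _)
  have e0 : ((1 : ℝ) : ℂ) ^ 2 * g (y + (1 : ℝ) • (x - y)) -
      ((0 : ℝ) : ℂ) ^ 2 * g (y + (0 : ℝ) • (x - y)) = g x := by simp
  rw [e0] at key
  rw [← key, intervalIntegral.integral_add (hG2.intervalIntegrable _ _)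
    (hF.intervalIntegrable _ _), intervalIntegral.integral_const_mul]
  congr 1
  simp only [hom, ← intervalIntegral.integral_const_mul]
  rw [← intervalIntegral.integral_finsetSum, ← intervalIntegral.integral_finsetSum,
    ← intervalIntegral.integral_add]
  · refine intervalIntegral.integral_congr fun t _ => ?_
    simp only [zt_lin, mul_add, Finset.mul_sum]
    congr 1 <;>
    · refine Finset.sum_congr rfl fun j _ => ?_
      ring
  · exact (continuous_finsetSum _ fun j _ =>
      continuous_const.mul (hW _ j)).intervalIntegrable _ _
  · exact (continuous_finsetSum _ fun j _ =>
      continuous_const.mul (hW _ j)).intervalIntegrable _ _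
  · exact fun j _ => (continuous_const.mul (hW _ j)).intervalIntegrable _ _
  · exact fun j _ => (continuous_const.mul (hW _ j)).intervalIntegrable _ _

open Complex MeasureTheory
open scoped ContDiff ComplexConjugate ENNReal

/-- first homotopy component -/
noncomputable def aa {n : ℕ} (y : EE n) (f : Fin n → Fin n → EE n → ℂ) (j : Fin n) (x : EE n) : ℂ :=
  ∑ i, zt y i x * hom y 1 (f i j) x

/-- second homotopy component -/
noncomputable def bb {n : ℕ} (y : EE n) (f : Fin n → Fin n → EE n → ℂ) (i : Fin n) (x : EE n) : ℂ :=
  -∑ j, conj (zt y j x) * hom y 1 (f i j) x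

lemma aa_C1 {n : ℕ} (y : EE n) {f : Fin n → Fin n → EE n → ℂ} (hf : ∀ i j, ContDiff ℝ 1 (f i j))
    (hc : ∀ i j, HasCompactSupport (f i j)) (j : Fin n) : ContDiff ℝ 1 (aa y f j) :=
  ContDiff.sum fun i _ => ((zt_smooth y i).of_le one_le_infty).mul (hom_C1 y 1 (hf i j) (hc i j))

lemma bb_C1 {n : ℕ} (y : EE n) {f : Fin n → Fin n → EE n → ℂ} (hf : ∀ i j, ContDiff ℝ 1 (f i j))
    (hc : ∀ i j, HasCompactSupport (f i j)) (i : Fin n) : ContDiff ℝ 1 (bb y f i) :=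
  (ContDiff.sum fun j _ => ((conj_smooth (zt_smooth y j)).of_le one_le_infty).mul
    (hom_C1 y 1 (hf i j) (hc i j))).neg

lemma WW_aa {n : ℕ} (y : EE n) {f : Fin n → Fin n → EE n → ℂ} (hf : ∀ i j, ContDiff ℝ 1 (f i j))
    (hc : ∀ i j, HasCompactSupport (f i j)) (s : ℂ) (k j : Fin n) (x : EE n) :
    WW s k (aa y f j) x = (1 / 2 : ℂ) * (1 + s * I) * hom y 1 (f k j) x +
      ∑ i, zt y i x * hom y 2 (WW s k (f i j)) x := by
  have dz := fun i => diff_of_smooth (zt_smooth y i) x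
  have dh : ∀ i, DifferentiableAt ℝ (hom y 1 (f i j)) x := fun i =>
    (hom_hasFDerivAt y 1 (hf i j) (hc i j) x).differentiableAt
  unfold aa
  rw [WW_sum _ _ _ (fun i => (dz i).fun_mul (dh i))]
  simp only [WW_mul s k (dz _) (dh _), WW_zt, WW_hom y 1 (hf _ _) (hc _ _)]
  rw [Finset.sum_add_distrib]
  congr 1
  simp

lemma WW_bb {n : ℕ} (y : EE n) {f : Fin n → Fin n → EE n → ℂ} (hf : ∀ i j, ContDiff ℝ 1 (f i j))
    (hc : ∀ i j, HasCompactSupport (f i j)) (s : ℂ) (k i : Fin n) (x : EE n) :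
    WW s k (bb y f i) x = -((1 / 2 : ℂ) * (1 - s * I) * hom y 1 (f i k) x +
      ∑ j, conj (zt y j x) * hom y 2 (WW s k (f i j)) x) := by
  have dz := fun i => diff_of_smooth (conj_smooth (zt_smooth y i)) x
  have dh : ∀ j, DifferentiableAt ℝ (hom y 1 (f i j)) x := fun j =>
    (hom_hasFDerivAt y 1 (hf i j) (hc i j) x).differentiableAt
  unfold bb
  rw [WW_neg, WW_sum _ _ _ (fun i => (dz i).fun_mul (dh i))]
  simp only [WW_mul s k (dz _) (dh _), WW_conj, WW_zt, WW_hom y 1 (hf _ _) (hc _ _)]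
  rw [Finset.sum_add_distrib]
  congr 2
  simp [apply_ite conj]
  left
  rw [map_ofNat]
  ring

lemma hom_congr {n : ℕ} {U : Set (EE n)} (hU : Convex ℝ U) {y x : EE n} (hy : y ∈ U) (hx : x ∈ U)
    (r : ℕ) {g h : EE n → ℂ} (hgh : ∀ z ∈ U, g z = h z) : hom y r g x = hom y r h x := by
  unfold hom
  refine intervalIntegral.integral_congr fun t ht => ?_
  rw [Set.uIcc_of_le zero_le_one] at ht
  change (t : ℂ) ^ r * g _ = (t : ℂ) ^ r * h _
  rw [hgh _ (hU.add_smul_sub_mem hy hx ht)]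

lemma aa_closed {n : ℕ} {U : Set (EE n)} (hU : Convex ℝ U) {y x : EE n} (hy : y ∈ U) (hx : x ∈ U)
    {f : Fin n → Fin n → EE n → ℂ} (hf : ∀ i j, ContDiff ℝ 1 (f i j))
    (hc : ∀ i j, HasCompactSupport (f i j))
    (h1 : ∀ z ∈ U, ∀ i j k, WW I k (f i j) z = WW I j (f i k) z) (j k : Fin n) :
    WW I j (aa y f k) x = WW I k (aa y f j) x := by
  rw [WW_aa y hf hc, WW_aa y hf hc]
  simp only [I_mul_I]
  congr 1
  · ring
  · exact Finset.sum_congr rfl fun i _ => by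
      rw [hom_congr hU hy hx 2 (fun z hz => h1 z hz i k j)]

lemma bb_closed {n : ℕ} {U : Set (EE n)} (hU : Convex ℝ U) {y x : EE n} (hy : y ∈ U) (hx : x ∈ U)
    {f : Fin n → Fin n → EE n → ℂ} (hf : ∀ i j, ContDiff ℝ 1 (f i j))
    (hc : ∀ i j, HasCompactSupport (f i j))
    (h2 : ∀ z ∈ U, ∀ i j k, WW (-I) k (f i j) z = WW (-I) i (f k j) z) (i k : Fin n) :
    WW (-I) i (bb y f k) x = WW (-I) k (bb y f i) x := by
  rw [WW_bb y hf hc, WW_bb y hf hc]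
  have hI := I_mul_I
  congr 2
  · linear_combination (1 / 2 : ℂ) * (hom y 1 (f k i) x - hom y 1 (f i k) x) * hI
  · exact Finset.sum_congr rfl fun j _ => by
      rw [hom_congr hU hy hx 2 (fun z hz => h2 z hz k j i)]

lemma aa_bb {n : ℕ} {U : Set (EE n)} (hU : Convex ℝ U) {y x : EE n} (hy : y ∈ U) (hx : x ∈ U)
    {f : Fin n → Fin n → EE n → ℂ} (hf : ∀ i j, ContDiff ℝ 1 (f i j))
    (hc : ∀ i j, HasCompactSupport (f i j))
    (h1 : ∀ z ∈ U, ∀ i j k, WW I k (f i j) z = WW I j (f i k) z)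
    (h2 : ∀ z ∈ U, ∀ i j k, WW (-I) k (f i j) z = WW (-I) i (f k j) z) (k j : Fin n) :
    WW (-I) k (aa y f j) x - WW I j (bb y f k) x = f k j x := by
  rw [WW_aa y hf hc, WW_bb y hf hc, hom_ftc y (hf k j) x]
  have hI := I_mul_I
  have e1 : ∑ i, zt y i x * hom y 2 (WW (-I) k (f i j)) x =
      ∑ i, zt y i x * hom y 2 (WW (-I) i (f k j)) x :=
    Finset.sum_congr rfl fun i _ => by rw [hom_congr hU hy hx 2 (fun z hz => h2 z hz i j k)]
  have e2 : ∑ i, conj (zt y i x) * hom y 2 (WW I j (f k i)) x =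
      ∑ i, conj (zt y i x) * hom y 2 (WW I i (f k j)) x :=
    Finset.sum_congr rfl fun i _ => by rw [hom_congr hU hy hx 2 (fun z hz => h1 z hz k i j)]
  rw [e1, e2]
  linear_combination (-hom y 1 (f k j) x) * hI

open Complex MeasureTheory
open scoped ContDiff ComplexConjugate ENNReal

lemma scale_le {n : ℕ} {U : Set (EE n)} (hU : MeasurableSet U) {h : EE n → ℝ≥0∞}
    (hh : Measurable h) {c : ℝ} (hc : 1 / 2 ≤ c) (v : EE n) (hm : ∀ x ∈ U, c • x + v ∈ U) :
    ∫⁻ x in U, h (c • x + v) ≤ 2 ^ (2 * n) * ∫⁻ x in U, h x := by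
  have hc0 : 0 < c := by linarith
  have h1 : ∫⁻ x in U, h (c • x + v) ≤ ∫⁻ x, U.indicator h (c • x + v) := by
    rw [← lintegral_indicator hU]
    refine lintegral_mono fun x => ?_
    by_cases hx : x ∈ U
    · rw [Set.indicator_of_mem hx, Set.indicator_of_mem (hm x hx)]
    · rw [Set.indicator_of_notMem hx]; exact zero_le
  refine h1.trans ?_
  have hH : Measurable (fun x => U.indicator h (x + v)) :=
    (hh.indicator hU).comp (measurable_id.add_const v)
  have h2 : ∫⁻ x, U.indicator h (c • x + v) =
      ∫⁻ x, U.indicator h (x + v) ∂(Measure.map (fun x : EE n => c • x) volume) := by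
    rw [lintegral_map hH (measurable_const_smul c)]
  rw [h2, Measure.map_addHaar_smul _ hc0.ne', lintegral_smul_measure,
    lintegral_add_right_eq_self (fun x => U.indicator h x) v, lintegral_indicator hU, smul_eq_mul]
  refine mul_le_mul_left ?_ _
  rw [finrank_euclideanSpace_fin]
  have : |(c ^ (2 * n))⁻¹| ≤ 2 ^ (2 * n) := by
    rw [abs_of_pos (by positivity), ← inv_pow]
    refine pow_le_pow_left₀ (by positivity) ?_ _
    rw [inv_le_comm₀ hc0 (by norm_num)]
    linarith
  calc ENNReal.ofReal |(c ^ (2 * n))⁻¹| ≤ ENNReal.ofReal (2 ^ (2 * n)) := ENNReal.ofReal_le_ofReal this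
    _ = 2 ^ (2 * n) := by rw [ENNReal.ofReal_pow (by norm_num)]; norm_num

lemma exists_pole {n : ℕ} {U : Set (EE n)} (ho : IsOpen U) (hne : U.Nonempty) (hcv : Convex ℝ U)
    (hb : Bornology.IsBounded U) {h : EE n → ℝ≥0∞} (hh : Measurable h) :
    ∃ y ∈ U, ∫⁻ x in U, ∫⁻ t in Set.Icc (0 : ℝ) 1, h (y + t • (x - y)) ≤
      2 ^ (2 * n) * ∫⁻ x in U, h x := by
  have h0 : volume U ≠ 0 := (ho.measure_pos volume hne).ne'
  have h1 : volume U ≠ ⊤ := hb.measure_lt_top.ne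
  have hm3 : Measurable fun p : (EE n × EE n) × ℝ => h (p.1.1 + p.2 • (p.1.2 - p.1.1)) :=
    hh.comp (by fun_prop : Continuous fun p : (EE n × EE n) × ℝ =>
      p.1.1 + p.2 • (p.1.2 - p.1.1)).measurable
  have hm2 : Measurable fun p : EE n × EE n =>
      ∫⁻ t in Set.Icc (0 : ℝ) 1, h (p.1 + t • (p.2 - p.1)) := hm3.lintegral_prod_right
  have hm1 : Measurable fun y : EE n =>
      ∫⁻ x in U, ∫⁻ t in Set.Icc (0 : ℝ) 1, h (y + t • (x - y)) := hm2.lintegral_prod_right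
  obtain ⟨y, hy, hle⟩ := exists_le_setLAverage h0 h1 hm1.aemeasurable
  refine ⟨y, hy, hle.trans ?_⟩
  rw [setLAverage_eq, ENNReal.div_le_iff h0 h1]
  set J := ∫⁻ x in U, h x with hJ
  have hsw1 : ∀ y, ∫⁻ x in U, ∫⁻ t in Set.Icc (0 : ℝ) 1, h (y + t • (x - y)) =
      ∫⁻ t in Set.Icc (0 : ℝ) 1, ∫⁻ x in U, h (y + t • (x - y)) := by
    intro y
    refine lintegral_lintegral_swap (Measurable.aemeasurable ?_)
    exact hh.comp (by fun_prop : Continuous fun p : EE n × ℝ => y + p.2 • (p.1 - y)).measurable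
  simp only [hsw1]
  have hm4 : Measurable fun p : (EE n × ℝ) × EE n => h (p.1.1 + p.1.2 • (p.2 - p.1.1)) :=
    hh.comp (by fun_prop : Continuous fun p : (EE n × ℝ) × EE n =>
      p.1.1 + p.1.2 • (p.2 - p.1.1)).measurable
  have hsw2 : ∫⁻ y in U, ∫⁻ t in Set.Icc (0 : ℝ) 1, ∫⁻ x in U, h (y + t • (x - y)) =
      ∫⁻ t in Set.Icc (0 : ℝ) 1, ∫⁻ y in U, ∫⁻ x in U, h (y + t • (x - y)) := by
    refine lintegral_lintegral_swap (Measurable.aemeasurable ?_)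
    exact hm4.lintegral_prod_right
  rw [hsw2]
  have hT : ∀ t ∈ Set.Icc (0 : ℝ) 1, ∫⁻ y in U, ∫⁻ x in U, h (y + t • (x - y)) ≤
      2 ^ (2 * n) * J * volume U := by
    intro t ht
    rcases le_total (1 / 2) t with h2 | h2
    · calc _ ≤ ∫⁻ y in U, 2 ^ (2 * n) * J := by
            refine setLIntegral_mono measurable_const fun y hy => ?_
            have := scale_le ho.measurableSet hh h2 (y - t • y) (fun x hx => by
              have := hcv.add_smul_sub_mem hy hx ht
              convert this using 1
              module)
            refine le_trans (le_of_eq ?_) this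
            refine lintegral_congr fun x => ?_
            congr 1
            module
        _ = _ := setLIntegral_const _ _
    · have hsw3 : ∫⁻ y in U, ∫⁻ x in U, h (y + t • (x - y)) =
          ∫⁻ x in U, ∫⁻ y in U, h (y + t • (x - y)) := by
        refine lintegral_lintegral_swap (Measurable.aemeasurable ?_)
        exact hh.comp (by fun_prop : Continuous fun p : EE n × EE n =>
          p.1 + t • (p.2 - p.1)).measurable
      rw [hsw3]
      calc _ ≤ ∫⁻ y in U, 2 ^ (2 * n) * J := by
            refine setLIntegral_mono measurable_const fun x hx => ?_
            have := scale_le ho.measurableSet hh (c := 1 - t) (by linarith) (t • x) (fun y hy => by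
              have := hcv.add_smul_sub_mem hy hx ht
              convert this using 1
              module)
            refine le_trans (le_of_eq ?_) this
            refine lintegral_congr fun y => ?_
            congr 1
            module
        _ = _ := setLIntegral_const _ _
  calc _ ≤ ∫⁻ t in Set.Icc (0 : ℝ) 1, 2 ^ (2 * n) * J * volume U :=
        setLIntegral_mono measurable_const hT
    _ = _ := by rw [setLIntegral_const]; simp

open Complex MeasureTheory
open scoped ContDiff ComplexConjugate ENNReal

lemma sq_int01 {φ : ℝ → ℝ} (h : Continuous φ) :
    (∫ t in (0:ℝ)..1, φ t) ^ 2 ≤ ∫ t in (0:ℝ)..1, φ t ^ 2 := by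
  set m := ∫ t in (0:ℝ)..1, φ t with hm
  have h1 : 0 ≤ ∫ t in (0:ℝ)..1, (φ t - m) ^ 2 :=
    intervalIntegral.integral_nonneg (by norm_num) fun t _ => sq_nonneg _
  have h2 : ∫ t in (0:ℝ)..1, (φ t - m) ^ 2 =
      (∫ t in (0:ℝ)..1, φ t ^ 2) - 2 * m * (∫ t in (0:ℝ)..1, φ t) + m ^ 2 := by
    have : ∀ t, (φ t - m) ^ 2 = φ t ^ 2 - 2 * m * φ t + m ^ 2 := fun t => by ring
    simp only [this]
    rw [intervalIntegral.integral_add, intervalIntegral.integral_sub,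
      intervalIntegral.integral_const_mul]
    · simp
    all_goals exact Continuous.intervalIntegrable (by fun_prop) _ _
  rw [h2, ← hm] at h1
  nlinarith

lemma hom_sq_le {n : ℕ} (y : EE n) {g : EE n → ℂ} (hg : Continuous g) (x : EE n) :
    ‖hom y 1 g x‖ ^ 2 ≤ ∫ t in (0:ℝ)..1, ‖g (y + t • (x - y))‖ ^ 2 := by
  have hc : Continuous fun t : ℝ => ‖g (y + t • (x - y))‖ := by fun_prop
  refine le_trans ?_ (sq_int01 hc)
  refine pow_le_pow_left₀ (norm_nonneg _) ?_ 2
  unfold hom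
  refine (intervalIntegral.norm_integral_le_integral_norm (by norm_num)).trans ?_
  refine intervalIntegral.integral_mono_on (by norm_num) (Continuous.intervalIntegrable (by fun_prop) _ _)
    (hc.intervalIntegrable _ _) fun t ht => ?_
  rw [norm_mul, pow_one, Complex.norm_real, Real.norm_of_nonneg ht.1]
  exact mul_le_of_le_one_left (norm_nonneg _) ht.2

lemma cs_sum {ι : Type*} (s : Finset ι) (z w : ι → ℂ) :
    ‖∑ i ∈ s, z i * w i‖ ^ 2 ≤ (∑ i ∈ s, ‖z i‖ ^ 2) * ∑ i ∈ s, ‖w i‖ ^ 2 := by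
  refine le_trans (pow_le_pow_left₀ (norm_nonneg _) (norm_sum_le _ _) 2) ?_
  simp only [norm_mul]
  exact Finset.sum_mul_sq_le_sq_mul_sq _ _ _

lemma pole_est {n : ℕ} {U : Set (EE n)} (ho : IsOpen U) (hne : U.Nonempty) (hcv : Convex ℝ U)
    (hb : Bornology.IsBounded U) {D : ℝ} (hD : ∀ x ∈ U, ∀ y ∈ U, ‖x - y‖ ≤ D)
    {f : Fin n → Fin n → EE n → ℂ} (hf : ∀ i j, ContDiff ℝ 1 (f i j))
    (hfc : ∀ i j, HasCompactSupport (f i j)) :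
    ∃ y ∈ U,
      (∀ j, IntegrableOn (fun x => ‖aa y f j x‖ ^ 2) U) ∧
      (∀ j, IntegrableOn (fun x => ‖bb y f j x‖ ^ 2) U) ∧
      (∑ j, ∫ x in U, ‖aa y f j x‖ ^ 2) ≤
        D ^ 2 * (2 ^ (2 * n) * ∫ x in U, ∑ i, ∑ j, ‖f i j x‖ ^ 2) ∧
      (∑ j, ∫ x in U, ‖bb y f j x‖ ^ 2) ≤
        D ^ 2 * (2 ^ (2 * n) * ∫ x in U, ∑ i, ∑ j, ‖f i j x‖ ^ 2) := by
  set F : EE n → ℝ := fun x => ∑ i, ∑ j, ‖f i j x‖ ^ 2 with hF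
  have hfcont : ∀ i j, Continuous (f i j) := fun i j => (hf i j).continuous
  have hFc : Continuous F := by
    refine continuous_finset_sum _ fun i _ => continuous_finset_sum _ fun j _ => ?_
    exact ((hfcont i j).norm).pow 2
  have hF0 : ∀ x, 0 ≤ F x := fun x => Finset.sum_nonneg fun i _ => Finset.sum_nonneg fun j _ => sq_nonneg _
  have hIntg : ∀ {g : EE n → ℝ}, Continuous g → IntegrableOn g U := fun {g} hg =>
    ((hg.continuousOn (s := closure U)).integrableOn_compact hb.isCompact_closure).mono_set subset_closure
  obtain ⟨y, hy, hle⟩ := exists_pole ho hne hcv hb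
    (h := fun x => ENNReal.ofReal (F x)) hFc.measurable.ennreal_ofReal
  set K : EE n → ℝ := fun x => ∫ t in (0:ℝ)..1, F (y + t • (x - y)) with hK
  have hKc : Continuous K := by
    refine intervalIntegral.continuous_parametric_intervalIntegral_of_continuous' (by fun_prop) _ _
  have hK0 : ∀ x, 0 ≤ K x := fun x => intervalIntegral.integral_nonneg (by norm_num) fun t _ => hF0 _
  have hKl : ∀ x, ENNReal.ofReal (K x) = ∫⁻ t in Set.Icc (0 : ℝ) 1, ENNReal.ofReal (F (y + t • (x - y))) := by
    intro x
    simp only [hK]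
    rw [intervalIntegral.integral_of_le (by norm_num), ← integral_Icc_eq_integral_Ioc,
      ofReal_integral_eq_lintegral_ofReal _ (Filter.Eventually.of_forall fun t => hF0 _)]
    exact (Continuous.continuousOn (by fun_prop)).integrableOn_compact isCompact_Icc
  have hKU : ∫ x in U, K x ≤ 2 ^ (2 * n) * ∫ x in U, F x := by
    have hr : 0 ≤ 2 ^ (2 * n) * ∫ x in U, F x :=
      mul_nonneg (by positivity) (integral_nonneg fun x => hF0 x)
    rw [← ENNReal.ofReal_le_ofReal_iff hr, ENNReal.ofReal_mul (by positivity),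
      ofReal_integral_eq_lintegral_ofReal (hIntg hKc) (Filter.Eventually.of_forall hK0),
      ofReal_integral_eq_lintegral_ofReal (hIntg hFc) (Filter.Eventually.of_forall hF0)]
    simp only [hKl]
    refine hle.trans (le_of_eq ?_)
    rw [ENNReal.ofReal_pow (by norm_num)]; norm_num
  have hhom : ∀ x, ∑ i, ∑ j, ‖hom y 1 (f i j) x‖ ^ 2 ≤ K x := by
    intro x
    have : K x = ∑ i, ∑ j, ∫ t in (0:ℝ)..1, ‖f i j (y + t • (x - y))‖ ^ 2 := by
      simp only [hK, hF]
      rw [intervalIntegral.integral_finset_sum]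
      · refine Finset.sum_congr rfl fun i _ => ?_
        rw [intervalIntegral.integral_finset_sum]
        intro j _
        have := hfcont i j
        exact Continuous.intervalIntegrable (by fun_prop) _ _
      · intro i _
        refine Continuous.intervalIntegrable (continuous_finset_sum _ fun j _ => ?_) _ _
        have := hfcont i j
        fun_prop
    rw [this]
    exact Finset.sum_le_sum fun i _ => Finset.sum_le_sum fun j _ => hom_sq_le y (hfcont i j) x
  have hac : ∀ j, IntegrableOn (fun x => ‖aa y f j x‖ ^ 2) U := fun j =>
    hIntg (((aa_C1 y hf hfc j).continuous.norm).pow 2)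
  have hbc : ∀ j, IntegrableOn (fun x => ‖bb y f j x‖ ^ 2) U := fun j =>
    hIntg (((bb_C1 y hf hfc j).continuous.norm).pow 2)
  have hDx : ∀ x ∈ U, ‖x - y‖ ^ 2 ≤ D ^ 2 := fun x hx =>
    pow_le_pow_left₀ (norm_nonneg _) (hD x hx y hy) 2
  have fin : ∀ g : Fin n → EE n → ℂ, (∀ j, IntegrableOn (fun x => ‖g j x‖ ^ 2) U) →
      (∀ x, ∑ j, ‖g j x‖ ^ 2 ≤ ‖x - y‖ ^ 2 * ∑ i, ∑ j, ‖hom y 1 (f i j) x‖ ^ 2) →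
      (∑ j, ∫ x in U, ‖g j x‖ ^ 2) ≤ D ^ 2 * (2 ^ (2 * n) * ∫ x in U, F x) := by
    intro g hg hgx
    rw [← integral_finset_sum _ (fun j _ => hg j)]
    refine le_trans ?_ (mul_le_mul_of_nonneg_left hKU (sq_nonneg D))
    rw [← integral_const_mul]
    refine setIntegral_mono_on (integrable_finset_sum _ fun j _ => hg j) ((hIntg hKc).const_mul _)
      ho.measurableSet fun x hx => ?_
    exact (hgx x).trans (mul_le_mul (hDx x hx) (hhom x)
      (Finset.sum_nonneg fun i _ => Finset.sum_nonneg fun j _ => sq_nonneg _) (sq_nonneg D))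
  refine ⟨y, hy, hac, hbc, fin _ hac fun x => ?_, fin _ hbc fun x => ?_⟩
  · rw [Finset.sum_comm (f := fun i j => ‖hom y 1 (f i j) x‖ ^ 2), Finset.mul_sum]
    refine Finset.sum_le_sum fun j _ => ?_
    rw [← zt_sq]
    exact cs_sum _ _ _
  · rw [Finset.mul_sum]
    refine Finset.sum_le_sum fun i _ => ?_
    rw [← zt_sq]
    unfold bb
    rw [norm_neg]
    refine (cs_sum _ _ _).trans (le_of_eq ?_)
    simp only [RCLike.norm_conj]

open Complex MeasureTheory
open scoped ContDiff ComplexConjugate ENNReal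

lemma tsupport_sum_sub {n : ℕ} {ι : Type*} (t : Finset ι) {U : Set (EE n)} {g : ι → EE n → ℂ}
    (h : ∀ i, tsupport (g i) ⊆ U) :
    tsupport (fun x => ∑ i ∈ t, g i x) ⊆ U := by
  have hs : tsupport (fun x => ∑ i ∈ t, g i x) ⊆ ⋃ i ∈ t, tsupport (g i) := by
    refine closure_minimal ?_ ?_
    · intro x hx
      obtain ⟨i, hi, hne⟩ := Finset.exists_ne_zero_of_sum_ne_zero hx
      exact Set.mem_biUnion hi (subset_tsupport _ hne)
    · exact isClosed_biUnion_finset fun i _ => isClosed_tsupport _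
  exact hs.trans (Set.iUnion₂_subset fun i _ => h i)

lemma tsupport_conj_sub {n : ℕ} {U : Set (EE n)} {g : EE n → ℂ}
    (h : tsupport g ⊆ U) : tsupport (fun x => conj (g x)) ⊆ U := by
  refine (closure_mono ?_).trans h
  intro x hx hx0
  exact hx (by simp [hx0])

lemma smooth_est {n : ℕ} {U : Set (EE n)} (ho : IsOpen U) (hne : U.Nonempty) (hcv : Convex ℝ U)
    (hb : Bornology.IsBounded U) {D : ℝ} (hD : ∀ x ∈ U, ∀ y ∈ U, ‖x - y‖ ≤ D)
    {f : Fin n → Fin n → EE n → ℂ} (hf : ∀ i j, ContDiff ℝ 1 (f i j))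
    (hfc : ∀ i j, HasCompactSupport (f i j))
    (h1 : ∀ z ∈ U, ∀ i j k, WW I k (f i j) z = WW I j (f i k) z)
    (h2 : ∀ z ∈ U, ∀ i j k, WW (-I) k (f i j) z = WW (-I) i (f k j) z)
    {χ : Fin n → Fin n → EE n → ℂ} (hχ : ∀ i j, ContDiff ℝ ∞ (χ i j))
    (hχc : ∀ i j, HasCompactSupport (χ i j)) (hχU : ∀ i j, tsupport (χ i j) ⊆ U) :
    ‖∑ i, ∑ j, ∫ x, f i j x * χ i j x‖ ≤
      2 * (√(D ^ 2 * (2 ^ (2 * n) * ∫ x in U, ∑ i, ∑ j, ‖f i j x‖ ^ 2)) *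
        √(Real.exp (D ^ 2) * ∫ x, ‖∑ i, ∑ j, WW (-I) i (WW I j (χ i j)) x‖ ^ 2)) := by
  obtain ⟨y, hy, hai, hbi, hae, hbe⟩ := pole_est ho hne hcv hb hD hf hfc
  have aC := aa_C1 y hf hfc
  have bC := bb_C1 y hf hfc
  set T : EE n → ℂ := fun x => ∑ i, ∑ j, WW (-I) i (WW I j (χ i j)) x with hT
  have hχ1 : ∀ i j, ContDiff ℝ 1 (χ i j) := fun i j => (hχ i j).of_le one_le_infty
  have sm : ∀ s k i j, ContDiff ℝ ∞ (WW s k (χ i j)) := fun s k i j => WW_smooth s k (hχ i j)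
  have cs : ∀ s k i j, HasCompactSupport (WW s k (χ i j)) := fun s k i j => WW_hcs s k (hχc i j)
  have ts : ∀ s k i j, tsupport (WW s k (χ i j)) ⊆ U := fun s k i j =>
    (WW_tsupport s k _).trans (hχU i j)
  set cA : Fin n → EE n → ℂ := fun j x => ∑ i, WW (-I) i (χ i j) x with hcA
  set cB : Fin n → EE n → ℂ := fun i x => ∑ j, WW I j (χ i j) x with hcB
  have eA := dbar_est ho hcv (x0 := y) (fun x hx => hD x hx y hy) aC
    (fun x hx j k => aa_closed hcv hy hx hf hfc h1 j k) hai
    (χ := cA) (fun j => ContDiff.sum fun i _ => sm _ _ _ _)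
    (fun j => hcs_sum _ fun i => cs _ _ _ _)
    (fun j => tsupport_sum_sub _ fun i => ts _ _ _ _)
  have bsm : ∀ i, ContDiff ℝ ∞ (cB i) := fun i => ContDiff.sum fun j _ => sm _ _ _ _
  have bcs : ∀ i, HasCompactSupport (cB i) := fun i => hcs_sum _ fun j => cs _ _ _ _
  have bts : ∀ i, tsupport (cB i) ⊆ U := fun i =>
    tsupport_sum_sub _ fun j => ts _ _ _ _
  have eB := dbar_est ho hcv (x0 := y) (fun x hx => hD x hx y hy)
    (a := fun i x => conj (bb y f i x)) (fun i => Complex.conjCLE.contDiff.comp (bC i))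
    (fun x hx j k => by
      rw [WW_conj, WW_conj, conj_I, bb_closed hcv hy hx hf hfc h2 j k])
    (fun i => by simpa only [RCLike.norm_conj] using hbi i)
    (χ := fun i x => conj (cB i x)) (fun i => conj_smooth (bsm i))
    (fun i => conj_hcs (bcs i)) (fun i => tsupport_conj_sub (bts i))
  have TA : ∀ x, ∑ j, WW I j (cA j) x = T x := by
    intro x
    simp only [hcA, hT]
    rw [Finset.sum_comm]
    refine Finset.sum_congr rfl fun j _ => ?_
    rw [WW_sum _ _ _ (fun i => diff_of_smooth (sm _ _ _ _) x)]
    refine Finset.sum_congr rfl fun i _ => ?_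
    exact WW_comm _ _ _ _ ((hχ i j).of_le two_le_infty) x
  have TB : ∀ x, ∑ i, WW I i (fun x => conj (cB i x)) x = conj (T x) := by
    intro x
    simp only [hT, map_sum]
    refine Finset.sum_congr rfl fun i _ => ?_
    rw [WW_conj, conj_I, ← map_sum]
    congr 1
    exact WW_sum _ _ _ (fun j => diff_of_smooth (sm _ _ _ _) x)
  simp only [TA] at eA
  simp only [TB, RCLike.norm_conj, ← map_mul] at eB
  have eB2 : ‖∑ i, ∫ x, bb y f i x * cB i x‖ = ‖∑ i, ∫ x, conj (bb y f i x * cB i x)‖ := by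
    rw [← RCLike.norm_conj, map_sum]
    congr 1
    refine Finset.sum_congr rfl fun i _ => ?_
    rw [integral_conj]
  rw [← eB2] at eB
  have key : ∑ i, ∑ j, ∫ x, f i j x * χ i j x =
      -(∑ j, ∫ x, aa y f j x * cA j x) + ∑ i, ∫ x, bb y f i x * cB i x := by
    have k1 : ∀ i j, ∫ x, f i j x * χ i j x =
        -(∫ x, aa y f j x * WW (-I) i (χ i j) x) + ∫ x, bb y f i x * WW I j (χ i j) x := by
      intro i j
      rw [WW_ibp _ _ (aC j) (hχ1 i j) (hχc i j), WW_ibp _ _ (bC i) (hχ1 i j) (hχc i j), neg_neg,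
        ← sub_eq_add_neg, ← integral_sub]
      · refine integral_congr_ae (Filter.Eventually.of_forall fun x => ?_)
        by_cases hx : x ∈ U
        · simp only
          rw [← aa_bb hcv hy hx hf hfc h1 h2 i j, sub_mul]
        · have : χ i j x = 0 := image_eq_zero_of_notMem_tsupport fun h => hx (hχU i j h)
          simp [this]
      · exact ic_mul (WW_cont _ _ (aC j)) (hχ i j).continuous (hχc i j)
      · exact ic_mul (WW_cont _ _ (bC i)) (hχ i j).continuous (hχc i j)
    simp only [k1, Finset.sum_add_distrib, Finset.sum_neg_distrib]
    congr 1
    · rw [Finset.sum_comm]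
      congr 1
      refine Finset.sum_congr rfl fun j _ => ?_
      simp only [hcA, Finset.mul_sum]
      rw [integral_finsetSum]
      intro i _
      exact ic_mul (aC j).continuous (sm _ _ _ _).continuous (cs _ _ _ _)
    · refine Finset.sum_congr rfl fun i _ => ?_
      simp only [hcB, Finset.mul_sum]
      rw [integral_finsetSum]
      intro j _
      exact ic_mul (bC i).continuous (sm _ _ _ _).continuous (cs _ _ _ _)
  rw [key]
  refine (norm_add_le _ _).trans ?_
  rw [norm_neg, two_mul (_ * _ : ℝ)]
  refine add_le_add (eA.trans ?_) (eB.trans ?_)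
  · exact mul_le_mul_of_nonneg_right (Real.sqrt_le_sqrt hae) (Real.sqrt_nonneg _)
  · exact mul_le_mul_of_nonneg_right (Real.sqrt_le_sqrt hbe) (Real.sqrt_nonneg _)

open Complex MeasureTheory
open scoped ContDiff ComplexConjugate ENNReal

lemma L2T.mul_int {n : ℕ} {u : ℕ → EE n → ℂ} {v φ : EE n → ℂ} (h : L2T u v) (hφ : Continuous φ)
    (hc : HasCompactSupport φ) :
    Filter.Tendsto (fun k => ∫ x, u k x * φ x) Filter.atTop (nhds (∫ x, v x * φ x)) := by
  have h1 := (Lp.tendsto_Lp_iff_tendsto_eLpNorm'' u h.1 v h.2.1).2 h.2.2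
  have hp : MemLp (fun x => conj (φ x)) 2 (volume : Measure (EE n)) :=
    cs_memLp (Complex.continuous_conj.comp hφ) (conj_hcs hc)
  have e : ∀ {w : EE n → ℂ} (hw : MemLp w 2), inner ℂ (hp.toLp _) (hw.toLp w) = ∫ x, w x * φ x := by
    intro w hw
    rw [L2.inner_def]
    refine integral_congr_ae ?_
    filter_upwards [hp.coeFn_toLp, hw.coeFn_toLp] with x h1 h2
    rw [h1, h2]
    simp
  have h2 := (tendsto_const_nhds (x := hp.toLp _)).inner (𝕜 := ℂ) h1
  simpa only [e] using h2

lemma main_est {n : ℕ} {Ω : Set (EE n)} (ho : IsOpen Ω) (hne : Ω.Nonempty) (hcv : Convex ℝ Ω)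
    (hb : Bornology.IsBounded Ω) {f : Fin n → Fin n → EE n → ℂ}
    (hfm : ∀ i j, MemLp (f i j) 2 (volume.restrict Ω))
    (h1 : ∀ (i j k : Fin n) (χ : EE n → ℂ), IsTestFun Ω χ →
            (∫ x in Ω, f i j x * wzbar k χ x) = ∫ x in Ω, f i k x * wzbar j χ x)
    (h2 : ∀ (i j k : Fin n) (χ : EE n → ℂ), IsTestFun Ω χ →
            (∫ x in Ω, f i j x * wz k χ x) = ∫ x in Ω, f k j x * wz i χ x)
    {χ : Fin n → Fin n → EE n → ℂ} (hχ : ∀ i j, IsTestFun Ω (χ i j)) :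
    ‖∑ i, ∑ j, ∫ x in Ω, f i j x * χ i j x‖ ≤
      2 * (√(Metric.diam Ω ^ 2 * (2 ^ (2 * n) * ∑ i, ∑ j, ∫ x in Ω, ‖f i j x‖ ^ 2)) *
        √(Real.exp (Metric.diam Ω ^ 2) *
          ∫ x, ‖∑ i, ∑ j, WW (-I) i (WW I j (χ i j)) x‖ ^ 2)) := by
  set D := Metric.diam Ω with hDdef
  obtain ⟨p, hp⟩ := hne
  set K : Set (EE n) := {p} ∪ ⋃ i, ⋃ j, tsupport (χ i j) with hK
  have hKc : IsCompact K := isCompact_singleton.union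
    (isCompact_iUnion fun i => isCompact_iUnion fun j => (hχ i j).2.1)
  have hKO : K ⊆ Ω := Set.union_subset (by simpa using hp)
    (Set.iUnion_subset fun i => Set.iUnion_subset fun j => (hχ i j).2.2)
  obtain ⟨C, hCc, hCcv, hKC, hCO⟩ := exists_polytope hKc ho hcv hKO
  obtain ⟨δ, hδ, hCδ⟩ := hCc.exists_cthickening_subset_open ho hCO
  set U := Metric.thickening (δ / 2) C with hU
  have hKU : K ⊆ U := hKC.trans (Metric.self_subset_thickening (by positivity) _)
  have hball : ∀ x ∈ U, Metric.closedBall x (δ / 2) ⊆ Ω := by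
    intro x hx
    refine (Metric.closedBall_subset_cthickening hx _).trans ?_
    refine (Metric.cthickening_thickening_subset (by positivity) _ _).trans ?_
    rwa [add_halves]
  have hUO : U ⊆ Ω := fun x hx => hball x hx (Metric.mem_closedBall_self (by positivity))
  have hUD : ∀ x ∈ U, ∀ y ∈ U, ‖x - y‖ ≤ D := fun x hx y hy => by
    rw [← dist_eq_norm]; exact Metric.dist_le_diam_of_mem hb (hUO hx) (hUO hy)
  set g : Fin n → Fin n → EE n → ℂ := fun i j => Ω.indicator (f i j) with hg
  have hgm : ∀ i j, MemLp (g i j) 2 := fun i j =>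
    (memLp_indicator_iff_restrict ho.measurableSet).2 (hfm i j)
  have hgl : ∀ i j, LocallyIntegrable (g i j) := fun i j =>
    (hgm i j).locallyIntegrable (by norm_num)
  have hgc : ∀ i j, HasCompactSupport (g i j) := fun i j =>
    HasCompactSupport.of_support_subset_isCompact hb.isCompact_closure
      (Set.support_indicator_subset.trans subset_closure)
  have hgi : ∀ i j (φ : EE n → ℂ), ∫ x, g i j x * φ x = ∫ x in Ω, f i j x * φ x := by
    intro i j φ
    rw [← integral_indicator ho.measurableSet]
    refine integral_congr_ae (Filter.Eventually.of_forall fun x => ?_)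
    by_cases hx : x ∈ Ω <;> simp [hg, hx]
  have hgs : ∀ i j, ∫ x, ‖g i j x‖ ^ 2 = ∫ x in Ω, ‖f i j x‖ ^ 2 := by
    intro i j
    rw [← integral_indicator ho.measurableSet]
    refine integral_congr_ae (Filter.Eventually.of_forall fun x => ?_)
    by_cases hx : x ∈ Ω <;> simp [hg, hx]
  set S := √(Real.exp (D ^ 2) * ∫ x, ‖∑ i, ∑ j, WW (-I) i (WW I j (χ i j)) x‖ ^ 2) with hS
  have lim1 : Filter.Tendsto (fun k => ‖∑ i, ∑ j, ∫ x, mol k (g i j) x * χ i j x‖) Filter.atTop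
      (nhds ‖∑ i, ∑ j, ∫ x in Ω, f i j x * χ i j x‖) := by
    simp only [← hgi]
    exact (tendsto_finset_sum _ fun i _ => tendsto_finset_sum _ fun j _ =>
      (L2T_mol (hgm i j)).mul_int (hχ i j).1.continuous (hχ i j).2.1).norm
  have lim2 : Filter.Tendsto (fun k => 2 * (√(D ^ 2 * (2 ^ (2 * n) *
        ∑ i, ∑ j, ∫ x, ‖mol k (g i j) x‖ ^ 2)) * S)) Filter.atTop
      (nhds (2 * (√(D ^ 2 * (2 ^ (2 * n) * ∑ i, ∑ j, ∫ x in Ω, ‖f i j x‖ ^ 2)) * S))) := by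
    simp only [← hgs]
    have := tendsto_finset_sum (Finset.univ : Finset (Fin n)) fun i _ =>
      tendsto_finset_sum (Finset.univ : Finset (Fin n)) fun j _ => (L2T_mol (hgm i j)).norm_sq
    exact (((((this.const_mul _).const_mul _).sqrt).mul_const _).const_mul _)
  refine le_of_tendsto_of_tendsto lim1 lim2 ?_
  have hk : ∀ᶠ k : ℕ in Filter.atTop, 1 / ((k : ℝ) + 1) ≤ δ / 2 :=
    (tendsto_one_div_add_atTop_nhds_zero_nat).eventually_le_const (by positivity)
  filter_upwards [hk] with k hk
  have ht : ∀ z ∈ U, IsTestFun Ω (rhoX n k z) := fun z hz =>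
    ⟨rhoX_smooth n k z, rhoX_hcs n k z, (rhoX_tsupport n k z).trans
      ((Metric.closedBall_subset_closedBall hk).trans (hball z hz))⟩
  have est := smooth_est (U := U) Metric.isOpen_thickening ⟨p, hKU (by simp [hK])⟩
    (hCcv.thickening _) (hb.subset hUO) hUD (f := fun i j => mol k (g i j))
    (fun i j => (mol_smooth k (hgl i j)).of_le one_le_infty) (fun i j => mol_hcs k (hgc i j))
    (fun z hz i j l => by
      rw [WW_mol _ _ _ (hgl i j), WW_mol _ _ _ (hgl i l), hgi, hgi]
      exact congrArg Neg.neg (h1 i j l _ (ht z hz)))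
    (fun z hz i j l => by
      rw [WW_mol _ _ _ (hgl i j), WW_mol _ _ _ (hgl l j), hgi, hgi]
      have := congrArg Neg.neg (h2 i j l _ (ht z hz))
      simpa only [wz_eq] using this)
    (χ := χ) (fun i j => (hχ i j).1) (fun i j => (hχ i j).2.1)
    (fun i j => ((Set.subset_iUnion₂ (s := fun i j => tsupport (χ i j)) i j).trans
      Set.subset_union_right).trans hKU)
  refine est.trans ?_
  have hi : ∀ i j, Integrable (fun x => ‖mol k (g i j) x‖ ^ 2) := fun i j =>
    sq_int (mol_smooth k (hgl i j)).continuous (mol_hcs k (hgc i j))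
  gcongr
  calc ∫ x in U, ∑ i, ∑ j, ‖mol k (g i j) x‖ ^ 2 ≤ ∫ x, ∑ i, ∑ j, ‖mol k (g i j) x‖ ^ 2 :=
        setIntegral_le_integral (integrable_finsetSum _ fun i _ => integrable_finsetSum _ fun j _ => hi i j)
          (Filter.Eventually.of_forall fun x => Finset.sum_nonneg fun i _ => Finset.sum_nonneg fun j _ => sq_nonneg _)
    _ = _ := by
      rw [integral_finsetSum _ fun i _ => integrable_finsetSum _ fun j _ => hi i j]
      exact Finset.sum_congr rfl fun i _ => integral_finsetSum _ fun j _ => hi i j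

open Complex MeasureTheory
open scoped ContDiff ComplexConjugate ENNReal

lemma riesz_bound {X H : Type*} [AddCommGroup X] [Module ℂ X] [NormedAddCommGroup H]
    [InnerProductSpace ℂ H] [CompleteSpace H] (A : X →ₗ[ℂ] H) (l : X →ₗ[ℂ] ℂ) {C : ℝ} (hC : 0 ≤ C)
    (h : ∀ x, ‖l x‖ ≤ C * ‖A x‖) : ∃ u : H, ‖u‖ ≤ C ∧ ∀ x, l x = inner ℂ u (A x) := by
  have hker : LinearMap.ker A ≤ LinearMap.ker l := by
    intro x hx
    rw [LinearMap.mem_ker] at hx ⊢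
    have := h x
    rw [hx, norm_zero, mul_zero] at this
    exact norm_le_zero_iff.1 this
  set L : LinearMap.range A →ₗ[ℂ] ℂ :=
    ((LinearMap.ker A).liftQ l hker).comp A.quotKerEquivRange.symm.toLinearMap with hL
  have hLA : ∀ x, L ⟨A x, LinearMap.mem_range_self A x⟩ = l x := by
    intro x
    have e : A.quotKerEquivRange.symm ⟨A x, LinearMap.mem_range_self A x⟩ =
        (LinearMap.ker A).mkQ x := by
      rw [LinearEquiv.symm_apply_eq]
      rfl
    simp only [hL, LinearMap.comp_apply, LinearEquiv.coe_coe, e]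
    simp
  have hLb : ∀ y, ‖L y‖ ≤ C * ‖y‖ := by
    rintro ⟨_, x, rfl⟩
    rw [hLA]; exact h x
  obtain ⟨g, hg, hgn⟩ := exists_extension_norm_eq (LinearMap.range A) (L.mkContinuous C hLb)
  refine ⟨(InnerProductSpace.toDual ℂ H).symm g, ?_, fun x => ?_⟩
  · rw [LinearIsometryEquiv.norm_map, hgn]
    exact L.mkContinuous_norm_le hC hLb
  · rw [InnerProductSpace.toDual_symm_apply, ← hLA]
    exact (hg ⟨A x, LinearMap.mem_range_self A x⟩).symm

/-- tuples of test functions -/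
def TT (n : ℕ) (Ω : Set (EE n)) : Submodule ℂ (Fin n → Fin n → EE n → ℂ) where
  carrier := {χ | ∀ i j, IsTestFun Ω (χ i j)}
  add_mem' := by
    intro a b ha hb i j
    refine ⟨(ha i j).1.add (hb i j).1, (ha i j).2.1.add (hb i j).2.1, ?_⟩
    exact (tsupport_add _ _).trans (Set.union_subset (ha i j).2.2 (hb i j).2.2)
  zero_mem' := by
    intro i j
    refine ⟨contDiff_const, HasCompactSupport.zero, ?_⟩
    simp [tsupport]
  smul_mem' := by
    intro c a ha i j
    have hs : tsupport ((c • a) i j) ⊆ tsupport (a i j) := by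
      refine closure_mono ?_
      intro x hx hx0
      exact hx (by simp [hx0])
    refine ⟨(contDiff_const (c := c)).mul (ha i j).1, ?_, hs.trans (ha i j).2.2⟩
    exact (ha i j).2.1.mono' ((subset_tsupport _).trans hs)

/-- the trace operator `∑ ∂_i ∂̄_j χ_ij` -/
noncomputable def TO {n : ℕ} (χ : Fin n → Fin n → EE n → ℂ) (x : EE n) : ℂ :=
  ∑ i, ∑ j, WW (-I) i (WW I j (χ i j)) x

lemma WW2_add {n : ℕ} {f g : EE n → ℂ} (hf : ContDiff ℝ ∞ f) (hg : ContDiff ℝ ∞ g) (i j : Fin n)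
    (x : EE n) : WW (-I) i (WW I j (fun y => f y + g y)) x =
      WW (-I) i (WW I j f) x + WW (-I) i (WW I j g) x := by
  have e : WW I j (fun y => f y + g y) = fun y => WW I j f y + WW I j g y := by
    funext y
    exact WW_add _ _ (diff_of_smooth hf y) (diff_of_smooth hg y)
  rw [e]
  exact WW_add _ _ (diff_of_smooth (WW_smooth _ _ hf) x) (diff_of_smooth (WW_smooth _ _ hg) x)

lemma WW2_smul {n : ℕ} {f : EE n → ℂ} (hf : ContDiff ℝ ∞ f) (c : ℂ) (i j : Fin n)
    (x : EE n) : WW (-I) i (WW I j (fun y => c * f y)) x = c * WW (-I) i (WW I j f) x := by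
  have e : WW I j (fun y => c * f y) = fun y => c * WW I j f y := by
    funext y
    exact WW_const_mul _ _ c (diff_of_smooth hf y)
  rw [e]
  exact WW_const_mul _ _ c (diff_of_smooth (WW_smooth _ _ hf) x)

lemma TO_hcs {n : ℕ} {Ω : Set (EE n)} (χ : TT n Ω) : HasCompactSupport (TO χ.1) :=
  hcs_sum _ fun i => hcs_sum _ fun j => WW_hcs _ _ (WW_hcs _ _ (χ.2 i j).2.1)

lemma TO_cont {n : ℕ} {Ω : Set (EE n)} (χ : TT n Ω) : Continuous (TO χ.1) :=
  continuous_finsetSum _ fun i _ => continuous_finsetSum _ fun j _ =>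
    (WW_smooth _ _ (WW_smooth _ _ (χ.2 i j).1)).continuous

lemma TO_memLp {n : ℕ} {Ω : Set (EE n)} (χ : TT n Ω) : MemLp (TO χ.1) 2 :=
  cs_memLp (TO_cont χ) (TO_hcs χ)

/-- `TO` as a linear map into `L²` -/
noncomputable def TL (n : ℕ) (Ω : Set (EE n)) : TT n Ω →ₗ[ℂ] Lp ℂ 2 (volume : Measure (EE n)) where
  toFun χ := (TO_memLp χ).toLp _
  map_add' a b := by
    rw [← MemLp.toLp_add]
    refine MemLp.toLp_congr _ _ (Filter.Eventually.of_forall fun x => ?_)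
    simp only [TO, Pi.add_apply, ← Finset.sum_add_distrib]
    refine Finset.sum_congr rfl fun i _ => Finset.sum_congr rfl fun j _ => ?_
    exact WW2_add (a.2 i j).1 (b.2 i j).1 i j x
  map_smul' c a := by
    rw [RingHom.id_apply, ← MemLp.toLp_const_smul]
    refine MemLp.toLp_congr _ _ (Filter.Eventually.of_forall fun x => ?_)
    simp only [TO, Pi.smul_apply, smul_eq_mul, Finset.mul_sum]
    refine Finset.sum_congr rfl fun i _ => Finset.sum_congr rfl fun j _ => ?_
    exact WW2_smul (a.2 i j).1 c i j x

lemma fchi_int {n : ℕ} {Ω : Set (EE n)} {f φ : EE n → ℂ} (hf : MemLp f 2 (volume.restrict Ω))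
    (hφ : IsTestFun Ω φ) : Integrable (fun x => f x * φ x) (volume.restrict Ω) :=
  MemLp.integrable_mul hf ((cs_memLp hφ.1.continuous hφ.2.1).restrict Ω)

/-- the functional `χ ↦ ∑ ∫ f_ij χ_ij` -/
noncomputable def FL {n : ℕ} {Ω : Set (EE n)} {f : Fin n → Fin n → EE n → ℂ}
    (hf : ∀ i j, MemLp (f i j) 2 (volume.restrict Ω)) : TT n Ω →ₗ[ℂ] ℂ where
  toFun χ := ∑ i, ∑ j, ∫ x in Ω, f i j x * χ.1 i j x
  map_add' a b := by
    simp only [← Finset.sum_add_distrib]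
    refine Finset.sum_congr rfl fun i _ => Finset.sum_congr rfl fun j _ => ?_
    rw [← integral_add (fchi_int (hf i j) (a.2 i j)) (fchi_int (hf i j) (b.2 i j))]
    refine integral_congr_ae (Filter.Eventually.of_forall fun x => ?_)
    exact mul_add _ _ _
  map_smul' c a := by
    simp only [RingHom.id_apply, smul_eq_mul, Finset.mul_sum]
    refine Finset.sum_congr rfl fun i _ => Finset.sum_congr rfl fun j _ => ?_
    rw [← integral_const_mul]
    refine integral_congr_ae (Filter.Eventually.of_forall fun x => ?_)
    exact mul_left_comm _ _ _

open scoped ContDiff ComplexConjugate ENNReal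
open Complex MeasureTheory
/-- the unweighted Poincaré–Lelong equation on a strictly convex bounded
domain `Ω ⊂ ℂ^n`: for every `d`-closed `f ∈ L²_{(1,1)}(Ω)` there is `u ∈ L²(Ω)` with
`i∂∂̄u = f` distributionally and `∫_Ω |u|² ≤ c_Ω ∫_Ω |f|²`, where `c_Ω > 0` depends only
on the diameter of `Ω`. -/
theorem poincare_lelong_unweighted (n : ℕ) :
    ∃ κ : ℝ → ℝ,
      ∀ (Ω : Set (EuclideanSpace ℝ (Fin (2 * n)))), IsOpen Ω → Ω.Nonempty →
        StrictConvex ℝ Ω → Bornology.IsBounded Ω →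
        0 < κ (Metric.diam Ω) ∧
        ∀ f : Fin n → Fin n → EuclideanSpace ℝ (Fin (2 * n)) → ℂ,
          (∀ i j, AEStronglyMeasurable (f i j) (volume.restrict Ω)) →
          IntegrableOn (fun x => ∑ i, ∑ j, ‖f i j x‖ ^ 2) Ω →
          (∀ (i j k : Fin n) (χ : EuclideanSpace ℝ (Fin (2 * n)) → ℂ), IsTestFun Ω χ →
            (∫ x in Ω, f i j x * wzbar k χ x) = ∫ x in Ω, f i k x * wzbar j χ x) →
          (∀ (i j k : Fin n) (χ : EuclideanSpace ℝ (Fin (2 * n)) → ℂ), IsTestFun Ω χ →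
            (∫ x in Ω, f i j x * wz k χ x) = ∫ x in Ω, f k j x * wz i χ x) →
          ∃ u : EuclideanSpace ℝ (Fin (2 * n)) → ℂ,
            AEStronglyMeasurable u (volume.restrict Ω) ∧
            IntegrableOn (fun x => ‖u x‖ ^ 2) Ω ∧
            (∀ (i j : Fin n) (χ : EuclideanSpace ℝ (Fin (2 * n)) → ℂ), IsTestFun Ω χ →
              Complex.I * ∫ x in Ω, u x * wz i (fun y => wzbar j χ y) x
                = ∫ x in Ω, f i j x * χ x) ∧
            (∫ x in Ω, ‖u x‖ ^ 2)
              ≤ κ (Metric.diam Ω) * ∫ x in Ω, ∑ i, ∑ j, ‖f i j x‖ ^ 2 := by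
  classical
  refine ⟨fun D => 4 * (D ^ 2 + 1) * 2 ^ (2 * n) * Real.exp (D ^ 2), ?_⟩
  intro Ω ho hne hsc hb
  refine ⟨by positivity, ?_⟩
  intro f hfm hfi h1 h2
  set D := Metric.diam Ω with hD
  have hm : ∀ i j, MemLp (f i j) 2 (volume.restrict Ω) := by
    intro i j
    rw [memLp_two_iff_integrable_sq_norm (hfm i j)]
    refine Integrable.mono' hfi ((hfm i j).norm.pow 2) (Filter.Eventually.of_forall fun x => ?_)
    rw [Real.norm_of_nonneg (sq_nonneg _)]
    calc ‖f i j x‖ ^ 2 ≤ ∑ j, ‖f i j x‖ ^ 2 :=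
          Finset.single_le_sum (f := fun j => ‖f i j x‖ ^ 2) (fun _ _ => sq_nonneg _) (Finset.mem_univ j)
      _ ≤ _ := Finset.single_le_sum (f := fun i => ∑ j, ‖f i j x‖ ^ 2)
          (fun _ _ => Finset.sum_nonneg fun _ _ => sq_nonneg _) (Finset.mem_univ i)
  have hFs : ∑ i, ∑ j, ∫ x in Ω, ‖f i j x‖ ^ 2 = ∫ x in Ω, ∑ i, ∑ j, ‖f i j x‖ ^ 2 := by
    have hi : ∀ i j, Integrable (fun x => ‖f i j x‖ ^ 2) (volume.restrict Ω) := fun i j =>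
      (memLp_two_iff_integrable_sq_norm (hfm i j)).1 (hm i j)
    rw [integral_finsetSum _ fun i _ => integrable_finsetSum _ fun j _ => hi i j]
    exact Finset.sum_congr rfl fun i _ => (integral_finsetSum _ fun j _ => hi i j).symm
  set Q := ∫ x in Ω, ∑ i, ∑ j, ‖f i j x‖ ^ 2 with hQ
  have hQ0 : 0 ≤ Q := integral_nonneg fun x =>
    Finset.sum_nonneg fun _ _ => Finset.sum_nonneg fun _ _ => sq_nonneg _
  set C := 2 * (√(D ^ 2 * (2 ^ (2 * n) * Q)) * √(Real.exp (D ^ 2))) with hC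
  obtain ⟨v, hv, hrep⟩ := riesz_bound (TL n Ω) (FL hm) (C := C) (by positivity) (by
    intro χ
    have := main_est ho hne hsc.convex hb hm h1 h2 (χ := χ.1) χ.2
    rw [hFs] at this
    refine this.trans (le_of_eq ?_)
    rw [Real.sqrt_mul (Real.exp_pos _).le]
    have e : √(∫ x, ‖∑ i, ∑ j, WW (-I) i (WW I j (χ.1 i j)) x‖ ^ 2) = ‖TL n Ω χ‖ := by
      have := int_sq_eq (TO_memLp χ)
      rw [Real.sqrt_eq_iff_eq_sq (integral_nonneg fun x => sq_nonneg _) (norm_nonneg _)]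
      exact this
    rw [e, hC]
    ring)
  have hvm := Lp.memLp v
  refine ⟨fun x => -I * conj (v x), ?_, ?_, ?_, ?_⟩
  · exact ((Complex.continuous_conj.comp_aestronglyMeasurable hvm.1).const_mul (-I)).restrict
  · simp only [norm_mul, norm_neg, norm_I, one_mul, RCLike.norm_conj]
    exact ((memLp_two_iff_integrable_sq_norm hvm.1).1 hvm).integrableOn
  · intro i j χ hχ
    set X : Fin n → Fin n → EE n → ℂ := fun i' j' => if i' = i ∧ j' = j then χ else 0 with hX
    have hXm : X ∈ TT n Ω := by
      intro i' j'
      simp only [hX]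
      split_ifs
      · exact hχ
      · exact (TT n Ω).zero_mem i j
    have hr := hrep ⟨X, hXm⟩
    have hl : FL hm ⟨X, hXm⟩ = ∫ x in Ω, f i j x * χ x := by
      change ∑ i', ∑ j', ∫ x in Ω, f i' j' x * X i' j' x = _
      rw [Finset.sum_eq_single i, Finset.sum_eq_single j]
      · simp [hX]
      · intro j' _ hj
        simp [hX, hj]
      · simp
      · intro i' _ hi
        simp [hX, hi]
      · simp
    have hT : ∀ x, TO X x = wz i (fun y => wzbar j χ y) x := by
      intro x
      have hz0 : ∀ i' j', WW (-I) i' (WW I j' (0 : EE n → ℂ)) x = 0 := by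
        intro i' j'
        have := WW2_smul (n := n) (f := fun _ => 0) contDiff_const 0 i' j' x
        simp only [zero_mul] at this
        exact this
      unfold TO
      rw [Finset.sum_eq_single i, Finset.sum_eq_single j]
      · simp only [hX, and_self, if_true]
        rw [wz_eq]; rfl
      · intro j' _ hj
        simp only [hX, hj, and_false, if_false, hz0]
      · simp
      · intro i' _ hi
        simp only [hX, hi, false_and, if_false, hz0, Finset.sum_const_zero]
      · simp
    have hin : inner ℂ v (TL n Ω ⟨X, hXm⟩) = ∫ x, wz i (fun y => wzbar j χ y) x * conj (v x) := by
      rw [L2.inner_def]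
      refine integral_congr_ae ?_
      filter_upwards [(TO_memLp ⟨X, hXm⟩).coeFn_toLp] with x hx
      change inner ℂ (v x) (((TO_memLp ⟨X, hXm⟩).toLp _ : Lp ℂ 2 volume) x) = _
      rw [hx, hT]
      rfl
    have hsup : ∫ x in Ω, wz i (fun y => wzbar j χ y) x * conj (v x) =
        ∫ x, wz i (fun y => wzbar j χ y) x * conj (v x) := by
      refine setIntegral_eq_integral_of_forall_compl_eq_zero fun x hx => ?_
      have : WW (-I) i (WW I j χ) x = 0 := WW_zero_of_notMem _ _ fun h =>
        hx (hχ.2.2 (WW_tsupport _ _ _ h))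
      have h' : wz i (fun y => wzbar j χ y) x = 0 := by rw [wz_eq]; exact this
      rw [h', zero_mul]
    rw [← hl, hr, hin, ← hsup, ← integral_const_mul]
    refine integral_congr_ae (Filter.Eventually.of_forall fun x => ?_)
    simp only
    linear_combination (-conj (v x) * wz i (fun y => wzbar j χ y) x) * I_mul_I
  · simp only [norm_mul, norm_neg, norm_I, one_mul, RCLike.norm_conj]
    have i1 : ∫ x in Ω, ‖v x‖ ^ 2 ≤ ∫ x, ‖v x‖ ^ 2 :=
      setIntegral_le_integral ((memLp_two_iff_integrable_sq_norm hvm.1).1 hvm)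
        (Filter.Eventually.of_forall fun x => sq_nonneg _)
    have i2 : ∫ x, ‖v x‖ ^ 2 = ‖v‖ ^ 2 := by
      rw [int_sq_eq hvm, Lp.toLp_coeFn]
    have i3 : C ^ 2 = 4 * (D ^ 2 * (2 ^ (2 * n) * Q)) * Real.exp (D ^ 2) := by
      rw [hC, mul_pow, mul_pow, Real.sq_sqrt (by positivity), Real.sq_sqrt (Real.exp_pos _).le]
      ring
    have i4 : ‖v‖ ^ 2 ≤ C ^ 2 := pow_le_pow_left₀ (norm_nonneg _) hv 2
    have i5 : 0 ≤ 2 ^ (2 * n) * Real.exp (D ^ 2) * Q := by positivity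
    nlinarith
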